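/- Let Ω and Ω' be the interiors of compact convex sets in ℝ² (viewed inside ℝP²) which are isometric with respect to their Hilbert metrics. If Ω is not the interior of a triangle, then Ω' is not the interior of a triangle and every isometry from (Ω,d_Ω) to (Ω',d_{Ω'}) is a projective transformation, i.e. Isom(Ω,Ω') = PGL(Ω,Ω'). -/

import Mathlib

/-!
An isometry between the interiors of two plane convex bodies is analysed through its action on
chords, that is, on open segments `(α, β)` of the domain with end points on the boundary.

*Metric.* The Hilbert distance is the largest value of `log (f x * g y / (f y * g x))` over pairs of
positive affine functions on the domain (`exists_dist_eq_log`, `log_ratio_le`). The triangle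
inequality follows, and so does the fact that projective maps do not increase distances
(`contraction`, `good_dist_le`); applied to a map and to its inverse, this gives the inclusion of
`PGL(Ω, Ω')` in `Isom(Ω, Ω')`.

*Rigid chords.* The segments of a chord are unique geodesics if one end of the chord is an extreme
point of the closed domain (`rigid_of_ext`), and not all of them are if neither end is
(`not_rigid`). Hence an isometry maps every chord with an extreme end to a chord with an extreme
end (`IsoPair.exists_maps`).

*Focusing points.* Chords ending at a common boundary point stay at bounded distance towards that
point. The corresponding ends of their images are therefore equal or lie in the relative interior
of one boundary segment (`IsoPair.rel_of_pencil`), and are equal as soon as one of them is extreme.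
An extreme point `e` is called focusing (`Foc`) if the images of all chords ending at `e` end at one
common point. If `e` is not focusing, then the extreme end of each image chord is the one opposite
to the image of `e`; these opposite ends are focusing for the inverse isometry, unless the domain is
the triangle spanned by `e` and a boundary segment (`IsoPair.focusing_other_end`), and there are
infinitely many of them.

*Four focusing points.* Among four focusing extreme points, the diagonals of the quadrilateral they
span cross inside the domain. The linear map of `ℝ³` fitted to the images of the two diagonals
represents the isometry on both of them, hence everywhere, because each remaining point is the
intersection of two chords through focusing points that meet the diagonals
(`IsoPair.linear_of_four`). A domain which is not a triangle has four extreme points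
(`exists_four_ext`), and each of them is focusing (`IsoPair.focusing`): otherwise four of the
opposite ends above show that the inverse isometry is projective, and then `e` is focusing after
all. So the isometry is projective.

*The target.* If the target were a triangle, take four extreme points of the source and a point `x`
on none of the lines joining them. The four chords through `x` ending at these points are distinct,
but their images are determined by the image of `x` and one of the three corners of the target, so
two of them coincide (`IsoPair.not_triangle`).
-/
open Set
open scoped LinearAlgebra.Projectivization
open scoped Classical

noncomputable section

abbrev Euc (n : ℕ) := EuclideanSpace ℝ (Fin n)

/-- `α` and `β` are the two points where the straight line through `x` and `y`
meets the boundary of `Ω`, labeled so that `|α−x| < |α−y|` and `|β−y| < |β−x|`. -/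
def IsHilbertPair {n : ℕ} (Ω : Set (Euc n)) (x y α β : Euc n) : Prop :=
  α ∈ frontier Ω ∧ β ∈ frontier Ω ∧
    Collinear ℝ ({α, x, y} : Set (Euc n)) ∧ Collinear ℝ ({β, x, y} : Set (Euc n)) ∧
    dist α x < dist α y ∧ dist β y < dist β x

/-- The Hilbert metric of `Ω`: `d_Ω(x,y) = ln((|α−y|/|α−x|)·(|β−x|/|β−y|))` for `x ≠ y`
(where `α, β` are as in `IsHilbertPair`; for `x ≠ y` in a convex domain `Ω` such a pair
exists and is unique), and `d_Ω(x,x) = 0` (no such pair exists when `x = y`). -/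
def hilbertDist {n : ℕ} (Ω : Set (Euc n)) (x y : Euc n) : ℝ :=
  if h : ∃ p : Euc n × Euc n, IsHilbertPair Ω x y p.1 p.2 then
    Real.log ((dist h.choose.1 y / dist h.choose.1 x) * (dist h.choose.2 x / dist h.choose.2 y))
  else 0

/-- An isometry of Hilbert geometries: a surjective distance preserving map. -/
def IsHilbertIsometry {n : ℕ} (Ω Ω' : Set (Euc n)) (τ : Euc n → Euc n) : Prop :=
  Set.MapsTo τ Ω Ω' ∧ Set.SurjOn τ Ω Ω' ∧
    ∀ x ∈ Ω, ∀ y ∈ Ω, hilbertDist Ω' (τ x) (τ y) = hilbertDist Ω x y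

/-- The standard affine chart `ℝⁿ → ℝPⁿ`, `x ↦ [x : 1]`. -/
def chart {n : ℕ} (x : Euc n) : Projectivization ℝ (Fin (n + 1) → ℝ) :=
  Projectivization.mk ℝ ((Fin.snoc (fun i => x i) 1 : Fin (n + 1) → ℝ))
    (fun h => one_ne_zero (α := ℝ) (by simpa using congrFun h (Fin.last n)))

/-- The projective transformation of `ℝPⁿ` induced by an element of `GL_{n+1}(ℝ)`
(every element of `PGL_{n+1}(ℝ)` arises this way). -/
def projMap {n : ℕ} (g : (Fin (n + 1) → ℝ) ≃ₗ[ℝ] (Fin (n + 1) → ℝ)) :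
    Projectivization ℝ (Fin (n + 1) → ℝ) → Projectivization ℝ (Fin (n + 1) → ℝ) :=
  Projectivization.map (g : (Fin (n + 1) → ℝ) →ₗ[ℝ] (Fin (n + 1) → ℝ)) g.injective

/-- `τ` agrees on `Ω` with (the restriction of) a projective transformation of `ℝPⁿ`. -/
def IsProjectiveOn {n : ℕ} (Ω : Set (Euc n)) (τ : Euc n → Euc n) : Prop :=
  ∃ g : (Fin (n + 1) → ℝ) ≃ₗ[ℝ] (Fin (n + 1) → ℝ),
    ∀ x ∈ Ω, chart (τ x) = projMap g (chart x)

/-- A ray in `Ω`: the intersection with `Ω` of a Euclidean ray starting at a point of `Ω`. -/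
def IsRayIn {n : ℕ} (Ω r : Set (Euc n)) : Prop :=
  ∃ p ∈ Ω, ∃ d : Euc n, d ≠ 0 ∧ r = {x | ∃ t : ℝ, 0 ≤ t ∧ x = p + t • d} ∩ Ω

/-- A line in `Ω`: the nonempty intersection of a straight line with `Ω`. -/
def IsLineIn {n : ℕ} (Ω L : Set (Euc n)) : Prop :=
  L.Nonempty ∧ ∃ p d : Euc n, d ≠ 0 ∧ L = {x | ∃ t : ℝ, x = p + t • d} ∩ Ω

/-- `a` is an accumulation point of the set `s ⊆ Ω` on the boundary of `Ω`.
For a ray `r` in a convex domain `Ω` there is exactly one such point, denoted `a(r)`. -/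
def IsBdryLimit {n : ℕ} (Ω s : Set (Euc n)) (a : Euc n) : Prop :=
  a ∈ frontier Ω ∧ a ∈ closure s

/-- `e` is a focusing point of the isometry `τ : Ω → Ω'`: an extreme point of the closure
of `Ω` such that for any two rays `r₁, r₂` in `Ω` with `a(r₁) = a(r₂) = e` one has
`a(τ(r₁)) = a(τ(r₂))`. -/
def IsFocusingPoint {n : ℕ} (Ω Ω' : Set (Euc n)) (τ : Euc n → Euc n) (e : Euc n) : Prop :=
  e ∈ Set.extremePoints ℝ (closure Ω) ∧
    ∀ r₁ r₂ : Set (Euc n), IsRayIn Ω r₁ → IsRayIn Ω r₂ →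
      IsBdryLimit Ω r₁ e → IsBdryLimit Ω r₂ e →
      ∀ a₁ a₂ : Euc n, IsBdryLimit Ω' (τ '' r₁) a₁ → IsBdryLimit Ω' (τ '' r₂) a₂ → a₁ = a₂

/-- An extreme line in `Ω`: a line in `Ω` whose closure meets `∂Ω` in extreme points
of the closure of `Ω`. -/
def IsExtremeLine {n : ℕ} (Ω L : Set (Euc n)) : Prop :=
  IsLineIn Ω L ∧ ∀ x ∈ closure L ∩ frontier Ω, x ∈ Set.extremePoints ℝ (closure Ω)

/-- `s` is rigid in `Ω`: for any two points `a, b` of `s` the segment `[a,b]` is the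
unique geodesic from `a` to `b` in `(Ω, d_Ω)`, i.e. every point `z` with
`d(a,z) + d(z,b) = d(a,b)` lies on the segment `[a,b]`. -/
def IsRigidSet {n : ℕ} (Ω s : Set (Euc n)) : Prop :=
  ∀ a ∈ s, ∀ b ∈ s, ∀ z ∈ Ω,
    hilbertDist Ω a z + hilbertDist Ω z b = hilbertDist Ω a b → z ∈ segment ℝ a b

/-- A face of a closed convex set `C`: a convex subset `F ⊆ C` such that whenever an open
segment between two points of `C` meets `F`, the whole closed segment lies in `F`. -/
def IsFace {n : ℕ} (C F : Set (Euc n)) : Prop :=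
  Convex ℝ F ∧ IsExtreme ℝ C F

/-- A face of `C` which is neither empty nor all of `C`. -/
def IsProperFace {n : ℕ} (C F : Set (Euc n)) : Prop :=
  IsFace C F ∧ F.Nonempty ∧ F ≠ C

/-- `Ω` is a cone with vertex `v` and base `B`: `B` is an `(n−1)`-dimensional convex
domain lying in a hyperplane not containing `v`, and `Ω` is the union of the open
segments from `v` to the points of `B`. -/
def IsConeWith {n : ℕ} (Ω : Set (Euc n)) (v : Euc n) (B : Set (Euc n)) : Prop :=
  ∃ (f : Euc n →ₗ[ℝ] ℝ) (c : ℝ), f ≠ 0 ∧ (∀ b ∈ B, f b = c) ∧ f v ≠ c ∧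
    B.Nonempty ∧ Convex ℝ B ∧ Bornology.IsBounded B ∧
    B = intrinsicInterior ℝ B ∧
    (affineSpan ℝ B : Set (Euc n)) = {x | f x = c} ∧
    Ω = ⋃ b ∈ B, openSegment ℝ v b

/-- `Ω` is a cone. -/
def IsCone {n : ℕ} (Ω : Set (Euc n)) : Prop :=
  ∃ v B, IsConeWith Ω v B

/-- `Ω` is the interior of a triangle: the interior of the convex hull of three
affinely independent points. -/
def IsTriangleInterior (Ω : Set (Euc 2)) : Prop :=
  ∃ a b c : Euc 2, AffineIndependent ℝ ![a, b, c] ∧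
    Ω = interior (convexHull ℝ ({a, b, c} : Set (Euc 2)))

/-- `τ` is the restriction to `Ω` of a projective transformation mapping `Ω` onto `Ω'`;
this identifies `Isom(Ω,Ω') ⊇/⊆ PGL(Ω,Ω') = {p ∈ PGL_{n+1}(ℝ) : p(Ω) = Ω'}`. -/
def IsProjectiveBetween {n : ℕ} (Ω Ω' : Set (Euc n)) (τ : Euc n → Euc n) : Prop :=
  ∃ g : (Fin (n + 1) → ℝ) ≃ₗ[ℝ] (Fin (n + 1) → ℝ),
    (∀ x ∈ Ω, chart (τ x) = projMap g (chart x)) ∧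
    projMap g '' (chart '' Ω) = chart '' Ω'

lemma euc_ext {x y : Euc 2} (h0 : x 0 = y 0) (h1 : x 1 = y 1) : x = y := by
  ext i; fin_cases i
  · exact h0
  · exact h1

/-! ### Convex domains, exit points and chords -/

/-- A convex domain of the plane: a nonempty open bounded convex set. -/
structure Dom (Ω : Set (Euc 2)) : Prop where
  isOpen : IsOpen Ω
  convex : Convex ℝ Ω
  bounded : Bornology.IsBounded Ω
  nonempty : Ω.Nonempty

/-- The point of the open segment `(α, β)` whose distances to `α` and `β` have ratio `exp t`.
This is the unit speed parametrization of a chord for the Hilbert metric. -/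
def gam (α β : Euc 2) (t : ℝ) : Euc 2 := (1 + Real.exp t)⁻¹ • (α + Real.exp t • β)

/-- `α` and `β` are the end points of a chord: two boundary points with `(α, β) ⊆ Ω`. -/
def IsChord (Ω : Set (Euc 2)) (α β : Euc 2) : Prop :=
  α ∈ frontier Ω ∧ β ∈ frontier Ω ∧ openSegment ℝ α β ⊆ Ω

lemma gam_mem_openSegment (α β : Euc 2) (t : ℝ) : gam α β t ∈ openSegment ℝ α β := by
  have := Real.exp_pos t
  refine ⟨(1 + Real.exp t)⁻¹, (1 + Real.exp t)⁻¹ * Real.exp t, by positivity, by positivity, ?_, ?_⟩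
  · field_simp
  · simp [gam, smul_smul]

lemma exists_gam {α β x : Euc 2} (h : x ∈ openSegment ℝ α β) : ∃ t, x = gam α β t := by
  obtain ⟨a, b, ha, hb, hab, rfl⟩ := h
  refine ⟨Real.log (b / a), ?_⟩
  rw [gam, Real.exp_log (by positivity)]
  have : 1 + b / a = a⁻¹ := by field_simp; linarith
  rw [this, inv_inv, smul_add, smul_smul]
  congr 2
  field_simp

lemma gam_symm (α β : Euc 2) (t : ℝ) : gam β α t = gam α β (-t) := by
  have := Real.exp_pos t
  rw [gam, gam, Real.exp_neg]
  match_scalars <;> field_simp <;> ring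

lemma eq_beyond {a b : ℝ} {α β z : Euc 2} (ha : 0 < a) (hab : a + b = 1)
    (h : a • α + b • β = z) : α = z + (b / a) • (z - β) := by
  obtain rfl : b = 1 - a := by linarith
  rw [← h]
  match_scalars <;> field_simp <;> ring

lemma aff_apply (f : Euc 2 →ᵃ[ℝ] ℝ) (x : Euc 2) : f x = f.linear x + f 0 := by
  conv_lhs => rw [f.decomp]
  rfl

lemma aff_comb (f : Euc 2 →ᵃ[ℝ] ℝ) {a b : ℝ} (h : a + b = 1) (x y : Euc 2) :
    f (a • x + b • y) = a * f x + b * f y := by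
  rw [aff_apply f, aff_apply f x, aff_apply f y]
  simp only [map_add, map_smul, smul_eq_mul]
  linear_combination (-f 0) * h

lemma aff_gam (f : Euc 2 →ᵃ[ℝ] ℝ) (α β : Euc 2) (t : ℝ) :
    f (gam α β t) = (1 + Real.exp t)⁻¹ * (f α + Real.exp t * f β) := by
  have := Real.exp_pos t
  rw [gam, smul_add, smul_smul, aff_comb f (by field_simp)]
  ring

namespace Dom

lemma isCompact_closure {Ω : Set (Euc 2)} (hΩ : Dom Ω)
    : IsCompact (closure Ω) := hΩ.bounded.isCompact_closure

lemma mem_of_openSegment {Ω : Set (Euc 2)} (hΩ : Dom Ω)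
    {x y z : Euc 2} (hx : x ∈ Ω) (hy : y ∈ closure Ω)
    (hz : z ∈ openSegment ℝ x y) : z ∈ Ω := by
  have := hΩ.convex.openSegment_interior_closure_subset_interior
    (by rwa [hΩ.isOpen.interior_eq]) hy hz
  rwa [hΩ.isOpen.interior_eq] at this

lemma frontier_eq {Ω : Set (Euc 2)} (hΩ : Dom Ω)
    : frontier Ω = closure Ω \ Ω := hΩ.isOpen.frontier_eq

lemma not_mem_of_frontier {Ω : Set (Euc 2)} (hΩ : Dom Ω)
    {x : Euc 2} (hx : x ∈ frontier Ω) : x ∉ Ω := by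
  rw [hΩ.frontier_eq] at hx; exact hx.2

lemma interior_closure {Ω : Set (Euc 2)} (hΩ : Dom Ω) : interior (closure Ω) = Ω := by
  rw [hΩ.convex.interior_closure_eq_interior_of_nonempty_interior
    (by rw [hΩ.isOpen.interior_eq]; exact hΩ.nonempty), hΩ.isOpen.interior_eq]

lemma exists_exit {Ω : Set (Euc 2)} (hΩ : Dom Ω) {x u : Euc 2} (hx : x ∈ closure Ω) (hu : u ≠ 0) :
    ∃ r : ℝ, 0 ≤ r ∧ x + r • u ∈ frontier Ω ∧ ∀ s, x + s • u ∈ closure Ω → s ≤ r := by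
  let S : Set ℝ := {r | x + r • u ∈ closure Ω}
  have hcl : IsClosed S := isClosed_closure.preimage (by fun_prop)
  have hbd : BddAbove S := by
    obtain ⟨M, hM⟩ := hΩ.isCompact_closure.isBounded.exists_norm_le
    refine ⟨(M + ‖x‖) / ‖u‖, fun r hr => ?_⟩
    rw [le_div_iff₀ (norm_pos_iff.2 hu)]
    have h1 := hM _ hr
    have h2 : ‖r • u‖ ≤ ‖x + r • u‖ + ‖x‖ := by
      have := norm_sub_le (x + r • u) x
      simpa using this
    rw [norm_smul] at h2
    have h3 : r * ‖u‖ ≤ ‖r‖ * ‖u‖ := by gcongr; exact le_abs_self r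
    linarith
  have h0 : (0 : ℝ) ∈ S := by simpa [S] using hx
  have hmem : sSup S ∈ S := hcl.csSup_mem ⟨0, h0⟩ hbd
  refine ⟨sSup S, le_csSup hbd h0, ?_, fun s hs => le_csSup hbd hs⟩
  rw [hΩ.frontier_eq]
  refine ⟨hmem, fun hin => ?_⟩
  have hopen : IsOpen {r : ℝ | x + r • u ∈ Ω} := hΩ.isOpen.preimage (by fun_prop)
  obtain ⟨ε, hε, hb⟩ := Metric.isOpen_iff.1 hopen _ hin
  have h1 : sSup S + ε / 2 ∈ Metric.ball (sSup S) ε := by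
    rw [Metric.mem_ball, Real.dist_eq]
    rw [add_sub_cancel_left, abs_of_pos (by linarith)]
    linarith
  have h2 : sSup S + ε / 2 ∈ S := subset_closure (hb h1)
  linarith [le_csSup hbd h2]

lemma ray_unique {Ω : Set (Euc 2)} (hΩ : Dom Ω)
    {x u : Euc 2} (hx : x ∈ Ω) {r s : ℝ} (hr : 0 < r) (hs : 0 < s)
    (h1 : x + r • u ∈ frontier Ω) (h2 : x + s • u ∈ frontier Ω) : r = s := by
  have key : ∀ {r s : ℝ}, 0 < r → x + r • u ∈ frontier Ω → x + s • u ∈ frontier Ω → ¬ r < s := by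
    intro r s hr h1 h2 hlt
    have hs : 0 < s := hr.trans hlt
    refine hΩ.not_mem_of_frontier h1
      (hΩ.mem_of_openSegment hx (frontier_subset_closure h2)
        ⟨1 - r / s, r / s, ?_, by positivity, by ring, ?_⟩)
    · rw [sub_pos, div_lt_one hs]; exact hlt
    · match_scalars <;> field_simp <;> ring
  rcases lt_trichotomy r s with h | h | h
  · exact absurd h (key hr h1 h2)
  · exact h
  · exact absurd h (key hs h2 h1)

lemma exists_chord_from {Ω : Set (Euc 2)} (hΩ : Dom Ω)
    {e x : Euc 2} (he : e ∈ frontier Ω) (hx : x ∈ Ω) :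
    ∃ b t, IsChord Ω b e ∧ x = gam b e t := by
  have hne : x - e ≠ 0 := by
    intro h
    rw [sub_eq_zero] at h
    exact hΩ.not_mem_of_frontier he (h ▸ hx)
  obtain ⟨r, hr, hb, -⟩ := hΩ.exists_exit (subset_closure hx) hne
  have hr0 : 0 < r := by
    refine lt_of_le_of_ne hr fun h => ?_
    rw [← h] at hb
    simp only [zero_smul, add_zero] at hb
    exact hΩ.not_mem_of_frontier hb hx
  have hseg : x ∈ openSegment ℝ (x + r • (x - e)) e :=
    ⟨1 / (1 + r), r / (1 + r), by positivity, by positivity, by field_simp,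
      by match_scalars <;> field_simp <;> ring⟩
  obtain ⟨t, ht⟩ := exists_gam hseg
  refine ⟨_, t, ⟨hb, he, ?_⟩, ht⟩
  rintro z ⟨a, b, ha, hb', hab, rfl⟩
  -- compare the position of `z` with that of `x`
  rcases lt_trichotomy (a * r) b with h | h | h
  · refine hΩ.mem_of_openSegment hx (frontier_subset_closure he)
      ⟨a * (1 + r), b - a * r, by positivity, by linarith, by linear_combination hab, ?_⟩
    match_scalars <;> ring
  · convert hx using 1
    have : a * (1 + r) = 1 := by linarith
    match_scalars
    · linarith
    · linarith
  · refine hΩ.mem_of_openSegment hx (frontier_subset_closure hb)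
      ⟨b * (1 + r) / r, a - b / r, by positivity, ?_, ?_, ?_⟩
    · rw [sub_pos, div_lt_iff₀ hr0]; exact h
    · field_simp; linear_combination r * hab
    · match_scalars <;> field_simp <;> ring

end Dom

namespace IsChord

variable {Ω : Set (Euc 2)} {α β : Euc 2}

lemma symm (h : IsChord Ω α β) : IsChord Ω β α :=
  ⟨h.2.1, h.1, by rw [openSegment_symm]; exact h.2.2⟩

lemma gam_mem (h : IsChord Ω α β) (t : ℝ) : gam α β t ∈ Ω := h.2.2 (gam_mem_openSegment α β t)

lemma ne (h : IsChord Ω α β) (hΩ : Dom Ω) : α ≠ β := by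
  rintro rfl
  exact hΩ.not_mem_of_frontier h.1 (h.2.2 (by simp))

end IsChord

lemma Dom.exists_chord_through {Ω : Set (Euc 2)} (hΩ : Dom Ω) {x y : Euc 2} (hx : x ∈ Ω)
    (hy : y ∈ Ω) (hxy : x ≠ y) :
    ∃ α β s t, IsChord Ω α β ∧ s < t ∧ x = gam α β s ∧ y = gam α β t := by
  obtain ⟨r, hr, hb, -⟩ := hΩ.exists_exit (subset_closure hx) (sub_ne_zero.2 hxy.symm)
  have hr1 : 1 < r := by
    by_contra! hr1
    rcases hr.eq_or_lt with h | h
    · rw [← h] at hb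
      simp only [zero_smul, add_zero] at hb
      exact hΩ.not_mem_of_frontier hb hx
    · apply hΩ.not_mem_of_frontier hb
      exact hΩ.convex hx hy (by linarith : (0 : ℝ) ≤ 1 - r) hr (by ring) |> fun h => by
        convert h using 1
        module
  obtain ⟨α, s, hc, hs⟩ := hΩ.exists_chord_from hb hx
  have hseg : y ∈ openSegment ℝ α (x + r • (y - x)) := by
    obtain ⟨a, b, ha, hb', hab, he⟩ := gam_mem_openSegment α (x + r • (y - x)) s
    rw [← hs] at he
    refine ⟨a * (1 - 1 / r), b * (1 - 1 / r) + 1 / r, ?_, ?_, ?_, ?_⟩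
    · have : 1 / r < 1 := by rw [div_lt_one (by linarith)]; exact hr1
      exact mul_pos ha (by linarith)
    · have : 1 / r < 1 := by rw [div_lt_one (by linarith)]; exact hr1
      have := mul_pos hb' (sub_pos.2 this)
      positivity
    · linear_combination (1 - 1 / r) * hab
    · have h1 : (a * (1 - 1 / r)) • α + (b * (1 - 1 / r) + 1 / r) • (x + r • (y - x))
        = (1 - 1 / r) • (a • α + b • (x + r • (y - x))) + (1 / r) • (x + r • (y - x)) := by module
      rw [h1, he]
      match_scalars <;> field_simp <;> ring
  obtain ⟨t, ht⟩ := exists_gam hseg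
  refine ⟨α, _, s, t, hc, ?_, hs, ht⟩
  -- `β` lies beyond `y`, so the functional `gam` parameter increases from `x` to `y`
  set β := x + r • (y - x) with hβ
  have hs' := Real.exp_pos s
  have ht' := Real.exp_pos t
  have e1 : β - x = (1 + Real.exp s)⁻¹ • (β - α) := by
    conv_lhs => rw [hs, gam]
    match_scalars <;> field_simp <;> ring
  have e2 : β - y = (1 + Real.exp t)⁻¹ • (β - α) := by
    conv_lhs => rw [ht, gam]
    match_scalars <;> field_simp <;> ring
  have e3 : β - y = (1 - 1 / r) • (β - x) := by
    rw [hβ]; match_scalars <;> field_simp <;> ring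
  have e4 : ((1 + Real.exp t)⁻¹ - (1 - 1 / r) * (1 + Real.exp s)⁻¹) • (β - α) = 0 := by
    rw [sub_smul, mul_smul, ← e1, ← e2, e3, sub_self]
  rcases smul_eq_zero.1 e4 with h | h
  · have h1 : (1 + Real.exp t)⁻¹ < (1 + Real.exp s)⁻¹ := by
      have : (0:ℝ) < 1 / r := by positivity
      have : 0 < 1 / r * (1 + Real.exp s)⁻¹ := by positivity
      nlinarith
    rw [inv_lt_inv₀ (by positivity) (by positivity)] at h1
    exact Real.exp_lt_exp.1 (by linarith)
  · exact absurd (sub_eq_zero.1 h).symm (hc.ne hΩ)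

/-- A segment with boundary end points which meets `Ω` is a chord. -/
lemma Dom.isChord_of_mem {Ω : Set (Euc 2)} (hΩ : Dom Ω) {α β z : Euc 2} (hα : α ∈ frontier Ω)
    (hβ : β ∈ frontier Ω) (hz : z ∈ Ω) (h : z ∈ openSegment ℝ α β) : IsChord Ω α β := by
  obtain ⟨b, t, hc, ht⟩ := hΩ.exists_chord_from hβ hz
  have hs := gam_mem_openSegment b β t
  rw [← ht] at hs
  obtain ⟨a1, a2, h1, h2, h3, h4⟩ := h
  obtain ⟨c1, c2, k1, k2, k3, k4⟩ := hs
  have hα' : α = z + (a2 / a1) • (z - β) := eq_beyond h1 h3 h4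
  have hb' : b = z + (c2 / c1) • (z - β) := eq_beyond k1 k3 k4
  have := hΩ.ray_unique hz (by positivity) (by positivity) (hα' ▸ hα) (hb' ▸ hc.1)
  rw [hα', this, ← hb']
  exact hc

lemma IsChord.end_unique {Ω : Set (Euc 2)} (hΩ : Dom Ω) {b b' e : Euc 2} {s t : ℝ}
    (h : IsChord Ω b e) (h' : IsChord Ω b' e) (hst : gam b e s = gam b' e t) : b = b' := by
  have hs := gam_mem_openSegment b e s
  have ht := gam_mem_openSegment b' e t
  rw [← hst] at ht
  have hz := h.gam_mem s
  set z := gam b e s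
  obtain ⟨a1, a2, h1, h2, h3, h4⟩ := hs
  obtain ⟨c1, c2, k1, k2, k3, k4⟩ := ht
  have hα' : b = z + (a2 / a1) • (z - e) := eq_beyond h1 h3 h4
  have hb' : b' = z + (c2 / c1) • (z - e) := eq_beyond k1 k3 k4
  have := hΩ.ray_unique hz (by positivity) (by positivity) (hα' ▸ h.1) (hb' ▸ h'.1)
  rw [hα', this, ← hb']

/-! ### The Hilbert metric along chords -/

lemma gam_between (α β : Euc 2) (s t : ℝ) :
    gam α β s = ((Real.exp t - Real.exp s) / (Real.exp t * (1 + Real.exp s))) • α +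
      (Real.exp s * (1 + Real.exp t) / (Real.exp t * (1 + Real.exp s))) • gam α β t := by
  have := Real.exp_pos s
  have := Real.exp_pos t
  rw [gam, gam]
  match_scalars <;> field_simp <;> ring

lemma dist_gam_left (α β : Euc 2) (t : ℝ) :
    dist α (gam α β t) = Real.exp t / (1 + Real.exp t) * dist α β := by
  have := Real.exp_pos t
  have h : α - gam α β t = (Real.exp t / (1 + Real.exp t)) • (α - β) := by
    rw [gam]; match_scalars <;> field_simp <;> ring
  rw [dist_eq_norm, h, norm_smul, Real.norm_of_nonneg (by positivity), dist_eq_norm]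

lemma dist_gam_right (α β : Euc 2) (t : ℝ) :
    dist β (gam α β t) = 1 / (1 + Real.exp t) * dist α β := by
  have := Real.exp_pos t
  have h : β - gam α β t = (1 / (1 + Real.exp t)) • (β - α) := by
    rw [gam]; match_scalars <;> field_simp <;> ring
  rw [dist_eq_norm, h, norm_smul, Real.norm_of_nonneg (by positivity), dist_eq_norm, norm_sub_rev]

lemma IsHilbertPair.swap {Ω : Set (Euc 2)} {x y α β : Euc 2} (h : IsHilbertPair Ω x y α β) :
    IsHilbertPair Ω y x β α := by
  obtain ⟨h1, h2, h3, h4, h5, h6⟩ := h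
  exact ⟨h2, h1, by rwa [Set.pair_comm y x], by rwa [Set.pair_comm y x], h6, h5⟩

lemma IsHilbertPair.fst_eq {Ω : Set (Euc 2)} (hΩ : Dom Ω) {x y α β α' : Euc 2} {k : ℝ}
    (hx : x ∈ Ω) (hy : y ∈ Ω) (h : IsHilbertPair Ω x y α β) (hk : 0 < k)
    (hα' : α' = x + k • (x - y)) (hf : α' ∈ frontier Ω) : α = α' := by
  obtain ⟨h1, -, h3, -, h5, -⟩ := h
  have hxy : x ≠ y := by rintro rfl; exact lt_irrefl _ h5
  rw [collinear_iff_of_mem (p₀ := x) (by simp)] at h3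
  obtain ⟨v, hv⟩ := h3
  obtain ⟨r, hr⟩ := hv α (by simp)
  obtain ⟨r', hr'⟩ := hv y (by simp)
  rw [vadd_eq_add] at hr hr'
  have hr0 : r' ≠ 0 := by rintro rfl; apply hxy; rw [hr']; simp
  have e : α = x + (-(r / r')) • (x - y) := by
    rw [hr, hr']; match_scalars <;> field_simp; ring
  set m := -(r / r')
  have e2 : α - y = (1 + m) • (x - y) := by rw [e]; module
  have e1 : α - x = m • (x - y) := by rw [e]; module
  have hD : 0 < ‖x - y‖ := norm_pos_iff.2 (sub_ne_zero.2 hxy)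
  rw [dist_eq_norm, dist_eq_norm, e1, e2, norm_smul, norm_smul] at h5
  have h6 : |m| < |1 + m| := lt_of_mul_lt_mul_right h5 hD.le
  have h7 : -(1 / 2) < m := by
    by_contra! hm
    rcases le_or_gt 0 (1 + m) with h | h
    · rw [abs_of_neg (by linarith), abs_of_nonneg h] at h6; linarith
    · rw [abs_of_neg (by linarith), abs_of_neg h] at h6; linarith
  have h8 : 0 < m := by
    by_contra! hm
    apply hΩ.not_mem_of_frontier h1
    have := hΩ.convex hx hy (by linarith : 0 ≤ 1 + m) (by linarith : 0 ≤ -m) (by ring)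
    rw [e]
    convert this using 1
    module
  rw [e] at h1
  rw [hα'] at hf
  rw [e, hα', hΩ.ray_unique hx h8 hk h1 hf]

lemma hilbertDist_self (Ω : Set (Euc 2)) (x : Euc 2) : hilbertDist Ω x x = 0 := by
  rw [hilbertDist, dif_neg]
  rintro ⟨p, hp⟩
  exact lt_irrefl _ hp.2.2.2.2.1

lemma gam_lt_data {α β : Euc 2} {s t : ℝ} (hst : s < t) :
    ∃ k : ℝ, 0 < k ∧ α = gam α β s + k • (gam α β s - gam α β t) := by
  have hs := Real.exp_pos s
  have ht := Real.exp_pos t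
  have hlt := Real.exp_lt_exp.2 hst
  have h1 : 0 < (Real.exp t - Real.exp s) / (Real.exp t * (1 + Real.exp s)) :=
    div_pos (by linarith) (by positivity)
  exact ⟨_, div_pos (by positivity) h1,
    eq_beyond h1 (by field_simp; ring) (gam_between α β s t).symm⟩

lemma IsChord.isHilbertPair {Ω : Set (Euc 2)} (hΩ : Dom Ω) {α β : Euc 2} (h : IsChord Ω α β)
    {s t : ℝ} (hst : s < t) : IsHilbertPair Ω (gam α β s) (gam α β t) α β := by
  have hs := Real.exp_pos s
  have ht := Real.exp_pos t
  have hlt := Real.exp_lt_exp.2 hst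
  have hD : 0 < dist α β := dist_pos.2 (h.ne hΩ)
  have hcol : ∀ z ∈ ({α, β} : Set (Euc 2)),
      Collinear ℝ ({z, gam α β s, gam α β t} : Set (Euc 2)) := by
    intro z hz
    apply Collinear.subset (s₂ := {α, β, gam α β s, gam α β t})
    · intro w hw
      simp only [mem_insert_iff, mem_singleton_iff] at hz hw ⊢
      rcases hz with rfl | rfl <;> tauto
    · rw [collinear_iff_of_mem (p₀ := α) (by simp)]
      refine ⟨β - α, ?_⟩
      simp only [mem_insert_iff, mem_singleton_iff]
      rintro p (rfl | rfl | rfl | rfl)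
      · exact ⟨0, by simp⟩
      · exact ⟨1, by simp⟩
      · refine ⟨Real.exp s / (1 + Real.exp s), ?_⟩
        rw [gam, vadd_eq_add]; match_scalars <;> field_simp <;> ring
      · refine ⟨Real.exp t / (1 + Real.exp t), ?_⟩
        rw [gam, vadd_eq_add]; match_scalars <;> field_simp <;> ring
  refine ⟨h.1, h.2.1, hcol α (by simp), hcol β (by simp), ?_, ?_⟩
  · rw [dist_gam_left, dist_gam_left]
    apply mul_lt_mul_of_pos_right _ hD
    rw [div_lt_div_iff₀ (by positivity) (by positivity)]
    linarith
  · rw [dist_gam_right, dist_gam_right]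
    apply mul_lt_mul_of_pos_right _ hD
    rw [div_lt_div_iff₀ (by positivity) (by positivity)]
    linarith

lemma IsChord.pair_unique {Ω : Set (Euc 2)} (hΩ : Dom Ω) {α β α' β' : Euc 2} (h : IsChord Ω α β)
    {s t : ℝ} (hst : s < t) (hp : IsHilbertPair Ω (gam α β s) (gam α β t) α' β') :
    α' = α ∧ β' = β := by
  constructor
  · obtain ⟨k, hk, e⟩ := gam_lt_data (α := α) (β := β) hst
    exact hp.fst_eq hΩ (h.gam_mem s) (h.gam_mem t) hk e h.1
  · obtain ⟨k, hk, e⟩ := gam_lt_data (α := β) (β := α) (neg_lt_neg hst)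
    rw [gam_symm α β, gam_symm α β, neg_neg, neg_neg] at e
    exact hp.swap.fst_eq hΩ (h.gam_mem t) (h.gam_mem s) hk e h.2.1

lemma IsChord.hilbertDist_of_lt {Ω : Set (Euc 2)} (hΩ : Dom Ω) {α β : Euc 2} (h : IsChord Ω α β)
    {s t : ℝ} (hst : s < t) : hilbertDist Ω (gam α β s) (gam α β t) = t - s := by
  have hs := Real.exp_pos s
  have ht := Real.exp_pos t
  have hD : 0 < dist α β := dist_pos.2 (h.ne hΩ)
  have hex : ∃ p : Euc 2 × Euc 2, IsHilbertPair Ω (gam α β s) (gam α β t) p.1 p.2 :=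
    ⟨(α, β), h.isHilbertPair hΩ hst⟩
  rw [hilbertDist, dif_pos hex]
  obtain ⟨e1, e2⟩ := h.pair_unique hΩ hst hex.choose_spec
  rw [e1, e2, dist_gam_left, dist_gam_left, dist_gam_right, dist_gam_right]
  have : Real.exp t / (1 + Real.exp t) * dist α β / (Real.exp s / (1 + Real.exp s) * dist α β) *
      (1 / (1 + Real.exp s) * dist α β / (1 / (1 + Real.exp t) * dist α β)) =
      Real.exp (t - s) := by
    rw [Real.exp_sub]; field_simp
  rw [this, Real.log_exp]

lemma IsChord.hilbertDist {Ω : Set (Euc 2)} (hΩ : Dom Ω) {α β : Euc 2} (h : IsChord Ω α β)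
    (s t : ℝ) : hilbertDist Ω (gam α β s) (gam α β t) = |t - s| := by
  rcases lt_trichotomy s t with hst | rfl | hst
  · rw [h.hilbertDist_of_lt hΩ hst, abs_of_pos (by linarith)]
  · rw [hilbertDist_self]; simp
  · have := h.symm.hilbertDist_of_lt hΩ (neg_lt_neg hst)
    rw [gam_symm α β, gam_symm α β, neg_neg, neg_neg] at this
    rw [this, abs_of_neg (by linarith)]; ring

lemma gam_injective {Ω : Set (Euc 2)} (hΩ : Dom Ω) {α β : Euc 2} (h : IsChord Ω α β)
    {s t : ℝ} (hst : gam α β s = gam α β t) : s = t := by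
  have := h.hilbertDist hΩ s t
  rw [hst, hilbertDist_self] at this
  have := abs_eq_zero.1 this.symm
  linarith

lemma hilbertDist_comm {Ω : Set (Euc 2)} (hΩ : Dom Ω) {x y : Euc 2} (hx : x ∈ Ω) (hy : y ∈ Ω) :
    hilbertDist Ω x y = hilbertDist Ω y x := by
  by_cases hxy : x = y
  · rw [hxy]
  · obtain ⟨α, β, s, t, hc, -, rfl, rfl⟩ := hΩ.exists_chord_through hx hy hxy
    rw [hc.hilbertDist hΩ, hc.hilbertDist hΩ, abs_sub_comm]

lemma hilbertDist_pos {Ω : Set (Euc 2)} (hΩ : Dom Ω)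
    {x y : Euc 2} (hx : x ∈ Ω) (hy : y ∈ Ω) (hxy : x ≠ y) :
    0 < hilbertDist Ω x y := by
  obtain ⟨α, β, s, t, hc, hst, rfl, rfl⟩ := hΩ.exists_chord_through hx hy hxy
  rw [hc.hilbertDist_of_lt hΩ hst]; linarith

lemma hilbertDist_nonneg {Ω : Set (Euc 2)} (hΩ : Dom Ω) {x y : Euc 2} (hx : x ∈ Ω) (hy : y ∈ Ω) :
    0 ≤ hilbertDist Ω x y := by
  by_cases hxy : x = y
  · rw [hxy, hilbertDist_self]
  · exact (hilbertDist_pos hΩ hx hy hxy).le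

lemma nonneg_closure {Ω : Set (Euc 2)} (hΩ : Dom Ω)
    {f : Euc 2 →ᵃ[ℝ] ℝ} (hf : ∀ x ∈ Ω, 0 < f x) {x : Euc 2}
    (hx : x ∈ closure Ω) : 0 ≤ f x := by
  have hcl : IsClosed {x | 0 ≤ f x} :=
    isClosed_le continuous_const f.continuous_of_finiteDimensional
  exact closure_minimal (fun z hz => (hf z hz).le) hcl hx

/-- A supporting affine functional at a boundary point. -/
lemma exists_support {Ω : Set (Euc 2)} (hΩ : Dom Ω) {β : Euc 2} (hβ : β ∈ frontier Ω) :
    ∃ f : Euc 2 →ᵃ[ℝ] ℝ, (∀ x ∈ Ω, 0 < f x) ∧ f β = 0 := by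
  obtain ⟨φ, hφ⟩ := geometric_hahn_banach_open_point hΩ.convex hΩ.isOpen
    (hΩ.not_mem_of_frontier hβ)
  refine ⟨AffineMap.const ℝ (Euc 2) (φ β) - φ.toLinearMap.toAffineMap, fun x hx => ?_, ?_⟩
  · simpa using hφ x hx
  · simp

/-- The ratio `f x * g y / (f y * g x)` of two positive affine functionals is bounded by the
exponential of the Hilbert distance; on a chord, equality forces `f` and `g` to vanish at the
respective end points. -/
lemma ratio_le_aux {Ω : Set (Euc 2)} (hΩ : Dom Ω)
    {α β : Euc 2} (hc : IsChord Ω α β) {s t : ℝ} (hst : s < t)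
    {f g : Euc 2 →ᵃ[ℝ] ℝ} (hf : ∀ x ∈ Ω, 0 < f x) (hg : ∀ x ∈ Ω, 0 < g x) :
    f (gam α β s) * g (gam α β t) / (f (gam α β t) * g (gam α β s)) ≤ Real.exp (t - s) ∧
    (f (gam α β s) * g (gam α β t) / (f (gam α β t) * g (gam α β s)) = Real.exp (t - s) →
      f β = 0 ∧ g α = 0) := by
  have hs := Real.exp_pos s
  have ht := Real.exp_pos t
  have hlt := Real.exp_lt_exp.2 hst
  have a1 := nonneg_closure hΩ hf (frontier_subset_closure hc.1)
  have a2 := nonneg_closure hΩ hf (frontier_subset_closure hc.2.1)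
  have b1 := nonneg_closure hΩ hg (frontier_subset_closure hc.1)
  have b2 := nonneg_closure hΩ hg (frontier_subset_closure hc.2.1)
  have p1 := hf _ (hc.gam_mem s)
  have p2 := hf _ (hc.gam_mem t)
  have q1 := hg _ (hc.gam_mem s)
  have q2 := hg _ (hc.gam_mem t)
  rw [aff_gam] at p1 p2 q1 q2
  rw [aff_gam, aff_gam, aff_gam, aff_gam]
  set S := Real.exp s
  set T := Real.exp t
  have hS : 0 < (1 + S)⁻¹ := by positivity
  have hT : 0 < (1 + T)⁻¹ := by positivity
  replace p1 := pos_of_mul_pos_right p1 hS.le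
  replace p2 := pos_of_mul_pos_right p2 hT.le
  replace q1 := pos_of_mul_pos_right q1 hS.le
  replace q2 := pos_of_mul_pos_right q2 hT.le
  have e : (1 + S)⁻¹ * (f α + S * f β) * ((1 + T)⁻¹ * (g α + T * g β)) /
      ((1 + T)⁻¹ * (f α + T * f β) * ((1 + S)⁻¹ * (g α + S * g β))) =
      ((f α + S * f β) * (g α + T * g β)) / ((f α + T * f β) * (g α + S * g β)) := by
    field_simp
  rw [e, Real.exp_sub]
  have k1 : f α + S * f β ≤ f α + T * f β := by gcongr
  have k2 : S * (g α + T * g β) ≤ T * (g α + S * g β) := by nlinarith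
  constructor
  · rw [div_le_div_iff₀ (by positivity) hs]
    calc (f α + S * f β) * (g α + T * g β) * S = (f α + S * f β) * (S * (g α + T * g β)) := by ring
      _ ≤ (f α + T * f β) * (T * (g α + S * g β)) := by gcongr
      _ = _ := by ring
  · intro h
    rw [div_eq_div_iff (by positivity) hs.ne'] at h
    have h1 : (f α + S * f β) * (S * (g α + T * g β)) = (f α + T * f β) * (T * (g α + S * g β)) := by
      linarith
    constructor
    · by_contra hne
      have : 0 < f β := lt_of_le_of_ne a2 (Ne.symm hne)
      have k3 : f α + S * f β < f α + T * f β := by nlinarith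
      have := mul_lt_mul k3 k2 (by positivity) (by positivity)
      linarith
    · by_contra hne
      have : 0 < g α := lt_of_le_of_ne b1 (Ne.symm hne)
      have k3 : S * (g α + T * g β) < T * (g α + S * g β) := by nlinarith
      have := mul_lt_mul' k1 k3 (by positivity) (by positivity)
      linarith

lemma log_ratio_le {Ω : Set (Euc 2)} (hΩ : Dom Ω)
    {x y : Euc 2} (hx : x ∈ Ω) (hy : y ∈ Ω) {f g : Euc 2 →ᵃ[ℝ] ℝ}
    (hf : ∀ x ∈ Ω, 0 < f x) (hg : ∀ x ∈ Ω, 0 < g x) :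
    Real.log (f x * g y / (f y * g x)) ≤ hilbertDist Ω x y := by
  have := hf x hx
  have := hf y hy
  have := hg x hx
  have := hg y hy
  by_cases hxy : x = y
  · subst hxy
    rw [hilbertDist_self, div_self (by positivity), Real.log_one]
  · obtain ⟨α, β, s, t, hc, hst, rfl, rfl⟩ := hΩ.exists_chord_through hx hy hxy
    rw [hc.hilbertDist_of_lt hΩ hst, Real.log_le_iff_le_exp (by positivity)]
    exact (ratio_le_aux hΩ hc hst hf hg).1

lemma dist_eq_log {Ω : Set (Euc 2)} (hΩ : Dom Ω)
    {α β : Euc 2} (hc : IsChord Ω α β) {s t : ℝ} (hst : s ≤ t)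
    {f g : Euc 2 →ᵃ[ℝ] ℝ} (hf : ∀ x ∈ Ω, 0 < f x) (hg : ∀ x ∈ Ω, 0 < g x)
    (hfβ : f β = 0) (hgα : g α = 0) :
    hilbertDist Ω (gam α β s) (gam α β t) =
      Real.log (f (gam α β s) * g (gam α β t) / (f (gam α β t) * g (gam α β s))) := by
  have hs := Real.exp_pos s
  have ht := Real.exp_pos t
  have p1 := hf _ (hc.gam_mem s)
  have q1 := hg _ (hc.gam_mem s)
  rw [hc.hilbertDist hΩ, abs_of_nonneg (by linarith)]
  rw [aff_gam] at p1 q1 ⊢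
  rw [aff_gam, aff_gam, aff_gam]
  rw [hfβ] at p1 ⊢
  rw [hgα] at q1 ⊢
  have p2 : f α ≠ 0 := by rintro h; simp [h] at p1
  have q2 : g β ≠ 0 := by rintro h; simp [h] at q1
  have : (1 + Real.exp s)⁻¹ * (f α + Real.exp s * 0) * ((1 + Real.exp t)⁻¹ * (0 + Real.exp t * g β))
    / ((1 + Real.exp t)⁻¹ * (f α + Real.exp t * 0) * ((1 + Real.exp s)⁻¹ * (0 + Real.exp s * g β)))
      = Real.exp (t - s) := by
    simp only [mul_zero, add_zero, zero_add]
    rw [Real.exp_sub]; field_simp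
  rw [this, Real.log_exp]

/-- The Hilbert distance is realized by a pair of positive affine functionals. -/
lemma exists_dist_eq_log {Ω : Set (Euc 2)} (hΩ : Dom Ω) {x y : Euc 2} (hx : x ∈ Ω) (hy : y ∈ Ω) :
    ∃ f g : Euc 2 →ᵃ[ℝ] ℝ, (∀ x ∈ Ω, 0 < f x) ∧ (∀ x ∈ Ω, 0 < g x) ∧
      hilbertDist Ω x y = Real.log (f x * g y / (f y * g x)) := by
  by_cases hxy : x = y
  · subst hxy
    refine ⟨AffineMap.const ℝ _ 1, AffineMap.const ℝ _ 1, by simp, by simp, ?_⟩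
    rw [hilbertDist_self]; simp
  · obtain ⟨α, β, s, t, hc, hst, rfl, rfl⟩ := hΩ.exists_chord_through hx hy hxy
    obtain ⟨f, hf, hfβ⟩ := exists_support hΩ hc.2.1
    obtain ⟨g, hg, hgα⟩ := exists_support hΩ hc.1
    exact ⟨f, g, hf, hg, dist_eq_log hΩ hc hst.le hf hg hfβ hgα⟩

lemma log_ratio_add {Ω : Set (Euc 2)} (hΩ : Dom Ω)
    {f g : Euc 2 →ᵃ[ℝ] ℝ} (hf : ∀ x ∈ Ω, 0 < f x) (hg : ∀ x ∈ Ω, 0 < g x)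
    {x y z : Euc 2} (hx : x ∈ Ω) (hy : y ∈ Ω) (hz : z ∈ Ω) :
    Real.log (f x * g y / (f y * g x)) =
      Real.log (f x * g z / (f z * g x)) + Real.log (f z * g y / (f y * g z)) := by
  have := hf x hx
  have := hf y hy
  have := hf z hz
  have := hg x hx
  have := hg y hy
  have := hg z hz
  rw [← Real.log_mul (by positivity) (by positivity)]
  congr 1
  field_simp

lemma hilbertDist_triangle {Ω : Set (Euc 2)} (hΩ : Dom Ω)
    {x y z : Euc 2} (hx : x ∈ Ω) (hy : y ∈ Ω) (hz : z ∈ Ω) :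
    hilbertDist Ω x y ≤ hilbertDist Ω x z + hilbertDist Ω z y := by
  obtain ⟨f, g, hf, hg, e⟩ := exists_dist_eq_log hΩ hx hy
  rw [e, log_ratio_add hΩ hf hg hx hy hz]
  exact add_le_add (log_ratio_le hΩ hx hz hf hg) (log_ratio_le hΩ hz hy hf hg)

/-- Upper bound for the Hilbert distance in terms of how far the segment `[x, y]` can be
prolonged inside the closed domain. -/
lemma hilbertDist_le_of_comb {Ω : Set (Euc 2)} (hΩ : Dom Ω)
    {x y z w : Euc 2} {μ ν : ℝ} (hx : x ∈ Ω) (hy : y ∈ Ω)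
    (hz : z ∈ closure Ω) (hw : w ∈ closure Ω) (hμ : 0 < μ) (hμ1 : μ ≤ 1) (hν : 0 < ν)
    (hν1 : ν ≤ 1) (e1 : y = (1 - μ) • z + μ • x) (e2 : x = (1 - ν) • w + ν • y) :
    hilbertDist Ω x y ≤ -Real.log (μ * ν) := by
  obtain ⟨f, g, hf, hg, e⟩ := exists_dist_eq_log hΩ hx hy
  have fx := hf x hx
  have fy := hf y hy
  have gx := hg x hx
  have gy := hg y hy
  have k1 : μ * f x ≤ f y := by
    have : f y = (1 - μ) * f z + μ * f x := by
      conv_lhs => rw [e1]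
      exact aff_comb f (by ring) _ _
    rw [this]
    have := mul_nonneg (sub_nonneg.2 hμ1) (nonneg_closure hΩ hf hz)
    linarith
  have k2 : ν * g y ≤ g x := by
    have : g x = (1 - ν) * g w + ν * g y := by
      conv_lhs => rw [e2]
      exact aff_comb g (by ring) _ _
    rw [this]
    have := mul_nonneg (sub_nonneg.2 hν1) (nonneg_closure hΩ hg hw)
    linarith
  rw [e, ← Real.log_inv]
  apply Real.log_le_log (by positivity)
  rw [← one_div, div_le_div_iff₀ (by positivity) (by positivity)]
  calc f x * g y * (μ * ν) = (μ * f x) * (ν * g y) := by ring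
    _ ≤ f y * g x := by gcongr
    _ = _ := by ring

/-- Points at distance at most `C` can be moved apart along their line by a definite proportion
without leaving the closed domain. -/
lemma extend_mem_closure {Ω : Set (Euc 2)} (hΩ : Dom Ω)
    {x y : Euc 2} {C : ℝ} (hx : x ∈ Ω) (hy : y ∈ Ω)
    (h : hilbertDist Ω x y ≤ C) : x - Real.exp (-C) • (y - x) ∈ closure Ω := by
  by_cases hxy : x = y
  · subst hxy; simpa using subset_closure hx
  obtain ⟨α, β, s, t, hc, hst, rfl, rfl⟩ := hΩ.exists_chord_through hx hy hxy
  rw [hc.hilbertDist_of_lt hΩ hst] at h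
  have hs := Real.exp_pos s
  have ht := Real.exp_pos t
  have hC := Real.exp_pos (-C)
  have hlt := Real.exp_lt_exp.2 hst
  have hle : Real.exp (-C) * Real.exp t ≤ Real.exp s := by
    rw [← Real.exp_add]; exact Real.exp_le_exp.2 (by linarith)
  set S := Real.exp s
  set T := Real.exp t
  set c := Real.exp (-C)
  set A := (1 + S)⁻¹ + c * ((1 + S)⁻¹ - (1 + T)⁻¹)
  have e : gam α β s - c • (gam α β t - gam α β s) = A • α + (1 - A) • β := by
    simp only [gam, A]
    match_scalars <;> simp only [S, T] <;> field_simp <;> ring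
  rw [e]
  refine hΩ.convex.closure (frontier_subset_closure hc.1) (frontier_subset_closure hc.2.1)
    ?_ ?_ (by ring)
  · have : (1 + T)⁻¹ ≤ (1 + S)⁻¹ := by gcongr
    have := mul_nonneg hC.le (sub_nonneg.2 this)
    have : 0 < (1 + S)⁻¹ := by positivity
    simp only [A]; linarith
  · have : 1 - A = (S * (1 + T) - c * (T - S)) / ((1 + S) * (1 + T)) := by
      simp only [A]; field_simp; ring
    rw [this]
    apply div_nonneg _ (by positivity)
    nlinarith [mul_pos hs ht, mul_pos hC hs]

/-- A map which pulls back positive affine functionals to positive affine functionals, up to a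
common positive factor, does not increase the Hilbert distance. -/
lemma contraction {Ω Ω' : Set (Euc 2)} (hΩ : Dom Ω) (hΩ' : Dom Ω') {h : Euc 2 → Euc 2}
    (hm : MapsTo h Ω Ω') (ρ : Euc 2 → ℝ) (hρ : ∀ x ∈ Ω, 0 < ρ x)
    (hp : ∀ f : Euc 2 →ᵃ[ℝ] ℝ, ∃ F : Euc 2 →ᵃ[ℝ] ℝ, ∀ x ∈ Ω, F x = ρ x * f (h x))
    {x y : Euc 2} (hx : x ∈ Ω) (hy : y ∈ Ω) :
    hilbertDist Ω' (h x) (h y) ≤ hilbertDist Ω x y := by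
  obtain ⟨f, g, hf, hg, e⟩ := exists_dist_eq_log hΩ' (hm hx) (hm hy)
  obtain ⟨F, hF⟩ := hp f
  obtain ⟨G, hG⟩ := hp g
  have h1 := log_ratio_le hΩ hx hy (f := F) (g := G)
    (fun z hz => by rw [hF z hz]; exact mul_pos (hρ z hz) (hf _ (hm hz)))
    (fun z hz => by rw [hG z hz]; exact mul_pos (hρ z hz) (hg _ (hm hz)))
  rw [hF x hx, hF y hy, hG x hx, hG y hy] at h1
  rw [e]
  convert h1 using 2
  have := hρ x hx
  have := hρ y hy
  have := hf _ (hm hx)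
  have := hf _ (hm hy)
  have := hg _ (hm hx)
  have := hg _ (hm hy)
  field_simp

/-! ### Uniqueness of geodesics -/

/-- The straight segment is the only geodesic from `x` to `y`. -/
def UG (Ω : Set (Euc 2)) (x y : Euc 2) : Prop :=
  ∀ z ∈ Ω, hilbertDist Ω x z + hilbertDist Ω z y = hilbertDist Ω x y → z ∈ segment ℝ x y

/-- The extreme points of the closed domain. -/
def ExtPts (Ω : Set (Euc 2)) : Set (Euc 2) := extremePoints ℝ (closure Ω)

lemma ext_eq_of_comb {Ω : Set (Euc 2)} {e p q : Euc 2} (he : e ∈ ExtPts Ω) {a b : ℝ} (ha : 0 < a)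
    (hb : 0 < b) (hab : a + b = 1) (hp : p ∈ closure Ω) (hq : q ∈ closure Ω)
    (h : e = a • p + b • q) : p = e ∧ q = e :=
  (mem_extremePoints.1 he).2 p hp q hq ⟨a, b, ha, hb, hab, h.symm⟩

lemma ext_mem_frontier {Ω : Set (Euc 2)} (hΩ : Dom Ω) {e : Euc 2} (he : e ∈ ExtPts Ω) :
    e ∈ frontier Ω := by
  rw [hΩ.frontier_eq]
  refine ⟨he.1, fun hin => ?_⟩
  obtain ⟨v, hv⟩ := exists_ne (0 : Euc 2)
  have hopen : IsOpen {r : ℝ | e + r • v ∈ Ω} := hΩ.isOpen.preimage (by fun_prop)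
  obtain ⟨ε, hε, hb⟩ := Metric.isOpen_iff.1 hopen 0 (by simpa using hin)
  have h1 : e + (ε / 2) • v ∈ Ω :=
    hb (by rw [Metric.mem_ball, Real.dist_eq, sub_zero, abs_of_pos] <;> linarith)
  have h2 : e + (-(ε / 2)) • v ∈ Ω :=
    hb (by rw [Metric.mem_ball, Real.dist_eq, sub_zero, abs_of_neg] <;> linarith)
  have := (ext_eq_of_comb he (a := 1 / 2) (b := 1 / 2) (by norm_num) (by norm_num) (by norm_num)
    (subset_closure h1) (subset_closure h2) (by module)).1
  rw [add_eq_left, smul_eq_zero] at this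
  rcases this with h | h
  · linarith
  · exact hv h

lemma UG.symm {Ω : Set (Euc 2)} (hΩ : Dom Ω) {x y : Euc 2} (hx : x ∈ Ω) (hy : y ∈ Ω)
    (h : UG Ω x y) : UG Ω y x := by
  intro z hz e
  rw [segment_symm]
  apply h z hz
  rw [hilbertDist_comm hΩ hx hz, hilbertDist_comm hΩ hz hy, hilbertDist_comm hΩ hx hy]
  linarith

lemma UG.refl {Ω : Set (Euc 2)} (hΩ : Dom Ω) {x : Euc 2} (hx : x ∈ Ω) : UG Ω x x := by
  intro z hz e
  rw [hilbertDist_self] at e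
  by_cases h : x = z
  · subst h; simp
  · have := hilbertDist_pos hΩ hx hz h
    have := hilbertDist_nonneg hΩ hz hx
    linarith

lemma gam_lt_data' {α β : Euc 2} {s t : ℝ} (hst : s < t) :
    ∃ k : ℝ, 0 < k ∧ β = gam α β t + k • (gam α β t - gam α β s) := by
  obtain ⟨k, hk, e⟩ := gam_lt_data (α := β) (β := α) (neg_lt_neg hst)
  rw [gam_symm α β, gam_symm α β, neg_neg, neg_neg] at e
  exact ⟨k, hk, e⟩

lemma aff_beyond (f : Euc 2 →ᵃ[ℝ] ℝ) (k : ℝ) (y z : Euc 2) :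
    f (y + k • (y - z)) = (1 + k) * f y - k * f z := by
  have : y + k • (y - z) = (1 + k) • y + (-k) • z := by module
  rw [this, aff_comb f (by ring)]; ring

lemma rigid_aux {Ω : Set (Euc 2)} (hΩ : Dom Ω) {α β : Euc 2} (hc : IsChord Ω α β)
    (hβ : β ∈ ExtPts Ω) {s t : ℝ} (hst : s < t) : UG Ω (gam α β s) (gam α β t) := by
  intro z hz he
  have hx := hc.gam_mem s
  have hy := hc.gam_mem t
  obtain ⟨f, hf, hfβ⟩ := exists_support hΩ hc.2.1
  obtain ⟨g, hg, hgα⟩ := exists_support hΩ hc.1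
  have e1 := dist_eq_log hΩ hc hst.le hf hg hfβ hgα
  obtain ⟨m, hm, em⟩ := gam_lt_data' (α := α) (β := β) hst
  set x := gam α β s
  set y := gam α β t
  by_cases hxz : x = z
  · rw [← hxz]; exact left_mem_segment ℝ _ _
  by_cases hzy : z = y
  · rw [hzy]; exact right_mem_segment ℝ _ _
  rw [log_ratio_add hΩ hf hg hx hy hz] at e1
  have l1 := log_ratio_le hΩ hx hz hf hg
  have l2 := log_ratio_le hΩ hz hy hf hg
  have fx := hf x hx
  have fy := hf y hy
  have fz := hf z hz
  have gx := hg x hx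
  have gy := hg y hy
  have gz := hg z hz
  have q1 : Real.log (f x * g z / (f z * g x)) = hilbertDist Ω x z := by linarith
  have q2 : Real.log (f z * g y / (f y * g z)) = hilbertDist Ω z y := by linarith
  have step : ∀ p ∈ Ω, ∀ q ∈ Ω, p ≠ q → Real.log (f p * g q / (f q * g p)) = hilbertDist Ω p q →
      ∃ k : ℝ, 0 < k ∧ q + k • (q - p) ∈ closure Ω ∧ (1 + k) * f q - k * f p = 0 := by
    intro p hp q hq hpq h
    obtain ⟨a, b, s', t', hc', hst', rfl, rfl⟩ := hΩ.exists_chord_through hp hq hpq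
    obtain ⟨k, hk, ek⟩ := gam_lt_data' (α := a) (β := b) hst'
    have := hf _ hp
    have := hf _ hq
    have := hg _ hp
    have := hg _ hq
    rw [hc'.hilbertDist_of_lt hΩ hst'] at h
    have hb := ((ratio_le_aux hΩ hc' hst' hf hg).2
      (by rw [← h, Real.exp_log (by positivity)])).1
    refine ⟨k, hk, ek ▸ frontier_subset_closure hc'.2.1, ?_⟩
    rw [← aff_beyond, ← ek, hb]
  obtain ⟨k, hk, hb1, k1⟩ := step x hx z hz hxz q1
  obtain ⟨l, hl, hb2, k2⟩ := step z hz y hy hzy q2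
  have k3 : (1 + m) * f y - m * f x = 0 := by rw [← aff_beyond, ← em, hfβ]
  have hsum : m / k + (1 + m) / (1 + l) = 1 := by
    have h1 : m * (1 + k) * (1 + l) = (1 + m) * l * k := by
      have : (m * (1 + k) * (1 + l) - (1 + m) * l * k) * (f x * f z * f y) = 0 := by
        linear_combination (m * (1 + l) * f x * f y) * k1 + (m * k * f x * f x) * k2
          - (l * k * f x * f z) * k3
      rcases mul_eq_zero.1 this with h | h
      · linarith
      · exact absurd h (by positivity)
    field_simp
    linear_combination h1
  have hz' : m / k * (1 + k) = (1 + m) / (1 + l) * l := by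
    have h1 : m / k * k = m := by field_simp
    have h2 : (1 + m) / (1 + l) * (1 + l) = 1 + m := by field_simp
    linear_combination hsum + h1 - h2
  obtain ⟨-, h2⟩ := ext_eq_of_comb hβ (a := m / k) (b := (1 + m) / (1 + l)) (by positivity)
    (by positivity) hsum hb1 hb2 (by
      rw [em]
      match_scalars
      · field_simp
      · field_simp
      · linear_combination -hz')
  rw [em] at h2
  have hml : m < l := by
    have : 0 < m / k := by positivity
    have : (1 + m) / (1 + l) < 1 := by linarith
    rw [div_lt_one (by positivity)] at this
    linarith
  refine ⟨m / l, 1 - m / l, by positivity, ?_, by ring, ?_⟩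
  · rw [sub_nonneg, div_le_one hl]; exact hml.le
  · have h3 : l • (y - z) = m • (y - x) := by simpa using h2
    have h4 : z = y - l⁻¹ • (l • (y - z)) := by
      rw [smul_smul, inv_mul_cancel₀ hl.ne']; module
    rw [h4, h3]
    module

/-- Chords with an extreme end point consist of unique geodesics. -/
lemma rigid_of_ext {Ω : Set (Euc 2)} (hΩ : Dom Ω) {α β : Euc 2} (hc : IsChord Ω α β)
    (h : α ∈ ExtPts Ω ∨ β ∈ ExtPts Ω) (s t : ℝ) : UG Ω (gam α β s) (gam α β t) := by
  have key : ∀ s t, s < t → UG Ω (gam α β s) (gam α β t) := by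
    intro s t hst
    rcases h with h | h
    · have := rigid_aux hΩ hc.symm h (neg_lt_neg hst)
      rw [gam_symm α β, gam_symm α β, neg_neg, neg_neg] at this
      exact this.symm hΩ (hc.gam_mem t) (hc.gam_mem s)
    · exact rigid_aux hΩ hc h hst
  rcases lt_trichotomy s t with hst | rfl | hst
  · exact key s t hst
  · exact UG.refl hΩ (hc.gam_mem s)
  · exact (key t s hst).symm hΩ (hc.gam_mem t) (hc.gam_mem s)

lemma exists_sym_of_not_ext {Ω : Set (Euc 2)} (hΩ : Dom Ω) {β : Euc 2} (hβ : β ∈ closure Ω)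
    (h : β ∉ ExtPts Ω) : ∃ v : Euc 2, v ≠ 0 ∧ β + v ∈ closure Ω ∧ β - v ∈ closure Ω := by
  rw [ExtPts, mem_extremePoints] at h
  push Not at h
  obtain ⟨p, hp, q, hq, ⟨a, b, ha, hb, hab, e⟩, hne⟩ := h hβ
  have hpq : p ≠ q := by
    rintro rfl
    rw [← add_smul, hab, one_smul] at e
    exact hne e e
  have hcv := hΩ.convex.closure
  refine ⟨(a * b) • (p - q), smul_ne_zero (by positivity) (sub_ne_zero.2 hpq), ?_, ?_⟩
  · have := hcv hp hq (a := a + a * b) (b := b - a * b) (by positivity) (by nlinarith)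
      (by linarith)
    convert this using 1
    rw [← e]; module
  · have := hcv hp hq (a := a - a * b) (b := b + a * b) (by nlinarith) (by positivity)
      (by linarith)
    convert this using 1
    rw [← e]; module

lemma linear_coord (φ : Euc 2 →ₗ[ℝ] ℝ) (u : Euc 2) :
    φ u = u 0 * φ (EuclideanSpace.single 0 1) + u 1 * φ (EuclideanSpace.single 1 1) := by
  have : u = u 0 • EuclideanSpace.single 0 (1 : ℝ) + u 1 • EuclideanSpace.single 1 (1 : ℝ) := by
    ext i; fin_cases i <;> simp
  conv_lhs => rw [this]
  simp only [map_add, map_smul, smul_eq_mul]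

/-- In the plane the kernel of a nonzero functional is a line. -/
lemma parallel_of_ker (φ : Euc 2 →ₗ[ℝ] ℝ) (hφ : φ ≠ 0) {v w : Euc 2} (hv : v ≠ 0) (h1 : φ v = 0)
    (h2 : φ w = 0) : ∃ k : ℝ, w = k • v := by
  rw [linear_coord] at h1 h2
  set a := φ (EuclideanSpace.single 0 1)
  set b := φ (EuclideanSpace.single 1 1)
  have hab : a ≠ 0 ∨ b ≠ 0 := by
    by_contra! h
    apply hφ
    ext u
    rw [linear_coord]
    change u 0 * a + u 1 * b = 0
    rw [h.1, h.2]; ring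
  have hdet : v 0 * w 1 - v 1 * w 0 = 0 := by
    rcases hab with h | h
    · apply mul_left_cancel₀ h
      linear_combination w 1 * h1 - v 1 * h2
    · apply mul_left_cancel₀ h
      linear_combination v 0 * h2 - w 0 * h1
  have hv' : v 0 ≠ 0 ∨ v 1 ≠ 0 := by
    by_contra! h
    apply hv
    ext i; fin_cases i
    · exact h.1
    · exact h.2
  rcases hv' with h | h
  · refine ⟨w 0 / v 0, ?_⟩
    ext i; fin_cases i
    · simp [h]
    · simp; field_simp; linarith
  · refine ⟨w 1 / v 1, ?_⟩
    ext i; fin_cases i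
    · simp; field_simp; linarith
    · simp [h]

lemma aff_add (f : Euc 2 →ᵃ[ℝ] ℝ) (x v : Euc 2) : f (x + v) = f x + f.linear v := by
  rw [aff_apply f, aff_apply f x, map_add]; ring

/-- Near a point `β` in the relative interior of a boundary segment, the supporting line at `β`
is contained in the closed domain. -/
lemma flat_near {Ω : Set (Euc 2)} (hΩ : Dom Ω) {β v : Euc 2} (hv : v ≠ 0)
    (h1 : β + v ∈ closure Ω) (h2 : β - v ∈ closure Ω) {f : Euc 2 →ᵃ[ℝ] ℝ}
    (hf : ∀ x ∈ Ω, 0 < f x) (hfβ : f β = 0) :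
    f.linear v = 0 ∧ ∀ᶠ w in nhds β, f w = 0 → w ∈ closure Ω := by
  have a1 := nonneg_closure hΩ hf h1
  have a2 := nonneg_closure hΩ hf h2
  rw [aff_add, hfβ] at a1
  rw [sub_eq_add_neg, aff_add, hfβ, map_neg] at a2
  have hv0 : f.linear v = 0 := by linarith
  refine ⟨hv0, ?_⟩
  have hφ : f.linear ≠ 0 := by
    intro h
    obtain ⟨x, hx⟩ := hΩ.nonempty
    have k1 := hf x hx
    rw [show x = β + (x - β) by module, aff_add, hfβ, h] at k1
    simp at k1
  filter_upwards [Metric.ball_mem_nhds β (norm_pos_iff.2 hv)] with w hw hfw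
  rw [show w = β + (w - β) by module, aff_add, hfβ, zero_add] at hfw
  obtain ⟨k, hk⟩ := parallel_of_ker f.linear hφ hv hv0 hfw
  rw [Metric.mem_ball, dist_eq_norm, hk, norm_smul] at hw
  have hk1 : |k| < 1 := by
    by_contra! hk1
    have := mul_le_mul_of_nonneg_right hk1 (norm_nonneg v)
    rw [Real.norm_eq_abs] at hw
    linarith
  rw [abs_lt] at hk1
  have := hΩ.convex.closure h1 h2 (a := (1 + k) / 2) (b := (1 - k) / 2) (by linarith) (by linarith)
    (by ring)
  convert this using 1
  rw [show w = β + (w - β) by module, hk]; module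

/-- Near the midpoint of a chord ending in the relative interior of a boundary segment, the
prolongations of the segments `[x, z]` and `[z, y]` still end on that boundary segment. -/
lemma near_mid {Ω : Set (Euc 2)} (hΩ : Dom Ω) {α β : Euc 2} (hc : IsChord Ω α β)
    (hβ : β ∉ ExtPts Ω) {f : Euc 2 →ᵃ[ℝ] ℝ} (hf : ∀ x ∈ Ω, 0 < f x) (hfβ : f β = 0) :
    ∀ᶠ z in nhds (gam α β 0), ∃ P ∈ closure Ω, ∃ Q ∈ closure Ω,
      f z < f (gam α β (-1)) ∧ f (gam α β 1) < f z ∧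
      z = (1 - f z / f (gam α β (-1))) • P + (f z / f (gam α β (-1))) • gam α β (-1) ∧
      gam α β 1 = (1 - f (gam α β 1) / f z) • Q + (f (gam α β 1) / f z) • z := by
  obtain ⟨v, hv, h1, h2⟩ := exists_sym_of_not_ext hΩ (frontier_subset_closure hc.2.1) hβ
  obtain ⟨-, hn⟩ := flat_near hΩ hv h1 h2 hf hfβ
  have hx := hf _ (hc.gam_mem (-1))
  have hm := hf _ (hc.gam_mem 0)
  have hy := hf _ (hc.gam_mem 1)
  have E := Real.exp_pos 1
  have E' := Real.exp_pos (-1)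
  have L1 : f (gam α β 0) < f (gam α β (-1)) ∧ f (gam α β 1) < f (gam α β 0) := by
    rw [aff_gam] at hm
    rw [aff_gam, aff_gam, aff_gam, hfβ]
    rw [hfβ] at hm
    simp only [mul_zero, add_zero] at hm ⊢
    have hα := pos_of_mul_pos_right hm (by positivity)
    constructor
    · have : Real.exp (-1) < Real.exp 0 := Real.exp_lt_exp.2 (by norm_num)
      gcongr
    · have : Real.exp 0 < Real.exp 1 := Real.exp_lt_exp.2 (by norm_num)
      gcongr
  have hβ1 : (1 - f (gam α β 0) / f (gam α β (-1)))⁻¹ •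
      (gam α β 0 - (f (gam α β 0) / f (gam α β (-1))) • gam α β (-1)) = β := by
    obtain ⟨k, hk, e⟩ := gam_lt_data' (α := α) (β := β) (show (-1 : ℝ) < 0 by norm_num)
    have := aff_beyond f k (gam α β 0) (gam α β (-1))
    rw [← e, hfβ] at this
    have h3 : f (gam α β 0) / f (gam α β (-1)) = k / (1 + k) := by
      field_simp; linarith
    rw [h3]
    conv_rhs => rw [e]
    match_scalars <;> field_simp <;> ring
  have hβ2 : (1 - f (gam α β 1) / f (gam α β 0))⁻¹ •
      (gam α β 1 - (f (gam α β 1) / f (gam α β 0)) • gam α β 0) = β := by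
    obtain ⟨k, hk, e⟩ := gam_lt_data' (α := α) (β := β) (show (0 : ℝ) < 1 by norm_num)
    have := aff_beyond f k (gam α β 1) (gam α β 0)
    rw [← e, hfβ] at this
    have h3 : f (gam α β 1) / f (gam α β 0) = k / (1 + k) := by
      field_simp; linarith
    rw [h3]
    conv_rhs => rw [e]
    match_scalars <;> field_simp <;> ring
  set x := gam α β (-1)
  set m := gam α β 0
  set y := gam α β 1
  have hfc : Continuous f := f.continuous_of_finiteDimensional
  have d1 : 1 - f m / f x ≠ 0 := by
    have := (div_lt_one hx).2 L1.1
    linarith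
  have d2 : 1 - f y / f m ≠ 0 := by
    have := (div_lt_one hm).2 L1.2
    linarith
  have c1 : ContinuousAt (fun z => (1 - f z / f x)⁻¹ • (z - (f z / f x) • x)) m := by
    have : ContinuousAt (fun z => 1 - f z / f x) m := by fun_prop
    have h3 := this.inv₀ d1
    exact h3.smul (by fun_prop)
  have c2 : ContinuousAt (fun z => (1 - f y / f z)⁻¹ • (y - (f y / f z) • z)) m := by
    have h0 : ContinuousAt (fun z => f y / f z) m :=
      continuousAt_const.div hfc.continuousAt hm.ne'
    have : ContinuousAt (fun z => 1 - f y / f z) m := continuousAt_const.sub h0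
    have h3 := this.inv₀ d2
    exact h3.smul (continuousAt_const.sub (h0.smul continuousAt_id))
  have n1 := (hβ1 ▸ c1.tendsto : Filter.Tendsto _ _ (nhds β)).eventually hn
  have n2 := (hβ2 ▸ c2.tendsto : Filter.Tendsto _ _ (nhds β)).eventually hn
  have n3 : ∀ᶠ z in nhds m, f z < f x := hfc.continuousAt.eventually (gt_mem_nhds L1.1)
  have n4 : ∀ᶠ z in nhds m, f y < f z := hfc.continuousAt.eventually (lt_mem_nhds L1.2)
  filter_upwards [n1, n2, n3, n4] with z z1 z2 z3 z4
  have hz : 0 < f z := hy.trans z4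
  have d1 : 1 - f z / f x ≠ 0 := by
    have := (div_lt_one hx).2 z3
    linarith
  have d2 : 1 - f y / f z ≠ 0 := by
    have := (div_lt_one hz).2 z4
    linarith
  have key : ∀ (μ : ℝ) (p q : Euc 2), (1 - μ) ≠ 0 →
      f ((1 - μ)⁻¹ • (p - μ • q)) = (1 - μ)⁻¹ * (f p - μ * f q) := by
    intro μ p q h
    have : (1 - μ)⁻¹ • (p - μ • q) = (1 - μ)⁻¹ • p + (-((1 - μ)⁻¹ * μ)) • q := by module
    rw [this, aff_comb f (by linear_combination inv_mul_cancel₀ h)]; ring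
  refine ⟨_, z1 ?_, _, z2 ?_, z3, z4, ?_, ?_⟩
  · rw [key _ _ _ d1, div_mul_cancel₀ _ hx.ne', sub_self, mul_zero]
  · rw [key _ _ _ d2, div_mul_cancel₀ _ hz.ne', sub_self, mul_zero]
  · rw [smul_smul, mul_inv_cancel₀ d1]; module
  · rw [smul_smul, mul_inv_cancel₀ d2]; module

/-- A chord both of whose ends are non-extreme contains points joined by several geodesics. -/
lemma not_rigid {Ω : Set (Euc 2)} (hΩ : Dom Ω) {α β : Euc 2} (hc : IsChord Ω α β)
    (hα : α ∉ ExtPts Ω) (hβ : β ∉ ExtPts Ω) : ¬ UG Ω (gam α β (-1)) (gam α β 1) := by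
  intro hug
  obtain ⟨f, hf, hfβ⟩ := exists_support hΩ hc.2.1
  obtain ⟨g, hg, hgα⟩ := exists_support hΩ hc.1
  have n1 := near_mid hΩ hc hβ hf hfβ
  have n2 := near_mid hΩ hc.symm hα hg hgα
  rw [gam_symm α β, gam_symm α β, gam_symm α β, neg_neg, neg_zero] at n2
  obtain ⟨v, hv, h1, h2⟩ := exists_sym_of_not_ext hΩ (frontier_subset_closure hc.2.1) hβ
  obtain ⟨hv0, -⟩ := flat_near hΩ hv h1 h2 hf hfβ
  have n3 : ∀ᶠ z in nhds (gam α β 0), z ∈ Ω := hΩ.isOpen.mem_nhds (hc.gam_mem 0)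
  have c : Filter.Tendsto (fun δ : ℝ => gam α β 0 + δ • v) (nhdsWithin 0 {0}ᶜ)
      (nhds (gam α β 0)) := by
    have : Continuous (fun δ : ℝ => gam α β 0 + δ • v) := by fun_prop
    have := this.tendsto 0
    rw [zero_smul, add_zero] at this
    exact this.mono_left nhdsWithin_le_nhds
  obtain ⟨δ, ⟨⟨⟨P, hP, Q, hQ, a1, a2, a3, a4⟩, ⟨P', hP', Q', hQ', b1, b2, b3, b4⟩⟩, hz⟩, hδ⟩ :=
    ((c.eventually ((n1.and n2).and n3)).and self_mem_nhdsWithin).exists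
  have e := dist_eq_log hΩ hc (show (-1 : ℝ) ≤ 1 by norm_num) hf hg hfβ hgα
  have hx := hc.gam_mem (-1)
  have hy := hc.gam_mem 1
  have hzm : gam α β 0 + δ • v = gam α β 0 + δ • v := rfl
  set x := gam α β (-1)
  set y := gam α β 1
  generalize hzz : gam α β 0 + δ • v = z at *
  have fx := hf x hx
  have fy := hf y hy
  have fz := hf z hz
  have gx := hg x hx
  have gy := hg y hy
  have gz := hg z hz
  have k1 := hilbertDist_le_of_comb hΩ hx hz hP hQ' (by positivity) ((div_le_one fx).2 a1.le)
    (by positivity) ((div_le_one gz).2 b2.le) a3 b4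
  have k2 := hilbertDist_le_of_comb hΩ hz hy hQ hP' (by positivity) ((div_le_one fz).2 a2.le)
    (by positivity) ((div_le_one gy).2 b1.le) a4 b3
  have k3 : -Real.log (f z / f x * (g x / g z)) + -Real.log (f y / f z * (g z / g y)) =
      hilbertDist Ω x y := by
    rw [e, ← neg_add, ← Real.log_mul (by positivity) (by positivity), ← Real.log_inv]
    congr 1
    field_simp
  have k4 := hilbertDist_triangle hΩ hx hy hz
  have hseg := hug z hz (by linarith)
  -- `z` lies off the chord
  have hzc : z ∈ openSegment ℝ α β := (convex_openSegment α β).segment_subset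
    (gam_mem_openSegment α β _) (gam_mem_openSegment α β _) hseg
  obtain ⟨p, q, -, -, hpq, e1⟩ := hzc
  obtain ⟨p', q', -, -, hpq', e2⟩ := gam_mem_openSegment α β 0
  have e3 : δ • v = (q - q') • (β - α) := by
    have : δ • v = z - gam α β 0 := by rw [← hzz]; module
    rw [this, ← e1, ← e2]
    obtain rfl : p = 1 - q := by linarith
    obtain rfl : p' = 1 - q' := by linarith
    module
  have e4 : (q - q') * f.linear (β - α) = 0 := by
    have := congrArg f.linear e3
    rw [map_smul, map_smul, hv0, smul_zero, smul_eq_mul] at this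
    exact this.symm
  have e5 : δ • v ≠ 0 := smul_ne_zero hδ hv
  rcases mul_eq_zero.1 e4 with h | h
  · rw [h, zero_smul] at e3
    exact e5 e3
  · have k5 := hf _ (hc.gam_mem 0)
    have k6 : f β = f α + f.linear (β - α) := by rw [← aff_add]; congr 1; module
    rw [aff_gam, hfβ] at k5
    rw [hfβ, h] at k6
    rw [← k6.trans (add_zero _)] at k5
    simp at k5

/-! ### Images of rigid chords under isometries -/

lemma gam_mem_segment (α β : Euc 2) {s u t : ℝ} (h1 : s ≤ u) (h2 : u ≤ t) :
    gam α β u ∈ segment ℝ (gam α β s) (gam α β t) := by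
  rcases (h1.trans h2).eq_or_lt with h | h
  · obtain rfl : u = s := le_antisymm (h ▸ h2) h1
    exact left_mem_segment ℝ _ _
  have hs := Real.exp_pos s
  have hu := Real.exp_pos u
  have ht := Real.exp_pos t
  have e1 := Real.exp_le_exp.2 h1
  have e2 := Real.exp_le_exp.2 h2
  have e3 : 0 < Real.exp t - Real.exp s := sub_pos.2 (Real.exp_lt_exp.2 h)
  refine ⟨(1 + Real.exp s) * (Real.exp t - Real.exp u) / ((1 + Real.exp u) *
    (Real.exp t - Real.exp s)), (1 + Real.exp t) * (Real.exp u - Real.exp s) / ((1 + Real.exp u) *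
    (Real.exp t - Real.exp s)), ?_, ?_, ?_, ?_⟩
  · have := sub_nonneg.2 e2
    positivity
  · have := sub_nonneg.2 e1
    positivity
  · field_simp; ring
  · simp only [gam]
    match_scalars <;> field_simp <;> ring

lemma gam_of_mem_segment {Ω : Set (Euc 2)} (hΩ : Dom Ω) {α β : Euc 2} (hc : IsChord Ω α β)
    {s t : ℝ} (hst : s ≤ t) {z : Euc 2} (hz : z ∈ segment ℝ (gam α β s) (gam α β t)) :
    ∃ u, s ≤ u ∧ u ≤ t ∧ z = gam α β u := by
  obtain ⟨u, rfl⟩ := exists_gam ((convex_openSegment α β).segment_subset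
    (gam_mem_openSegment α β _) (gam_mem_openSegment α β _) hz)
  obtain ⟨f, hf, hfβ⟩ := exists_support hΩ hc.2.1
  obtain ⟨p, q, hp, hq, hpq, e⟩ := hz
  have h0 := hf _ (hc.gam_mem 0)
  have e1 := congrArg f e
  rw [aff_comb f hpq] at e1
  simp only [aff_gam, hfβ, mul_zero, add_zero] at e1 h0
  have hα := pos_of_mul_pos_right h0 (by positivity)
  have hs := Real.exp_pos s
  have hu := Real.exp_pos u
  have ht := Real.exp_pos t
  have e2 : (1 + Real.exp t)⁻¹ ≤ (1 + Real.exp s)⁻¹ := by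
    have := Real.exp_le_exp.2 hst
    gcongr
  have e3 : p * (1 + Real.exp s)⁻¹ + q * (1 + Real.exp t)⁻¹ = (1 + Real.exp u)⁻¹ := by
    apply mul_right_cancel₀ hα.ne'
    linear_combination e1
  obtain rfl : p = 1 - q := by linarith
  refine ⟨u, ?_, ?_, rfl⟩
  · have : (1 + Real.exp u)⁻¹ ≤ (1 + Real.exp s)⁻¹ := by nlinarith
    rw [inv_le_inv₀ (by positivity) (by positivity)] at this
    exact Real.exp_le_exp.1 (by linarith)
  · have : (1 + Real.exp t)⁻¹ ≤ (1 + Real.exp u)⁻¹ := by nlinarith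
    rw [inv_le_inv₀ (by positivity) (by positivity)] at this
    exact Real.exp_le_exp.1 (by linarith)

/-- A pair of mutually inverse isometries between two convex domains. -/
structure IsoPair (Ω Ω' : Set (Euc 2)) (τ σ : Euc 2 → Euc 2) : Prop where
  dom : Dom Ω
  dom' : Dom Ω'
  maps : ∀ x ∈ Ω, τ x ∈ Ω'
  maps' : ∀ x ∈ Ω', σ x ∈ Ω
  left : ∀ x ∈ Ω, σ (τ x) = x
  right : ∀ x ∈ Ω', τ (σ x) = x
  dist : ∀ x ∈ Ω, ∀ y ∈ Ω, hilbertDist Ω' (τ x) (τ y) = hilbertDist Ω x y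

lemma IsoPair.symm {Ω Ω' : Set (Euc 2)} {τ σ : Euc 2 → Euc 2} (h : IsoPair Ω Ω' τ σ) :
    IsoPair Ω' Ω σ τ where
  dom := h.dom'
  dom' := h.dom
  maps := h.maps'
  maps' := h.maps
  left := h.right
  right := h.left
  dist x hx y hy := by
    rw [← h.dist _ (h.maps' x hx) _ (h.maps' y hy), h.right x hx, h.right y hy]

lemma exists_isoPair {Ω Ω' : Set (Euc 2)} {τ : Euc 2 → Euc 2} (hΩ : Dom Ω) (hΩ' : Dom Ω')
    (h : IsHilbertIsometry Ω Ω' τ) : ∃ σ, IsoPair Ω Ω' τ σ := by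
  obtain ⟨hm, hs, hd⟩ := h
  have hinj : InjOn τ Ω := by
    intro x hx y hy e
    by_contra hne
    have h1 := hilbertDist_pos hΩ hx hy hne
    rw [← hd x hx y hy, e, hilbertDist_self] at h1
    exact lt_irrefl _ h1
  refine ⟨Function.invFunOn τ Ω, hΩ, hΩ', hm, fun x hx => Function.invFunOn_mem (hs hx),
    fun x hx => hinj (Function.invFunOn_mem ⟨x, hx, rfl⟩) hx
      (Function.invFunOn_eq ⟨x, hx, rfl⟩), fun x hx => Function.invFunOn_eq (hs hx), hd⟩

lemma IsoPair.ug {Ω Ω' : Set (Euc 2)} {τ σ : Euc 2 → Euc 2} (h : IsoPair Ω Ω' τ σ) {x y : Euc 2}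
    (hx : x ∈ Ω) (hy : y ∈ Ω) (hug : UG Ω x y) : UG Ω' (τ x) (τ y) := by
  by_cases hxy : x = y
  · rw [hxy]; exact UG.refl h.dom' (h.maps y hy)
  intro z' hz' e
  have hxy' : τ x ≠ τ y := fun e' => hxy (by rw [← h.left x hx, e', h.left y hy])
  obtain ⟨α', β', s', t', hc', hst', ex', ey'⟩ :=
    h.dom'.exists_chord_through (h.maps x hx) (h.maps y hy) hxy'
  obtain ⟨α, β, s, t, hc, hst, ex, ey⟩ := h.dom.exists_chord_through hx hy hxy
  set r := hilbertDist Ω' (τ x) z' with hr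
  have hr0 : 0 ≤ r := hilbertDist_nonneg h.dom' (h.maps x hx) hz'
  have hr1 : r ≤ t' - s' := by
    have := hilbertDist_nonneg h.dom' hz' (h.maps y hy)
    have h2 := hc'.hilbertDist_of_lt h.dom' hst'
    rw [← ex', ← ey'] at h2
    linarith
  -- the point of the segment at the same distance from `τ x` as `z'`
  set w' := gam α' β' (s' + r) with hw'
  have hw'm : w' ∈ Ω' := hc'.gam_mem _
  have dw1 : hilbertDist Ω' (τ x) w' = r := by
    rw [ex', hc'.hilbertDist h.dom', abs_of_nonneg] <;> linarith
  have dw2 : hilbertDist Ω' w' (τ y) = t' - s' - r := by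
    rw [ey', hc'.hilbertDist h.dom', abs_of_nonneg] <;> linarith
  have dxy : hilbertDist Ω' (τ x) (τ y) = t' - s' := by
    rw [ex', ey', hc'.hilbertDist_of_lt h.dom' hst']
  have pull : ∀ w ∈ Ω', hilbertDist Ω' (τ x) w + hilbertDist Ω' w (τ y) =
      hilbertDist Ω' (τ x) (τ y) → hilbertDist Ω' (τ x) w = r → σ w = gam α β (s + r) := by
    intro w hw h1 h2
    have hm := h.maps' w hw
    rw [← h.right w hw, h.dist _ hx _ hm, h.dist _ hm _ hy, h.dist _ hx _ hy] at h1
    rw [← h.right w hw, h.dist _ hx _ hm] at h2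
    have h3 := hug _ hm h1
    rw [ex, ey] at h3
    obtain ⟨u, hu1, hu2, e3⟩ := gam_of_mem_segment h.dom hc hst.le h3
    rw [ex, e3, hc.hilbertDist h.dom, abs_of_nonneg (by linarith)] at h2
    rw [e3]; congr 1; linarith
  have e1 := pull z' hz' e rfl
  have e2 := pull w' hw'm (by rw [dw1, dw2, dxy]; ring) dw1
  have : z' = w' := by rw [← h.right z' hz', ← h.right w' hw'm, e1, e2]
  rw [this, ex', ey']
  exact gam_mem_segment _ _ (by linarith) (by linarith)

/-- `τ` maps the chord `(α, β)` onto the chord `(α', β')`, preserving the orientation. -/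
def Maps (Ω' : Set (Euc 2)) (τ : Euc 2 → Euc 2) (α β α' β' : Euc 2) : Prop :=
  IsChord Ω' α' β' ∧ ∃ c : ℝ, ∀ t, τ (gam α β t) = gam α' β' (t + c)

lemma chord_unique {Ω : Set (Euc 2)} (hΩ : Dom Ω) {α β α' β' : Euc 2} (h : IsChord Ω α β)
    (h' : IsChord Ω α' β') {s t s' t' : ℝ} (hst : s < t) (hst' : s' < t')
    (e1 : gam α β s = gam α' β' s') (e2 : gam α β t = gam α' β' t') : α = α' ∧ β = β' := by
  have := h.isHilbertPair hΩ hst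
  rw [e1, e2] at this
  exact h'.pair_unique hΩ hst' this

lemma Maps.unique {Ω' : Set (Euc 2)} (hΩ' : Dom Ω') {τ : Euc 2 → Euc 2} {α β α' β' α'' β'' : Euc 2}
    (h : Maps Ω' τ α β α' β') (h' : Maps Ω' τ α β α'' β'') : α' = α'' ∧ β' = β'' := by
  obtain ⟨hc, c, e⟩ := h
  obtain ⟨hc', c', e'⟩ := h'
  exact chord_unique hΩ' hc hc' (show 0 + c < 1 + c by linarith)
    (show 0 + c' < 1 + c' by linarith) ((e 0).symm.trans (e' 0)) ((e 1).symm.trans (e' 1))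

lemma Maps.swap {Ω' : Set (Euc 2)} {τ : Euc 2 → Euc 2} {α β α' β' : Euc 2}
    (h : Maps Ω' τ α β α' β') : Maps Ω' τ β α β' α' := by
  obtain ⟨hc, c, e⟩ := h
  refine ⟨hc.symm, -c, fun t => ?_⟩
  rw [gam_symm α β, gam_symm α' β', e]
  congr 1; ring

lemma Maps.inv {Ω Ω' : Set (Euc 2)} {τ σ : Euc 2 → Euc 2} (hp : IsoPair Ω Ω' τ σ)
    {α β α' β' : Euc 2} (hc : IsChord Ω α β) (h : Maps Ω' τ α β α' β') :
    Maps Ω σ α' β' α β := by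
  obtain ⟨hc', c, e⟩ := h
  refine ⟨hc, -c, fun t => ?_⟩
  have : gam α' β' t = τ (gam α β (t + -c)) := by rw [e]; congr 1; ring
  rw [this, hp.left _ (hc.gam_mem _)]

/-- A chord with an extreme end point is mapped to a chord with an extreme end point. -/
lemma IsoPair.exists_maps {Ω Ω' : Set (Euc 2)} {τ σ : Euc 2 → Euc 2} (hp : IsoPair Ω Ω' τ σ)
    {α β : Euc 2} (hc : IsChord Ω α β) (h : α ∈ ExtPts Ω ∨ β ∈ ExtPts Ω) :
    ∃ α' β', Maps Ω' τ α β α' β' ∧ (α' ∈ ExtPts Ω' ∨ β' ∈ ExtPts Ω') := by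
  have hug : ∀ s t, UG Ω' (τ (gam α β s)) (τ (gam α β t)) := fun s t =>
    hp.ug (hc.gam_mem s) (hc.gam_mem t) (rigid_of_ext hp.dom hc h s t)
  have seg : ∀ N : ℝ, 0 < N → ∃ α' β' c, IsChord Ω' α' β' ∧
      ∀ u, -N ≤ u → u ≤ N → τ (gam α β u) = gam α' β' (u + c) := by
    intro N hN
    have hne : τ (gam α β (-N)) ≠ τ (gam α β N) := by
      intro e
      have := hp.dist _ (hc.gam_mem (-N)) _ (hc.gam_mem N)
      rw [e, hilbertDist_self, hc.hilbertDist_of_lt hp.dom (by linarith)] at this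
      linarith
    obtain ⟨α', β', s', t', hc', hst', es, et⟩ := hp.dom'.exists_chord_through
      (hp.maps _ (hc.gam_mem _)) (hp.maps _ (hc.gam_mem _)) hne
    refine ⟨α', β', s' + N, hc', fun u h1 h2 => ?_⟩
    have hu := hc.gam_mem u
    have d1 := hp.dist _ (hc.gam_mem (-N)) _ hu
    have d2 := hp.dist _ hu _ (hc.gam_mem N)
    have d3 := hp.dist _ (hc.gam_mem (-N)) _ (hc.gam_mem N)
    rw [hc.hilbertDist hp.dom, abs_of_nonneg (by linarith)] at d1 d2 d3
    have hs := hug (-N) N (τ (gam α β u)) (hp.maps _ hu) (by rw [d1, d2, d3]; ring)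
    rw [es, et] at hs
    obtain ⟨v, hv1, hv2, e⟩ := gam_of_mem_segment hp.dom' hc' hst'.le hs
    rw [es, e, hc'.hilbertDist hp.dom', abs_of_nonneg (by linarith)] at d1
    rw [e]; congr 1; linarith
  obtain ⟨α', β', c, hc', hM⟩ := seg 1 one_pos
  have hmaps : Maps Ω' τ α β α' β' := by
    refine ⟨hc', c, fun u => ?_⟩
    obtain ⟨α'', β'', c'', hc'', hM''⟩ := seg (1 + |u|) (by positivity)
    have hu := abs_nonneg u
    have a1 := hM 0 (by norm_num) (by norm_num)
    have a2 := hM 1 (by norm_num) (by norm_num)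
    have b1 := hM'' 0 (by linarith) (by linarith)
    have b2 := hM'' 1 (by linarith) (by linarith)
    obtain ⟨rfl, rfl⟩ := chord_unique hp.dom' hc' hc'' (show 0 + c < 1 + c by linarith)
      (show 0 + c'' < 1 + c'' by linarith) (a1.symm.trans b1) (a2.symm.trans b2)
    have := gam_injective hp.dom' hc' (a1.symm.trans b1)
    obtain rfl : c = c'' := by linarith
    exact hM'' u (by linarith [neg_abs_le u]) (by linarith [le_abs_self u])
  refine ⟨α', β', hmaps, ?_⟩
  by_contra! hne
  refine not_rigid hp.dom' hc' hne.1 hne.2 ?_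
  obtain ⟨-, c', e⟩ := hmaps
  have h1 := e (-1 - c')
  have h2 := e (1 - c')
  rw [sub_add_cancel] at h1 h2
  rw [← h1, ← h2]
  exact hug _ _

/-! ### Chords at bounded distance -/

/-- The segment `[b₁, b₂]` can be prolonged in both directions inside the closed domain
(or `b₁ = b₂`). -/
def FRel (Ω : Set (Euc 2)) (b₁ b₂ : Euc 2) : Prop :=
  ∃ ε : ℝ, 0 < ε ∧ b₁ - ε • (b₂ - b₁) ∈ closure Ω ∧ b₂ + ε • (b₂ - b₁) ∈ closure Ω

lemma FRel.symm {Ω : Set (Euc 2)} {b₁ b₂ : Euc 2} (h : FRel Ω b₁ b₂) : FRel Ω b₂ b₁ := by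
  obtain ⟨ε, hε, h1, h2⟩ := h
  refine ⟨ε, hε, ?_, ?_⟩
  · convert h2 using 1; module
  · convert h1 using 1; module

lemma FRel.eq_of_ext {Ω : Set (Euc 2)} {b₁ b₂ : Euc 2} (h : FRel Ω b₁ b₂) (h1 : b₁ ∈ closure Ω)
    (h2 : b₂ ∈ ExtPts Ω) : b₁ = b₂ := by
  obtain ⟨ε, hε, -, h3⟩ := h
  refine (ext_eq_of_comb h2 (a := ε / (1 + ε)) (b := 1 / (1 + ε)) (by positivity) (by positivity)
    (by field_simp; ring) h1 h3 ?_).1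
  match_scalars <;> field_simp <;> ring

lemma FRel.support {Ω : Set (Euc 2)} (hΩ : Dom Ω) {b₁ b₂ : Euc 2} (h : FRel Ω b₁ b₂)
    (hb : b₂ ∈ closure Ω) {f : Euc 2 →ᵃ[ℝ] ℝ} (hf : ∀ x ∈ Ω, 0 < f x) (h0 : f b₁ = 0) :
    f b₂ = 0 := by
  obtain ⟨ε, hε, h1, -⟩ := h
  have k1 := nonneg_closure hΩ hf h1
  have k2 := nonneg_closure hΩ hf hb
  rw [show b₁ - ε • (b₂ - b₁) = b₁ + ε • (b₁ - b₂) by module, aff_beyond, h0] at k1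
  nlinarith

lemma tendsto_gam (α β : Euc 2) : Filter.Tendsto (gam α β) Filter.atTop (nhds β) := by
  have h1 : Filter.Tendsto (fun t : ℝ => (1 + Real.exp t)⁻¹) Filter.atTop (nhds 0) :=
    (Filter.tendsto_atTop_add_const_left _ 1 Real.tendsto_exp_atTop).inv_tendsto_atTop
  have h2 : gam α β = fun t => β + (1 + Real.exp t)⁻¹ • (α - β) := by
    funext t
    have := Real.exp_pos t
    rw [gam]; match_scalars <;> field_simp <;> ring
  rw [h2]
  have := (h1.smul_const (α - β)).const_add β
  simpa using this

/-- If two chords stay at bounded distance towards their second ends, these ends are equal or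
lie in the relative interior of a common boundary segment. -/
lemma rel_of_bounded {Ω : Set (Euc 2)} (hΩ : Dom Ω) {α₁ β₁ α₂ β₂ : Euc 2} {s₁ s₂ C : ℝ}
    (h₁ : IsChord Ω α₁ β₁) (h₂ : IsChord Ω α₂ β₂)
    (hC : ∀ t, 0 ≤ t → hilbertDist Ω (gam α₁ β₁ (t + s₁)) (gam α₂ β₂ (t + s₂)) ≤ C) :
    FRel Ω β₁ β₂ := by
  have T1 : Filter.Tendsto (fun t => gam α₁ β₁ (t + s₁)) Filter.atTop (nhds β₁) :=
    (tendsto_gam α₁ β₁).comp (Filter.tendsto_atTop_add_const_right _ s₁ Filter.tendsto_id)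
  have T2 : Filter.Tendsto (fun t => gam α₂ β₂ (t + s₂)) Filter.atTop (nhds β₂) :=
    (tendsto_gam α₂ β₂).comp (Filter.tendsto_atTop_add_const_right _ s₂ Filter.tendsto_id)
  refine ⟨Real.exp (-C), Real.exp_pos _, ?_, ?_⟩
  · refine isClosed_closure.mem_of_tendsto (T1.sub ((T2.sub T1).const_smul _)) ?_
    filter_upwards [Filter.eventually_ge_atTop 0] with t ht
    exact extend_mem_closure hΩ (h₁.gam_mem _) (h₂.gam_mem _) (hC t ht)
  · refine isClosed_closure.mem_of_tendsto (T2.add ((T2.sub T1).const_smul _)) ?_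
    filter_upwards [Filter.eventually_ge_atTop 0] with t ht
    have h3 := hC t ht
    rw [hilbertDist_comm hΩ (h₁.gam_mem _) (h₂.gam_mem _)] at h3
    have := extend_mem_closure hΩ (h₂.gam_mem _) (h₁.gam_mem _) h3
    convert this using 1
    module

/-- Chords towards a common boundary point stay at bounded distance: push by a homothety centred
at that point. -/
lemma pencil_bounded {Ω : Set (Euc 2)} (hΩ : Dom Ω) {b₁ b₂ e : Euc 2} (h₁ : IsChord Ω b₁ e)
    (h₂ : IsChord Ω b₂ e) {t : ℝ} (ht : 0 ≤ t) :
    hilbertDist Ω (gam b₁ e t) (gam b₂ e t) ≤ hilbertDist Ω (gam b₁ e 0) (gam b₂ e 0) := by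
  have hE := Real.exp_pos t
  have hE1 : 1 ≤ Real.exp t := Real.one_le_exp ht
  set k := 2 / (1 + Real.exp t) with hk
  have hk0 : 0 < k := by positivity
  have hk1 : k ≤ 1 := by rw [hk, div_le_one (by positivity)]; linarith
  have hg : ∀ b, gam b e t = AffineMap.homothety e k (gam b e 0) := by
    intro b
    rw [AffineMap.homothety_apply, gam, gam, Real.exp_zero, vsub_eq_sub, vadd_eq_add, hk]
    match_scalars <;> field_simp <;> ring
  rw [hg, hg]
  have hm : MapsTo (AffineMap.homothety e k) Ω Ω := by
    intro z hz
    rcases hk1.eq_or_lt with h | h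
    · rw [h]; simpa using hz
    · refine hΩ.mem_of_openSegment hz (frontier_subset_closure h₁.2.1)
        ⟨k, 1 - k, hk0, by linarith, by ring, ?_⟩
      rw [AffineMap.homothety_apply, vsub_eq_sub, vadd_eq_add]
      module
  exact contraction hΩ hΩ hm (fun _ => 1) (fun _ _ => one_pos)
    (fun f => ⟨f.comp (AffineMap.homothety e k), fun x _ => by simp⟩) (h₁.gam_mem 0) (h₂.gam_mem 0)

/-- Ends of the images of two chords towards a common boundary point `e`. -/
lemma IsoPair.rel_of_pencil {Ω Ω' : Set (Euc 2)} {τ σ : Euc 2 → Euc 2} (hp : IsoPair Ω Ω' τ σ)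
    {b₁ b₂ e c₁ a₁ c₂ a₂ : Euc 2} (h₁ : IsChord Ω b₁ e) (h₂ : IsChord Ω b₂ e)
    (m₁ : Maps Ω' τ b₁ e c₁ a₁) (m₂ : Maps Ω' τ b₂ e c₂ a₂) : FRel Ω' a₁ a₂ := by
  obtain ⟨k₁, s₁, e₁⟩ := m₁
  obtain ⟨k₂, s₂, e₂⟩ := m₂
  refine rel_of_bounded hp.dom' (s₁ := s₁) (s₂ := s₂)
    (C := hilbertDist Ω (gam b₁ e 0) (gam b₂ e 0)) k₁ k₂ fun t ht => ?_
  rw [← e₁, ← e₂, hp.dist _ (h₁.gam_mem _) _ (h₂.gam_mem _)]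
  exact pencil_bounded hp.dom h₁ h₂ ht

lemma gam_mem_closure {Ω : Set (Euc 2)} (hΩ : Dom Ω) {α β : Euc 2} (hα : α ∈ closure Ω)
    (hβ : β ∈ closure Ω) (t : ℝ) : gam α β t ∈ closure Ω :=
  hΩ.convex.closure.openSegment_subset hα hβ (gam_mem_openSegment α β t)

/-- Chords from a common point to the relative interior of a boundary segment stay at bounded
distance. -/
lemma bounded_of_rel {Ω : Set (Euc 2)} (hΩ : Dom Ω) {e b₁ b₂ : Euc 2} (h₁ : IsChord Ω e b₁)
    (h₂ : IsChord Ω e b₂) (h : FRel Ω b₁ b₂) :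
    ∃ C, ∀ t, hilbertDist Ω (gam e b₁ t) (gam e b₂ t) ≤ C := by
  obtain ⟨ε, hε, k1, k2⟩ := h
  have he := frontier_subset_closure h₁.1
  refine ⟨_, fun t => hilbertDist_le_of_comb hΩ (μ := ε / (1 + ε)) (ν := ε / (1 + ε))
    (h₁.gam_mem t) (h₂.gam_mem t) (gam_mem_closure hΩ he k2 t) (gam_mem_closure hΩ he k1 t)
    (by positivity) ?_ (by positivity) ?_ ?_ ?_⟩
  · rw [div_le_one (by positivity)]; linarith
  · rw [div_le_one (by positivity)]; linarith
  · have := Real.exp_pos t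
    simp only [gam]
    match_scalars <;> field_simp <;> ring
  · have := Real.exp_pos t
    simp only [gam]
    match_scalars <;> field_simp <;> ring

/-- Images of the other ends of two chords ending at `e`, when these other ends lie in the
relative interior of a common boundary segment. -/
lemma IsoPair.rel_of_rel {Ω Ω' : Set (Euc 2)} {τ σ : Euc 2 → Euc 2} (hp : IsoPair Ω Ω' τ σ)
    {b₁ b₂ e c₁ a₁ c₂ a₂ : Euc 2} (h₁ : IsChord Ω b₁ e) (h₂ : IsChord Ω b₂ e) (h : FRel Ω b₁ b₂)
    (m₁ : Maps Ω' τ b₁ e c₁ a₁) (m₂ : Maps Ω' τ b₂ e c₂ a₂) : FRel Ω' c₁ c₂ := by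
  obtain ⟨C, hC⟩ := bounded_of_rel hp.dom h₁.symm h₂.symm h
  obtain ⟨k₁, s₁, e₁⟩ := m₁.swap
  obtain ⟨k₂, s₂, e₂⟩ := m₂.swap
  refine rel_of_bounded hp.dom' (s₁ := s₁) (s₂ := s₂) (C := C) k₁ k₂ fun t ht => ?_
  rw [← e₁, ← e₂, hp.dist _ (h₁.symm.gam_mem _) _ (h₂.symm.gam_mem _)]
  exact hC t

/-! ### Areas, and four extreme points in convex position -/

/-- Twice the signed area of the triangle `a b c`. -/
def area (a b c : Euc 2) : ℝ := (b 0 - a 0) * (c 1 - a 1) - (b 1 - a 1) * (c 0 - a 0)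

lemma exists_of_area_eq_zero {a b c : Euc 2} (hab : a ≠ b) (h : area a b c = 0) :
    ∃ k : ℝ, c = a + k • (b - a) := by
  have hv : b 0 - a 0 ≠ 0 ∨ b 1 - a 1 ≠ 0 := by
    by_contra! hh
    exact hab (euc_ext (by linarith [hh.1]) (by linarith [hh.2]))
  rw [area] at h
  rcases hv with hv | hv
  · refine ⟨(c 0 - a 0) / (b 0 - a 0), euc_ext ?_ ?_⟩
    · simp; field_simp; ring
    · simp; field_simp; linarith
  · refine ⟨(c 1 - a 1) / (b 1 - a 1), euc_ext ?_ ?_⟩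
    · simp; field_simp; linarith
    · simp; field_simp; ring

lemma on_chord {Ω : Set (Euc 2)} (hΩ : Dom Ω) {α β x : Euc 2} (hc : IsChord Ω α β) (hx : x ∈ Ω)
    (h : area α β x = 0) : ∃ t, x = gam α β t := by
  obtain ⟨k, e⟩ := exists_of_area_eq_zero (hc.ne hΩ) h
  have hβ := frontier_subset_closure hc.2.1
  have hα := frontier_subset_closure hc.1
  apply exists_gam
  have h0 : 0 < k := by
    by_contra! hk
    apply hΩ.not_mem_of_frontier hc.1
    rcases hk.eq_or_lt with rfl | hk
    · simpa [e] using hx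
    · refine hΩ.mem_of_openSegment hx hβ ⟨1 / (1 - k), -k / (1 - k), ?_, ?_, ?_, ?_⟩
      · exact div_pos one_pos (by linarith)
      · exact div_pos (by linarith) (by linarith)
      · have : 1 - k ≠ 0 := by linarith
        field_simp; ring
      · have : 1 - k ≠ 0 := by linarith
        rw [e]; match_scalars <;> field_simp <;> ring
  have h1 : k < 1 := by
    by_contra! hk
    apply hΩ.not_mem_of_frontier hc.2.1
    rcases hk.eq_or_lt with rfl | hk
    · simpa [e] using hx
    · refine hΩ.mem_of_openSegment hx hα ⟨1 / k, 1 - 1 / k, by positivity, ?_, by ring, ?_⟩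
      · rw [sub_pos, div_lt_one h0]; exact hk
      · rw [e]; match_scalars <;> field_simp <;> ring
  exact ⟨1 - k, k, by linarith, h0, by ring, by rw [e]; module⟩

lemma ext_area_ne {Ω : Set (Euc 2)} {a b c : Euc 2} (ha : a ∈ ExtPts Ω) (hb : b ∈ ExtPts Ω)
    (hc : c ∈ ExtPts Ω) (hab : a ≠ b) (hac : a ≠ c) (hbc : b ≠ c) : area a b c ≠ 0 := by
  intro h
  obtain ⟨k, e⟩ := exists_of_area_eq_zero hab h
  rcases lt_trichotomy k 0 with hk | rfl | hk
  · have h1 : 0 < 1 - k := by linarith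
    exact hac (ext_eq_of_comb ha (a := 1 / (1 - k)) (b := -k / (1 - k)) (by positivity)
      (div_pos (by linarith) h1) (by field_simp; ring) hc.1 hb.1
      (by rw [e]; match_scalars <;> field_simp <;> ring)).1.symm
  · exact hac (by simpa using e.symm)
  · rcases lt_trichotomy k 1 with hk1 | rfl | hk1
    · exact hac (ext_eq_of_comb hc (a := 1 - k) (b := k) (by linarith) hk (by ring) ha.1 hb.1
        (by rw [e]; module)).1
    · exact hbc (by simpa using e.symm)
    · exact hbc (ext_eq_of_comb hb (a := 1 / k) (b := 1 - 1 / k) (by positivity)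
        (by rw [sub_pos, div_lt_one hk]; exact hk1) (by ring) hc.1 ha.1
        (by rw [e]; match_scalars <;> field_simp <;> ring)).1.symm

lemma ext_not_tri {Ω : Set (Euc 2)} (hΩ : Dom Ω) {e p q r : Euc 2} (he : e ∈ ExtPts Ω)
    (hp : p ∈ closure Ω) (hq : q ∈ closure Ω) (hr : r ∈ closure Ω) {a b c d : ℝ} (ha : 0 < a)
    (hb : 0 < b) (hc : 0 < c) (hd : a + b + c + d = 0)
    (h : a • p + b • q + c • r + d • e = 0) : p = e := by
  obtain rfl : d = -(a + b + c) := by linarith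
  have hz : (b / (b + c)) • q + (c / (b + c)) • r ∈ closure Ω :=
    hΩ.convex.closure hq hr (by positivity) (by positivity) (by field_simp)
  have e2 : e = (a + b + c)⁻¹ • (a • p + b • q + c • r) := by
    have : a • p + b • q + c • r = (a + b + c) • e := by
      rw [← sub_eq_zero, ← h]; module
    rw [this, smul_smul, inv_mul_cancel₀ (by positivity), one_smul]
  refine (ext_eq_of_comb he (a := a / (a + b + c)) (b := (b + c) / (a + b + c)) (by positivity)
    (by positivity) (by field_simp; ring) hp hz ?_).1
  rw [e2]
  match_scalars <;> field_simp

lemma cross_aux {Ω : Set (Euc 2)} (hΩ : Dom Ω) {p q r s : Euc 2}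
    (hp : p ∈ closure Ω) (hq : q ∈ closure Ω) (hr : r ∈ closure Ω) (hs : s ∈ closure Ω)
    (hA : area p q r ≠ 0) {a b c d : ℝ} (ha : 0 < a)
    (hb : b < 0) (hc : 0 < c) (hd : d < 0) (hsum : a + b + c + d = 0)
    (h : a • p + b • q + c • r + d • s = 0) :
    ∃ x ∈ Ω, x ∈ openSegment ℝ p r ∧ x ∈ openSegment ℝ q s := by
  have hac : 0 < a + c := by linarith
  have h1 : (a / (a + c)) • p + (c / (a + c)) • r ∈ openSegment ℝ p r :=
    ⟨_, _, by positivity, by positivity, by field_simp, rfl⟩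
  have h2 : (a / (a + c)) • p + (c / (a + c)) • r ∈ openSegment ℝ q s := by
    refine ⟨-b / (a + c), -d / (a + c), div_pos (by linarith) hac, div_pos (by linarith) hac, ?_, ?_⟩
    · field_simp; linarith
    · have : (a / (a + c)) • p + (c / (a + c)) • r - ((-b / (a + c)) • q + (-d / (a + c)) • s) =
        (a + c)⁻¹ • (a • p + b • q + c • r + d • s) := by module
      rw [h, smul_zero, sub_eq_zero] at this
      exact this.symm
  refine ⟨_, ?_, h1, h2⟩
  set x := (a / (a + c)) • p + (c / (a + c)) • r
  have hxc : x ∈ closure Ω := hΩ.convex.closure.openSegment_subset hp hr h1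
  by_contra hx
  obtain ⟨f, hf, hfx⟩ := exists_support hΩ (β := x) (by rw [hΩ.frontier_eq]; exact ⟨hxc, hx⟩)
  have key : ∀ y z, y ∈ closure Ω → z ∈ closure Ω → x ∈ openSegment ℝ y z → f y = 0 ∧ f z = 0 := by
    rintro y z hy hz ⟨u, v, hu, hv, huv, e⟩
    have e1 := congrArg f e
    rw [aff_comb f huv, hfx] at e1
    have fy := nonneg_closure hΩ hf hy
    have fz := nonneg_closure hΩ hf hz
    have := mul_nonneg hu.le fy
    have := mul_nonneg hv.le fz
    constructor
    · have : u * f y = 0 := by linarith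
      exact (mul_eq_zero.1 this).resolve_left hu.ne'
    · have : v * f z = 0 := by linarith
      exact (mul_eq_zero.1 this).resolve_left hv.ne'
  obtain ⟨fp, fr⟩ := key p r hp hr h1
  obtain ⟨fq, -⟩ := key q s hq hs h2
  have hφ : f.linear ≠ 0 := by
    intro h
    obtain ⟨y, hy⟩ := hΩ.nonempty
    have k1 := hf y hy
    rw [show y = p + (y - p) by module, aff_add, fp, h] at k1
    simp at k1
  have lq : f.linear (q - p) = 0 := by
    rw [show q = p + (q - p) by module, aff_add, fp] at fq
    simpa using fq
  have lr : f.linear (r - p) = 0 := by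
    rw [show r = p + (r - p) by module, aff_add, fp] at fr
    simpa using fr
  have hqp : q - p ≠ 0 := by
    intro h
    apply hA
    rw [sub_eq_zero.1 h, area]; ring
  obtain ⟨k, hk⟩ := parallel_of_ker f.linear hφ hqp lq lr
  apply hA
  have k0 := congrArg (fun z : Euc 2 => z 0) hk
  have k1 := congrArg (fun z : Euc 2 => z 1) hk
  simp at k0 k1
  rw [area, k0, k1]; ring

/-- Among four distinct extreme points, the two diagonals of the quadrilateral they span cross
inside the domain. -/
lemma exists_cross {Ω : Set (Euc 2)} (hΩ : Dom Ω) {P : Euc 2 → Prop} (hP : ∀ e, P e → e ∈ ExtPts Ω)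
    {e₁ e₂ e₃ e₄ : Euc 2} (h₁ : P e₁) (h₂ : P e₂) (h₃ : P e₃) (h₄ : P e₄) (h12 : e₁ ≠ e₂)
    (h13 : e₁ ≠ e₃) (h14 : e₁ ≠ e₄) (h23 : e₂ ≠ e₃) (h24 : e₂ ≠ e₄) (h34 : e₃ ≠ e₄) :
    ∃ a b c d, P a ∧ P b ∧ P c ∧ P d ∧ a ≠ b ∧ a ≠ c ∧ a ≠ d ∧ b ≠ c ∧ b ≠ d ∧ c ≠ d ∧
      ∃ x ∈ Ω, x ∈ openSegment ℝ a c ∧ x ∈ openSegment ℝ b d := by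
  have hs : area e₂ e₃ e₄ - area e₁ e₃ e₄ + area e₁ e₂ e₄ - area e₁ e₂ e₃ = 0 := by
    simp only [area]; ring
  have hw : area e₂ e₃ e₄ • e₁ - area e₁ e₃ e₄ • e₂ + area e₁ e₂ e₄ • e₃ - area e₁ e₂ e₃ • e₄
      = 0 := by
    apply euc_ext <;> simp [area] <;> ring
  have n1 := ext_area_ne (hP _ h₂) (hP _ h₃) (hP _ h₄) h23 h24 h34
  have n2 := ext_area_ne (hP _ h₁) (hP _ h₃) (hP _ h₄) h13 h14 h34
  have n3 := ext_area_ne (hP _ h₁) (hP _ h₂) (hP _ h₄) h12 h14 h24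
  have n4 := ext_area_ne (hP _ h₁) (hP _ h₂) (hP _ h₃) h12 h13 h23
  have n3' := ext_area_ne (hP _ h₁) (hP _ h₃) (hP _ h₂) h13 h12 h23.symm
  -- the case of a positive first weight
  have main : ∀ w₁ w₂ w₃ w₄ : ℝ, 0 < w₁ → w₂ ≠ 0 → w₃ ≠ 0 → w₄ ≠ 0 → w₁ + w₂ + w₃ + w₄ = 0 →
      w₁ • e₁ + w₂ • e₂ + w₃ • e₃ + w₄ • e₄ = 0 →
      ∃ a b c d, P a ∧ P b ∧ P c ∧ P d ∧ a ≠ b ∧ a ≠ c ∧ a ≠ d ∧ b ≠ c ∧ b ≠ d ∧ c ≠ d ∧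
      ∃ x ∈ Ω, x ∈ openSegment ℝ a c ∧ x ∈ openSegment ℝ b d := by
    intro w₁ w₂ w₃ w₄ p1 q2 q3 q4 hsum hcomb
    have c1 := (hP _ h₁).1
    have c2 := (hP _ h₂).1
    have c3 := (hP _ h₃).1
    have c4 := (hP _ h₄).1
    rcases lt_or_gt_of_ne q2 with p2 | p2 <;> rcases lt_or_gt_of_ne q3 with p3 | p3 <;>
      rcases lt_or_gt_of_ne q4 with p4 | p4
    · exact absurd (ext_not_tri hΩ (hP _ h₁) c2 c3 c4 (neg_pos.2 p2) (neg_pos.2 p3) (neg_pos.2 p4)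
        (d := -w₁) (by linarith) (by rw [← neg_eq_zero, ← hcomb]; module)) h12.symm
    · -- `e₁, e₄` against `e₂, e₃`
      obtain ⟨x, hx, k1, k2⟩ := cross_aux hΩ c1 c2 c4 c3 n3 p1 p2 p4 p3 (by linarith)
        (by rw [← hcomb]; module)
      exact ⟨_, _, _, _, h₁, h₂, h₄, h₃, h12, h14, h13, h24, h23, h34.symm, x, hx, k1, k2⟩
    · obtain ⟨x, hx, k1, k2⟩ := cross_aux hΩ c1 c2 c3 c4 n4 p1 p2 p3 p4 (by linarith)
        (by rw [← hcomb])
      exact ⟨_, _, _, _, h₁, h₂, h₃, h₄, h12, h13, h14, h23, h24, h34, x, hx, k1, k2⟩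
    · exact absurd (ext_not_tri hΩ (hP _ h₂) c1 c3 c4 p1 p3 p4
        (d := w₂) (by linarith) (by rw [← hcomb]; module)) h12
    · obtain ⟨x, hx, k1, k2⟩ := cross_aux hΩ c1 c3 c2 c4 n3' p1 p3 p2 p4 (by linarith)
        (by rw [← hcomb]; module)
      exact ⟨_, _, _, _, h₁, h₃, h₂, h₄, h13, h12, h14, h23.symm, h34, h24, x, hx, k1, k2⟩
    · exact absurd (ext_not_tri hΩ (hP _ h₃) c1 c2 c4 p1 p2 p4
        (d := w₃) (by linarith) (by rw [← hcomb]; module)) h13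
    · exact absurd (ext_not_tri hΩ (hP _ h₄) c1 c2 c3 p1 p2 p3
        (d := w₄) (by linarith) (by rw [← hcomb])) h14
    · linarith
  rcases lt_or_gt_of_ne n1 with h | h
  · exact main (-area e₂ e₃ e₄) (area e₁ e₃ e₄) (-area e₁ e₂ e₄) (area e₁ e₂ e₃) (by linarith) n2
      (neg_ne_zero.2 n3) n4 (by linarith) (by rw [← neg_eq_zero, ← hw]; module)
  · exact main (area e₂ e₃ e₄) (-area e₁ e₃ e₄) (area e₁ e₂ e₄) (-area e₁ e₂ e₃) h
      (neg_ne_zero.2 n2) n3 (neg_ne_zero.2 n4) (by linarith) (by rw [← hw]; module)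

/-! ### Four focusing points determine a projective map -/

/-- Homogeneous coordinates of a point of the plane. -/
def hom (x : Euc 2) : Fin 3 → ℝ := ![x 0, x 1, 1]

/-- `τ` sends every chord ending at `e` to a chord ending at `e'`. -/
def Foc (Ω Ω' : Set (Euc 2)) (τ : Euc 2 → Euc 2) (e e' : Euc 2) : Prop :=
  ∀ b, IsChord Ω b e → ∃ c, Maps Ω' τ b e c e'

lemma hom_ne_zero (x : Euc 2) : hom x ≠ 0 := fun h =>
  one_ne_zero (α := ℝ) (by simpa [hom] using congrFun h 2)

lemma hom_comb {a b : ℝ} (h : a + b = 1) (x y : Euc 2) :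
    hom (a • x + b • y) = a • hom x + b • hom y := by
  ext i; fin_cases i <;> simp [hom, h]

lemma hom_gam (α β : Euc 2) (t : ℝ) :
    hom (gam α β t) = (1 + Real.exp t)⁻¹ • (hom α + Real.exp t • hom β) := by
  have := Real.exp_pos t
  rw [gam, smul_add, smul_smul, hom_comb (by field_simp), smul_add, smul_smul]

lemma hom_indep {a b c : Euc 2} (h : area a b c ≠ 0) {r s t : ℝ}
    (e : r • hom a + s • hom b + t • hom c = 0) : r = 0 ∧ s = 0 ∧ t = 0 := by
  have e0 := congrFun e 0
  have e1 := congrFun e 1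
  have e2 := congrFun e 2
  simp [hom] at e0 e1 e2
  have hs : s * area a b c = 0 := by
    rw [area]
    linear_combination (c 1 - a 1) * e0 - (c 0 - a 0) * e1 +
      (-(c 1 - a 1) * a 0 + (c 0 - a 0) * a 1) * e2
  have ht : t * area a b c = 0 := by
    rw [area]
    linear_combination (-(b 1 - a 1)) * e0 + (b 0 - a 0) * e1 +
      ((b 1 - a 1) * a 0 - (b 0 - a 0) * a 1) * e2
  have hs' := (mul_eq_zero.1 hs).resolve_right h
  have ht' := (mul_eq_zero.1 ht).resolve_right h
  exact ⟨by linarith, hs', ht'⟩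

lemma exists_linear {a b c a' b' c' : Euc 2} (h : area a b c ≠ 0) (h' : area a' b' c' ≠ 0)
    {r s t : ℝ} (hr : r ≠ 0) (hs : s ≠ 0) (ht : t ≠ 0) :
    ∃ G : (Fin 3 → ℝ) ≃ₗ[ℝ] (Fin 3 → ℝ), G (hom a) = r • hom a' ∧ G (hom b) = s • hom b' ∧
      G (hom c) = t • hom c' := by
  have i1 : LinearIndependent ℝ ![hom a, hom b, hom c] := by
    rw [Fintype.linearIndependent_iff]
    intro g hg
    simp only [Fin.sum_univ_three] at hg
    obtain ⟨k0, k1, k2⟩ := hom_indep h hg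
    intro i; fin_cases i <;> assumption
  have i2 : LinearIndependent ℝ ![r • hom a', s • hom b', t • hom c'] := by
    rw [Fintype.linearIndependent_iff]
    intro g hg
    simp only [Fin.sum_univ_three] at hg
    simp only [Matrix.cons_val, smul_smul] at hg
    obtain ⟨k0, k1, k2⟩ := hom_indep h' hg
    intro i; fin_cases i
    · exact (mul_eq_zero.1 k0).resolve_right hr
    · exact (mul_eq_zero.1 k1).resolve_right hs
    · exact (mul_eq_zero.1 k2).resolve_right ht
  let B1 := basisOfLinearIndependentOfCardEqFinrank i1 (by simp)
  let B2 := basisOfLinearIndependentOfCardEqFinrank i2 (by simp)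
  have key : ∀ i, B1.equiv B2 (Equiv.refl _) (![hom a, hom b, hom c] i) =
      ![r • hom a', s • hom b', t • hom c'] i := by
    intro i
    have e1 : B1 i = ![hom a, hom b, hom c] i := by simp [B1]
    have e2 : B2 i = ![r • hom a', s • hom b', t • hom c'] i := by simp [B2]
    rw [← e1, ← e2, Module.Basis.equiv_apply]; rfl
  exact ⟨B1.equiv B2 (Equiv.refl _), key 0, key 1, key 2⟩

lemma exists_coord {p a b : Euc 2} (h : area p a b ≠ 0) (x : Euc 2) :
    ∃ α β : ℝ, x = p + α • (p - a) + β • (p - b) := by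
  refine ⟨-area p x b / area p a b, -area p a x / area p a b, euc_ext ?_ ?_⟩ <;>
  · simp only [PiLp.add_apply, PiLp.smul_apply, smul_eq_mul, PiLp.sub_apply]
    field_simp
    simp only [area]; ring

/-- `G` represents `τ` at `x` in homogeneous coordinates. -/
def Good (G : (Fin 3 → ℝ) ≃ₗ[ℝ] (Fin 3 → ℝ)) (τ : Euc 2 → Euc 2) (x : Euc 2) : Prop :=
  ∃ ρ : ℝ, ρ ≠ 0 ∧ G (hom x) = ρ • hom (τ x)

lemma good_gam {G : (Fin 3 → ℝ) ≃ₗ[ℝ] (Fin 3 → ℝ)} {τ : Euc 2 → Euc 2} {α β α' β' : Euc 2}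
    {r c : ℝ} (hr : r ≠ 0) (hα : G (hom α) = r • hom α')
    (hβ : G (hom β) = (r * Real.exp c) • hom β') {t : ℝ}
    (hτ : τ (gam α β t) = gam α' β' (t + c)) : Good G τ (gam α β t) := by
  have h1 := Real.exp_pos t
  have h2 := Real.exp_pos (t + c)
  refine ⟨(1 + Real.exp t)⁻¹ * r * (1 + Real.exp (t + c)), by positivity, ?_⟩
  rw [hτ, hom_gam, hom_gam, map_smul, map_add, map_smul, hα, hβ]
  match_scalars
  · field_simp
  · rw [Real.exp_add] at h2 ⊢; field_simp

/-- If `G` represents `τ` at a point `q` on the segment from `x` to a focusing point `e`, then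
`τ x` lies on the image under `G` of the line through `x` and `e`. -/
lemma pencil_span {Ω Ω' : Set (Euc 2)} (hΩ : Dom Ω) {τ : Euc 2 → Euc 2}
    {G : (Fin 3 → ℝ) ≃ₗ[ℝ] (Fin 3 → ℝ)} {e e' x q : Euc 2} (hF : Foc Ω Ω' τ e e')
    (he : e ∈ frontier Ω) {ρ : ℝ} (hρ : ρ ≠ 0) (hG : G (hom e) = ρ • hom e') (hx : x ∈ Ω)
    (hq : q ∈ openSegment ℝ x e) (hgq : Good G τ q) :
    ∃ A B : ℝ, hom (τ x) = A • G (hom x) + B • G (hom e) := by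
  obtain ⟨b, s, hc, rfl⟩ := hΩ.exists_chord_from he hx
  obtain ⟨c, -, k, hk⟩ := hF b hc
  obtain ⟨t, rfl⟩ : ∃ t, q = gam b e t := by
    apply exists_gam
    obtain ⟨a1, a2, h1, h2, h3, rfl⟩ := hq
    obtain ⟨c1, c2, k1, k2, k3, k4⟩ := gam_mem_openSegment b e s
    refine ⟨a1 * c1, a1 * c2 + a2, by positivity, by positivity, ?_, ?_⟩
    · linear_combination h3 + a1 * k3
    · rw [← k4]; module
  obtain ⟨a1, a2, h1, h2, h3, h4⟩ := hq
  obtain ⟨μ, hμ, hgq⟩ := hgq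
  rw [hk] at hgq ⊢
  have p1 := Real.exp_pos (s + k)
  have p2 := Real.exp_pos (t + k)
  have e1 : hom (gam c e' (s + k)) = ((1 + Real.exp (t + k)) / (1 + Real.exp (s + k))) •
      hom (gam c e' (t + k)) +
      ((Real.exp (s + k) - Real.exp (t + k)) / (1 + Real.exp (s + k))) • hom e' := by
    rw [hom_gam, hom_gam]
    match_scalars <;> field_simp <;> ring
  have e2 : hom (gam c e' (t + k)) = μ⁻¹ • (a1 • G (hom (gam b e s)) + a2 • G (hom e)) := by
    rw [← map_smul, ← map_smul, ← map_add, ← hom_comb h3, h4, hgq, smul_smul, inv_mul_cancel₀ hμ,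
      one_smul]
  have e3 : hom e' = ρ⁻¹ • G (hom e) := by rw [hG, smul_smul, inv_mul_cancel₀ hρ, one_smul]
  refine ⟨(1 + Real.exp (t + k)) / (1 + Real.exp (s + k)) * μ⁻¹ * a1,
    (1 + Real.exp (t + k)) / (1 + Real.exp (s + k)) * μ⁻¹ * a2 +
    (Real.exp (s + k) - Real.exp (t + k)) / (1 + Real.exp (s + k)) * ρ⁻¹, ?_⟩
  rw [e1, e2, e3]
  module

/-- `G` represents `τ` at `x` as soon as it does so on the lines joining `p` to the focusing points
`e` and `f`, where `x` is in the sector at `p` opposite to the one spanned by `e` and `f`. -/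
lemma good_sector {Ω Ω' : Set (Euc 2)} (hΩ : Dom Ω) {τ : Euc 2 → Euc 2}
    {G : (Fin 3 → ℝ) ≃ₗ[ℝ] (Fin 3 → ℝ)} {e e' f f' p x : Euc 2} (hF : Foc Ω Ω' τ e e')
    (hF' : Foc Ω Ω' τ f f') (he : e ∈ frontier Ω) (hf : f ∈ frontier Ω) {ρ ρ' : ℝ} (hρ : ρ ≠ 0)
    (hG : G (hom e) = ρ • hom e') (hρ' : ρ' ≠ 0) (hG' : G (hom f) = ρ' • hom f')
    (hA : area p e f ≠ 0) (hx : x ∈ Ω) {a b : ℝ} (ha : 0 < a) (hb : 0 < b)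
    (hxe : x = p + a • (p - e) + b • (p - f))
    (h1 : ∀ k : ℝ, p + k • (p - e) ∈ Ω → Good G τ (p + k • (p - e)))
    (h2 : ∀ k : ℝ, p + k • (p - f) ∈ Ω → Good G τ (p + k • (p - f))) : Good G τ x := by
  have q1 : p + (b / (1 + a)) • (p - f) ∈ openSegment ℝ x e := by
    refine ⟨1 / (1 + a), a / (1 + a), by positivity, by positivity, by field_simp, ?_⟩
    rw [hxe]
    match_scalars <;> field_simp <;> ring
  have q2 : p + (a / (1 + b)) • (p - e) ∈ openSegment ℝ x f := by
    refine ⟨1 / (1 + b), b / (1 + b), by positivity, by positivity, by field_simp, ?_⟩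
    rw [hxe]
    match_scalars <;> field_simp <;> ring
  have g1 := h2 _ (hΩ.mem_of_openSegment hx (frontier_subset_closure he) q1)
  have g2 := h1 _ (hΩ.mem_of_openSegment hx (frontier_subset_closure hf) q2)
  obtain ⟨A, B, hAB⟩ := pencil_span hΩ hF he hρ hG hx q1 g1
  obtain ⟨C, D, hCD⟩ := pencil_span hΩ hF' hf hρ' hG' hx q2 g2
  have hA' : area x e f ≠ 0 := by
    have : area x e f = (1 + a + b) * area p e f := by
      rw [hxe]; simp [area]; ring
    rw [this]; positivity
  have hz : G ((A - C) • hom x + B • hom e + (-D) • hom f) = 0 := by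
    simp only [map_add, map_smul]
    rw [← sub_eq_zero.2 (hAB.symm.trans hCD)]
    module
  rw [LinearEquiv.map_eq_zero_iff] at hz
  obtain ⟨-, hB, -⟩ := hom_indep hA' hz
  rw [hB, zero_smul, add_zero] at hAB
  have hA0 : A ≠ 0 := by
    rintro rfl
    exact hom_ne_zero (τ x) (by simpa using hAB)
  exact ⟨A⁻¹, inv_ne_zero hA0, by rw [hAB, smul_smul, inv_mul_cancel₀ hA0, one_smul]⟩

lemma foc_diag {Ω Ω' : Set (Euc 2)} (hΩ' : Dom Ω') {τ : Euc 2 → Euc 2} {e e' f f' : Euc 2}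
    (hc : IsChord Ω e f) (hF : Foc Ω Ω' τ e e') (hF' : Foc Ω Ω' τ f f') : Maps Ω' τ e f e' f' := by
  obtain ⟨c, hm⟩ := hF _ hc.symm
  obtain ⟨d, hm'⟩ := hF' _ hc
  obtain ⟨rfl, rfl⟩ := hm.swap.unique hΩ' hm'
  exact hm'

/-- An isometry with four focusing points is given by a linear map in homogeneous coordinates. -/
lemma IsoPair.linear_of_four {Ω Ω' : Set (Euc 2)} {τ σ : Euc 2 → Euc 2} (hp : IsoPair Ω Ω' τ σ)
    {e₁ e₂ e₃ e₄ : Euc 2} (h₁ : e₁ ∈ ExtPts Ω ∧ ∃ e', Foc Ω Ω' τ e₁ e')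
    (h₂ : e₂ ∈ ExtPts Ω ∧ ∃ e', Foc Ω Ω' τ e₂ e') (h₃ : e₃ ∈ ExtPts Ω ∧ ∃ e', Foc Ω Ω' τ e₃ e')
    (h₄ : e₄ ∈ ExtPts Ω ∧ ∃ e', Foc Ω Ω' τ e₄ e') (h12 : e₁ ≠ e₂)
    (h13 : e₁ ≠ e₃) (h14 : e₁ ≠ e₄) (h23 : e₂ ≠ e₃) (h24 : e₂ ≠ e₄) (h34 : e₃ ≠ e₄) :
    ∃ G : (Fin 3 → ℝ) ≃ₗ[ℝ] (Fin 3 → ℝ), ∀ x ∈ Ω, Good G τ x := by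
  obtain ⟨a, b, c, d, ⟨xa, a', fa⟩, ⟨xb, b', fb⟩, ⟨xc, c', fc⟩, ⟨xd, d', fd⟩, hab, hac, had, hbc,
    hbd, hcd, p, hpΩ, hpac, hpbd⟩ := exists_cross hp.dom
      (P := fun e => e ∈ ExtPts Ω ∧ ∃ e', Foc Ω Ω' τ e e') (fun _ h => h.1) h₁ h₂ h₃ h₄
      h12 h13 h14 h23 h24 h34
  clear h₁ h₂ h₃ h₄ h12 h13 h14 h23 h24 h34
  have ra := ext_mem_frontier hp.dom xa
  have rb := ext_mem_frontier hp.dom xb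
  have rc := ext_mem_frontier hp.dom xc
  have rd := ext_mem_frontier hp.dom xd
  have hac' := hp.dom.isChord_of_mem ra rc hpΩ hpac
  have hbd' := hp.dom.isChord_of_mem rb rd hpΩ hpbd
  obtain ⟨ka, u, mu⟩ := foc_diag hp.dom' hac' fa fc
  obtain ⟨kb, v, mv⟩ := foc_diag hp.dom' hbd' fb fd
  obtain ⟨t, et⟩ := exists_gam hpac
  obtain ⟨r, er⟩ := exists_gam hpbd
  have hτ1 : τ p = gam a' c' (t + u) := by rw [et, mu]
  have hτ2 : τ p = gam b' d' (r + v) := by rw [er, mv]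
  have nacb := ext_area_ne xa xc xb hac hab hbc.symm
  have pu := Real.exp_pos (t + u)
  have pt := Real.exp_pos t
  have pv := Real.exp_pos (r + v)
  have pr := Real.exp_pos r
  -- the images of the two diagonals are not contained in one line
  have nacb' : area a' c' b' ≠ 0 := by
    intro h0
    have key : ∀ w, area a' c' (gam b' d' w) = 0 := by
      have e1 : gam b' d' (r + v) = gam a' c' (t + u) := hτ2.symm.trans hτ1
      have e0 : gam a' c' (t + u) = (1 + Real.exp (t + u))⁻¹ • (a' + Real.exp (t + u) • c') := rfl
      have e2 : area a' c' (gam b' d' (r + v)) = 0 := by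
        rw [e1, e0]; simp [area]; field_simp; ring
      have e3 : ∀ w, area a' c' (gam b' d' w) =
          (1 + Real.exp w)⁻¹ * (area a' c' b' + Real.exp w * area a' c' d') := by
        intro w
        have := Real.exp_pos w
        simp [area, gam]; field_simp; ring
      rw [e3, h0, zero_add, ← mul_assoc] at e2
      have e4 := (mul_eq_zero.1 e2).resolve_left (by positivity)
      intro w
      rw [e3, h0, e4]; ring
    obtain ⟨w, hw⟩ := on_chord hp.dom' ka (kb.gam_mem (r + v + 1)) (key _)
    have hne : w ≠ t + u := by
      rintro rfl
      rw [← hτ1, hτ2] at hw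
      have := gam_injective hp.dom' kb hw
      linarith
    rcases lt_or_gt_of_ne hne with hlt | hlt
    · have e1 : gam a' c' w = gam d' b' (-(r + v + 1)) := by rw [gam_symm b' d', neg_neg, hw]
      have e2 : gam a' c' (t + u) = gam d' b' (-(r + v)) := by
        rw [gam_symm b' d', neg_neg, ← hτ1, hτ2]
      obtain ⟨f1, f2⟩ := chord_unique hp.dom' ka kb.symm hlt (by linarith) e1 e2
      have e5 : gam a c (-u) = gam d b v := by
        rw [← hp.left _ (hac'.gam_mem _), ← hp.left _ (hbd'.symm.gam_mem v), mu, gam_symm b d, mv,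
          f1, f2, gam_symm b' d']
        congr 2; ring
      have e6 : gam a c (-u + 1) = gam d b (v + 1) := by
        rw [← hp.left _ (hac'.gam_mem _), ← hp.left _ (hbd'.symm.gam_mem (v + 1)), mu,
          gam_symm b d, mv, f1, f2, gam_symm b' d']
        congr 2; ring
      exact had (chord_unique hp.dom hac' hbd'.symm (by linarith) (by linarith) e5 e6).1
    · obtain ⟨f1, f2⟩ := chord_unique hp.dom' ka kb hlt (by linarith : r + v < r + v + 1)
        (hτ1.symm.trans hτ2) hw.symm
      have e5 : gam a c (-u) = gam b d (-v) := by
        rw [← hp.left _ (hac'.gam_mem _), ← hp.left _ (hbd'.gam_mem (-v)), mu, mv, f1, f2]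
        congr 2; ring
      have e6 : gam a c (-u + 1) = gam b d (-v + 1) := by
        rw [← hp.left _ (hac'.gam_mem _), ← hp.left _ (hbd'.gam_mem (-v + 1)), mu, mv, f1, f2]
        congr 2; ring
      exact hab (chord_unique hp.dom hac' hbd' (by linarith) (by linarith) e5 e6).1
  -- the scale at `b` is chosen so that `G` sends `p` to `τ p` and hence `d` to `d'`
  set μ := (1 + Real.exp (t + u)) / (1 + Real.exp t) with hμ
  set x₂ := (1 + Real.exp r) * μ / (1 + Real.exp (r + v)) with hx₂
  have hx₂0 : x₂ ≠ 0 := by positivity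
  obtain ⟨G, Ga, Gc, Gb⟩ := exists_linear nacb nacb' (one_ne_zero (α := ℝ)) (Real.exp_ne_zero u) hx₂0
  have Gp : G (hom p) = μ • hom (τ p) := by
    rw [hτ1, et, hom_gam, hom_gam, map_smul, map_add, map_smul, Ga, Gc, hμ]
    match_scalars
    · field_simp
    · rw [Real.exp_add] at pu ⊢; field_simp
  have Gd : G (hom d) = (x₂ * Real.exp v) • hom d' := by
    have e1 : hom d = (Real.exp r)⁻¹ • ((1 + Real.exp r) • hom p - hom b) := by
      rw [er, hom_gam]; match_scalars <;> field_simp <;> ring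
    rw [e1, map_smul, map_sub, map_smul, Gp, Gb, hτ2, hom_gam, hx₂]
    rw [Real.exp_add] at pv ⊢
    match_scalars <;> field_simp <;> ring
  have D1 : ∀ q ∈ Ω, area a c q = 0 → Good G τ q := by
    intro q hq h0
    obtain ⟨w, rfl⟩ := on_chord hp.dom hac' hq h0
    exact good_gam one_ne_zero Ga (by rw [one_mul]; exact Gc) (mu w)
  have D2 : ∀ q ∈ Ω, area b d q = 0 → Good G τ q := by
    intro q hq h0
    obtain ⟨w, rfl⟩ := on_chord hp.dom hbd' hq h0
    exact good_gam hx₂0 Gb Gd (mv w)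
  have epa : ∀ k : ℝ, area a c (p + k • (p - a)) = 0 := by
    intro k; rw [et]; simp [area, gam]; field_simp; ring
  have epb : ∀ k : ℝ, area b d (p + k • (p - b)) = 0 := by
    intro k; rw [er]; simp [area, gam]; field_simp; ring
  have epc : p - a = (-Real.exp t) • (p - c) := by
    rw [et, gam]; match_scalars <;> field_simp <;> ring
  have epd : p - b = (-Real.exp r) • (p - d) := by
    rw [er, gam]; match_scalars <;> field_simp <;> ring
  have epc' : p - c = (-(Real.exp t)⁻¹) • (p - a) := by
    rw [epc, smul_smul]; field_simp; simp
  have epd' : p - d = (-(Real.exp r)⁻¹) • (p - b) := by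
    rw [epd, smul_smul]; field_simp; simp
  have npab : area p a b ≠ 0 := by
    have : area p a b = -(Real.exp t / (1 + Real.exp t)) * area a c b := by
      rw [et]; simp [area, gam]; field_simp; ring
    rw [this]; exact mul_ne_zero (neg_ne_zero.2 (by positivity)) nacb
  have ncoord : ∀ z w : Euc 2, area p z w = (p - z) 0 * (p - w) 1 - (p - z) 1 * (p - w) 0 := by
    intro z w; simp [area]; ring
  have npad : area p a d ≠ 0 := by
    rw [ncoord] at npab ⊢
    rw [epd']; simp at npab ⊢
    intro h; apply npab
    field_simp at h; linarith
  have npcb : area p c b ≠ 0 := by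
    rw [ncoord] at npab ⊢
    rw [epc']; simp at npab ⊢
    intro h; apply npab
    field_simp at h; linarith
  have npcd : area p c d ≠ 0 := by
    rw [ncoord] at npab ⊢
    rw [epc', epd']; simp at npab ⊢
    intro h; apply npab
    field_simp at h; linarith
  have Da : ∀ k : ℝ, p + k • (p - a) ∈ Ω → Good G τ (p + k • (p - a)) :=
    fun k hk => D1 _ hk (epa k)
  have Db : ∀ k : ℝ, p + k • (p - b) ∈ Ω → Good G τ (p + k • (p - b)) :=
    fun k hk => D2 _ hk (epb k)
  have Dc : ∀ k : ℝ, p + k • (p - c) ∈ Ω → Good G τ (p + k • (p - c)) := by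
    intro k hk; rw [epc', smul_smul] at hk ⊢; exact Da _ hk
  have Dd : ∀ k : ℝ, p + k • (p - d) ∈ Ω → Good G τ (p + k • (p - d)) := by
    intro k hk; rw [epd', smul_smul] at hk ⊢; exact Db _ hk
  have hxv : x₂ * Real.exp v ≠ 0 := mul_ne_zero hx₂0 (Real.exp_ne_zero v)
  refine ⟨G, fun x hx => ?_⟩
  obtain ⟨α, β, hαβ⟩ : ∃ α β : ℝ, x = p + α • (p - a) + β • (p - b) := by
    exact exists_coord npab x
  rcases lt_trichotomy α 0 with hα | rfl | hα
  · have hα' : 0 < α * -Real.exp t := mul_pos_of_neg_of_neg hα (by linarith)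
    rcases lt_trichotomy β 0 with hβ | rfl | hβ
    · have hβ' : 0 < β * -Real.exp r := mul_pos_of_neg_of_neg hβ (by linarith)
      rw [epc, epd, smul_smul, smul_smul] at hαβ
      exact good_sector hp.dom fc fd rc rd (Real.exp_ne_zero u) Gc hxv Gd npcd hx hα' hβ' hαβ Dc Dd
    · rw [zero_smul, add_zero] at hαβ
      rw [hαβ] at hx ⊢; exact Da _ hx
    · rw [epc, smul_smul] at hαβ
      exact good_sector hp.dom fc fb rc rb (Real.exp_ne_zero u) Gc hx₂0 Gb npcb hx hα' hβ hαβ Dc Db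
  · rw [zero_smul, add_zero] at hαβ
    rw [hαβ] at hx ⊢; exact Db _ hx
  · rcases lt_trichotomy β 0 with hβ | rfl | hβ
    · have hβ' : 0 < β * -Real.exp r := mul_pos_of_neg_of_neg hβ (by linarith)
      rw [epd, smul_smul] at hαβ
      exact good_sector hp.dom fa fd ra rd one_ne_zero Ga hxv Gd npad hx hα hβ' hαβ Da Dd
    · rw [zero_smul, add_zero] at hαβ
      rw [hαβ] at hx ⊢; exact Da _ hx
    · exact good_sector hp.dom fa fb ra rb one_ne_zero Ga hx₂0 Gb npab hx hα hβ hαβ Da Db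

/-! ### Triangles and the number of extreme points -/

lemma area_comb {a b x y : Euc 2} {r s : ℝ} (h : r + s = 1) :
    area a b (r • x + s • y) = r * area a b x + s * area a b y := by
  obtain rfl : r = 1 - s := by linarith
  simp [area]; ring

lemma area_left (a b : Euc 2) : area a b a = 0 := by simp [area]

lemma area_right (a b : Euc 2) : area a b b = 0 := by simp [area]; ring

lemma area_of_mem {a b x : Euc 2} (h : x ∈ openSegment ℝ a b) : area a b x = 0 := by
  obtain ⟨r, s, -, -, hrs, rfl⟩ := h
  rw [area_comb hrs, area_left, area_right]; ring

lemma continuous_area (a b : Euc 2) : Continuous (area a b) := by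
  unfold area; fun_prop

lemma avoid_line {U : Set (Euc 2)} (hU : IsOpen U) (hne : U.Nonempty) {a b : Euc 2} (hab : a ≠ b) :
    ∃ x ∈ U, area a b x ≠ 0 := by
  obtain ⟨x, hx⟩ := hne
  by_cases h : area a b x = 0
  swap; · exact ⟨x, hx, h⟩
  let n : Euc 2 := !₂[-(b 1 - a 1), b 0 - a 0]
  have hc : Continuous (fun r : ℝ => x + r • n) := by fun_prop
  have hev : ∀ᶠ r in nhds (0 : ℝ), x + r • n ∈ U :=
    hc.continuousAt.eventually (hU.mem_nhds (by simpa using hx))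
  obtain ⟨ε, hε, hb⟩ := Metric.eventually_nhds_iff.1 hev
  refine ⟨x + (ε / 2) • n, hb (by simp [abs_of_pos hε]; linarith), ?_⟩
  have e : area a b (x + (ε / 2) • n) = area a b x +
      (ε / 2) * ((b 0 - a 0) ^ 2 + (b 1 - a 1) ^ 2) := by
    simp [area, n]; ring
  rw [e, h, zero_add]
  refine (mul_pos (by positivity) ?_).ne'
  by_contra! hle
  have h0 : b 0 - a 0 = 0 := by nlinarith [sq_nonneg (b 0 - a 0), sq_nonneg (b 1 - a 1)]
  have h1 : b 1 - a 1 = 0 := by nlinarith [sq_nonneg (b 0 - a 0), sq_nonneg (b 1 - a 1)]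
  exact hab (euc_ext (by linarith) (by linarith))

/-- A nonempty open set is not covered by finitely many lines. -/
lemma avoid_lines (l : List (Euc 2 × Euc 2)) (hl : ∀ p ∈ l, p.1 ≠ p.2) {U : Set (Euc 2)}
    (hU : IsOpen U) (hne : U.Nonempty) : ∃ x ∈ U, ∀ p ∈ l, area p.1 p.2 x ≠ 0 := by
  induction l generalizing U with
  | nil => obtain ⟨x, hx⟩ := hne; exact ⟨x, hx, by simp⟩
  | cons p l ih =>
    obtain ⟨y, hy, hy'⟩ := avoid_line hU hne (hl p (by simp))
    obtain ⟨x, ⟨hx, hx'⟩, hx2⟩ := ih (fun q hq => hl q (by simp [hq]))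
      (U := U ∩ {x | area p.1 p.2 x ≠ 0})
      (hU.inter (isOpen_ne_fun (continuous_area _ _) continuous_const)) ⟨y, hy, hy'⟩
    refine ⟨x, hx, fun q hq => ?_⟩
    rcases List.mem_cons.1 hq with rfl | hq
    · exact hx'
    · exact hx2 q hq

/-- Infinitely many chords end at a given boundary point. -/
lemma exists_new_chord {Ω : Set (Euc 2)} (hΩ : Dom Ω) {e : Euc 2} (he : e ∈ frontier Ω)
    (l : List (Euc 2)) : ∃ b, IsChord Ω b e ∧ b ∉ l := by
  obtain ⟨x, hx, hx'⟩ := avoid_lines ((l.filter (fun b => b ≠ e)).map (fun b => (b, e)))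
    (by
      intro p hp
      simp only [List.mem_map, List.mem_filter, decide_eq_true_eq] at hp
      obtain ⟨b, ⟨-, hb⟩, rfl⟩ := hp
      exact hb) hΩ.isOpen hΩ.nonempty
  obtain ⟨b, t, hb, ht⟩ := hΩ.exists_chord_from he hx
  refine ⟨b, hb, fun hbl => hx' (b, e) ?_ ?_⟩
  · simp [hbl, hb.ne hΩ]
  · rw [ht]; exact area_of_mem (gam_mem_openSegment _ _ _)

lemma affineIndependent_of_area {a b c : Euc 2} (h : area a b c ≠ 0) :
    AffineIndependent ℝ ![a, b, c] := by
  rw [affineIndependent_iff]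
  intro s w hw hs i hi
  -- extend the weights by zero outside of `s`
  have e1 : ∑ i, (if i ∈ s then w i else 0) = 0 := by
    rw [Finset.sum_ite_mem, Finset.univ_inter, hw]
  have e2 : ∑ i, (if i ∈ s then w i else 0) • ![a, b, c] i = 0 := by
    simp only [ite_smul, zero_smul]
    rw [Finset.sum_ite_mem, Finset.univ_inter, hs]
  simp only [Fin.sum_univ_three] at e1 e2
  set w₀ := if 0 ∈ s then w 0 else 0 with hw₀
  set w₁ := if 1 ∈ s then w 1 else 0 with hw₁
  set w₂ := if 2 ∈ s then w 2 else 0 with hw₂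
  have e3 : w₀ • hom a + w₁ • hom b + w₂ • hom c = 0 := by
    have k0 := congrArg (fun z : Euc 2 => z 0) e2
    have k1 := congrArg (fun z : Euc 2 => z 1) e2
    simp only [Matrix.cons_val, PiLp.add_apply, PiLp.smul_apply, smul_eq_mul, PiLp.zero_apply]
      at k0 k1
    ext j; fin_cases j
    · simpa [hom] using k0
    · simpa [hom] using k1
    · simpa [hom] using e1
  obtain ⟨k0, k1, k2⟩ := hom_indep h e3
  fin_cases i
  · have hi : (0 : Fin 3) ∈ s := hi
    rw [hw₀, if_pos hi] at k0; exact k0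
  · have hi : (1 : Fin 3) ∈ s := hi
    rw [hw₁, if_pos hi] at k1; exact k1
  · have hi : (2 : Fin 3) ∈ s := hi
    rw [hw₂, if_pos hi] at k2; exact k2

/-- A domain with three corners whose pairwise midpoints are on the boundary is a triangle. -/
lemma triangle_of_edges {Ω : Set (Euc 2)} (hΩ : Dom Ω) {a b c : Euc 2} (ha : a ∈ closure Ω)
    (hb : b ∈ closure Ω) (hc : c ∈ closure Ω) (h : area a b c ≠ 0)
    (hab : (1 / 2 : ℝ) • a + (1 / 2 : ℝ) • b ∈ frontier Ω)
    (hac : (1 / 2 : ℝ) • a + (1 / 2 : ℝ) • c ∈ frontier Ω)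
    (hbc : (1 / 2 : ℝ) • b + (1 / 2 : ℝ) • c ∈ frontier Ω) : IsTriangleInterior Ω := by
  refine ⟨a, b, c, affineIndependent_of_area h, ?_⟩
  have edge : ∀ p q r : Euc 2, p ∈ closure Ω → q ∈ closure Ω → r ∈ closure Ω →
      (1 / 2 : ℝ) • p + (1 / 2 : ℝ) • q ∈ frontier Ω → ∀ u v w : ℝ, u + v + w = 1 →
      u • p + v • q + w • r ∈ Ω → 0 ≤ w := by
    intro p q r hp hq hr hpq u v w huvw hx
    obtain ⟨f, hf, h0⟩ := exists_support hΩ hpq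
    rw [aff_comb f (by norm_num)] at h0
    have k1 := nonneg_closure hΩ hf hp
    have k2 := nonneg_closure hΩ hf hq
    have k3 := nonneg_closure hΩ hf hr
    have fp : f p = 0 := by linarith
    have fq : f q = 0 := by linarith
    have k4 := hf _ hx
    have e : f (u • p + v • q + w • r) = u * f p + v * f q + w * f r := by
      rw [aff_apply f, aff_apply f p, aff_apply f q, aff_apply f r]
      simp only [map_add, map_smul, smul_eq_mul]
      linear_combination (-f 0) * huvw
    rw [e, fp, fq] at k4
    by_contra! hw
    nlinarith
  apply subset_antisymm
  · apply interior_maximal _ hΩ.isOpen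
    intro x hx
    obtain ⟨α, β, e⟩ := exists_coord h x
    have e' : x = (1 + α + β) • a + (-α) • b + (-β) • c := by rw [e]; module
    rw [e'] at hx
    have w1 := edge a b c ha hb hc hab _ _ _ (by ring) hx
    have w2 := edge a c b ha hc hb hac (1 + α + β) (-β) (-α) (by ring) (by convert hx using 1; module)
    have w3 := edge b c a hb hc ha hbc (-α) (-β) (1 + α + β) (by ring)
      (by convert hx using 1; module)
    rw [convexHull_insert (by simp), mem_convexJoin]
    refine ⟨a, rfl, ?_⟩
    rw [convexHull_pair, e']
    by_cases h0 : -α + -β = 0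
    · have hα : α = 0 := by linarith
      have hβ : β = 0 := by linarith
      exact ⟨b, left_mem_segment _ _ _, by simp [hα, hβ, left_mem_segment]⟩
    · have h1 : 0 < -α + -β := lt_of_le_of_ne (by linarith) (Ne.symm h0)
      refine ⟨(-α / (-α + -β)) • b + (-β / (-α + -β)) • c,
        ⟨_, _, by positivity, by positivity, by field_simp, rfl⟩,
        ⟨1 + α + β, -α + -β, w3, h1.le, by ring, ?_⟩⟩
      match_scalars <;> field_simp
  · rw [← hΩ.interior_closure]
    apply interior_mono
    exact convexHull_min (by simp [insert_subset_iff, ha, hb, hc]) hΩ.convex.closure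

lemma closure_subset_hull {Ω : Set (Euc 2)} (hΩ : Dom Ω) {S : Set (Euc 2)} (hS : S.Finite)
    (h : ExtPts Ω ⊆ S) : closure Ω ⊆ convexHull ℝ S := by
  rw [← closure_convexHull_extremePoints hΩ.isCompact_closure hΩ.convex.closure]
  exact (closure_mono (convexHull_mono h)).trans_eq (hS.isClosed_convexHull ℝ).closure_eq

/-- A domain which is not a triangle has at least four extreme points. -/
lemma exists_four_ext {Ω : Set (Euc 2)} (hΩ : Dom Ω) (htri : ¬ IsTriangleInterior Ω) :
    ∃ a b c d, a ∈ ExtPts Ω ∧ b ∈ ExtPts Ω ∧ c ∈ ExtPts Ω ∧ d ∈ ExtPts Ω ∧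
      a ≠ b ∧ a ≠ c ∧ a ≠ d ∧ b ≠ c ∧ b ≠ d ∧ c ≠ d := by
  have pair : ∀ a b : Euc 2, a ≠ b → ∃ c ∈ ExtPts Ω, c ≠ a ∧ c ≠ b := by
    intro a b hab
    by_contra! hcon
    have h1 := closure_subset_hull hΩ (S := {a, b}) (by simp) (by
      intro c hc
      by_cases h : c = a
      · simp [h]
      · simp [hcon c hc h])
    obtain ⟨x, hx, hx'⟩ := avoid_line hΩ.isOpen hΩ.nonempty hab
    have h2 := h1 (subset_closure hx)
    rw [convexHull_pair] at h2
    obtain ⟨r, s, -, -, hrs, rfl⟩ := h2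
    apply hx'
    rw [area_comb hrs, area_left, area_right]; ring
  obtain ⟨x, hx⟩ := hΩ.nonempty
  obtain ⟨y, hy⟩ := exists_ne x
  obtain ⟨a, ha, -, -⟩ := pair x y hy.symm
  obtain ⟨y, hy⟩ := exists_ne a
  obtain ⟨b, hb, hba, -⟩ := pair a y hy.symm
  obtain ⟨c, hc, hca, hcb⟩ := pair a b hba.symm
  by_contra! hcon
  refine htri ⟨a, b, c, affineIndependent_of_area (ext_area_ne ha hb hc hba.symm hca.symm hcb.symm),
    ?_⟩
  have h1 := closure_subset_hull hΩ (S := {a, b, c}) (by simp) (by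
      intro d hd
      by_contra hd'
      simp only [mem_insert_iff, mem_singleton_iff, not_or] at hd'
      exact Ne.symm hd'.2.2 (hcon a b c d ha hb hc hd hba.symm hca.symm (Ne.symm hd'.1) hcb.symm
        (Ne.symm hd'.2.1)))
  have h2 : convexHull ℝ {a, b, c} ⊆ closure Ω :=
    convexHull_min (by simp [insert_subset_iff, ha.1, hb.1, hc.1]) hΩ.convex.closure
  rw [← subset_antisymm h1 h2, hΩ.interior_closure]

/-! ### Extreme points are focusing -/

/-- The main step in excluding a nonfocusing end `c₀`: no chord of the pencil at `e` ends at a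
corner `p` of the edge containing the ends of the pencil at `c₀`. -/
lemma IsoPair.not_chord_corner {Ω Ω' : Set (Euc 2)} {τ σ : Euc 2 → Euc 2} (hp : IsoPair Ω Ω' τ σ)
    {e b₀ c₀ a₀ p : Euc 2} (he : e ∈ ExtPts Ω) (hc : IsChord Ω b₀ e)
    (hm : Maps Ω' τ b₀ e c₀ a₀) (hc₀ : c₀ ∈ ExtPts Ω')
    (H : ∀ a' e' b', IsChord Ω' a' c₀ → Maps Ω σ a' c₀ e' b' → b' ≠ p ∧
      (1 / 3 : ℝ) • p + (2 / 3 : ℝ) • b' ∈ frontier Ω ∧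
      FRel Ω b₀ ((1 / 3 : ℝ) • p + (2 / 3 : ℝ) • b')) : ¬ IsChord Ω p e := by
  intro hpe
  set x := gam p e 0 with hx
  have hxΩ : x ∈ Ω := hpe.gam_mem 0
  have hxe : x = (1 / 2 : ℝ) • p + (1 / 2 : ℝ) • e := by
    rw [hx, gam, Real.exp_zero]; module
  obtain ⟨a', t, ha', et⟩ := hp.dom'.exists_chord_from (ext_mem_frontier hp.dom' hc₀)
    (hp.maps x hxΩ)
  obtain ⟨e', b', m', -⟩ := hp.symm.exists_maps ha' (Or.inr hc₀)
  obtain ⟨hne, hfr, hrel⟩ := H a' e' b' ha' m'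
  set b'' := (1 / 3 : ℝ) • p + (2 / 3 : ℝ) • b' with hb''
  set y := (1 / 2 : ℝ) • x + (1 / 2 : ℝ) • b' with hy
  have hyΩ : y ∈ Ω := hp.dom.mem_of_openSegment hxΩ (frontier_subset_closure m'.1.2.1)
    ⟨1 / 2, 1 / 2, by norm_num, by norm_num, by norm_num, rfl⟩
  have hy1 : y ∈ openSegment ℝ b'' e := by
    refine ⟨3 / 4, 1 / 4, by norm_num, by norm_num, by norm_num, ?_⟩
    rw [hy, hb'', hxe]; module
  have hc'' := hp.dom.isChord_of_mem hfr hc.2.1 hyΩ hy1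
  obtain ⟨c'', a'', m'', -⟩ := hp.exists_maps hc'' (Or.inr he)
  obtain rfl : c'' = c₀ :=
    (hp.rel_of_rel hc hc'' hrel hm m'').symm.eq_of_ext (frontier_subset_closure m''.1.1) hc₀
  -- `y` lies on the chord `(e', b')` as well, since `x` does
  have hx2 : ∃ s, x = gam e' b' s := by
    obtain ⟨-, k, hk⟩ := m'
    exact ⟨t + k, by rw [← hk, ← et, hp.left x hxΩ]⟩
  obtain ⟨s, hs⟩ := hx2
  obtain ⟨r, hr⟩ : ∃ r, y = gam e' b' r := by
    apply exists_gam
    obtain ⟨c1, c2, k1, k2, k3, k4⟩ := gam_mem_openSegment e' b' s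
    refine ⟨1 / 2 * c1, 1 / 2 * c2 + 1 / 2, by positivity, by positivity, ?_, ?_⟩
    · linear_combination 1 / 2 * k3
    · rw [hy, hs, ← k4]; module
  obtain ⟨r', hr'⟩ := exists_gam hy1
  have i1 := Maps.inv hp.symm ha' m'
  have i2 := Maps.inv hp hc'' m''
  obtain ⟨-, k, hk⟩ := i1
  obtain ⟨-, k', hk'⟩ := m''.swap
  have e1 : gam a' c'' (r + k) = gam a'' c'' (-r' + k') := by
    rw [← hk, ← hk', ← hr, gam_symm b'' e, neg_neg, ← hr']
  obtain rfl := IsChord.end_unique hp.dom' ha' m''.1.symm e1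
  have := (m'.unique hp.dom i2.swap).2
  apply hne
  rw [hb''] at this
  have h3 : (1 / 3 : ℝ) • (b' - p) = 0 := by
    rw [← sub_eq_zero.2 this]; module
  rwa [smul_eq_zero_iff_right (by norm_num), sub_eq_zero] at h3

/-- If a chord `(b₀, e)` with `e` extreme is mapped to a chord `(c₀, a₀)` with `c₀` extreme, then
`c₀` is focusing for the inverse isometry, unless the domain is a triangle. -/
lemma IsoPair.focusing_other_end {Ω Ω' : Set (Euc 2)} {τ σ : Euc 2 → Euc 2}
    (hp : IsoPair Ω Ω' τ σ) (htri : ¬ IsTriangleInterior Ω) {e b₀ c₀ a₀ : Euc 2}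
    (he : e ∈ ExtPts Ω) (hc : IsChord Ω b₀ e) (hm : Maps Ω' τ b₀ e c₀ a₀)
    (hc₀ : c₀ ∈ ExtPts Ω') : ∃ z, Foc Ω' Ω σ c₀ z := by
  by_contra! hcon
  have hm₀ : Maps Ω σ a₀ c₀ e b₀ := (Maps.inv hp hc hm).swap
  have hch₀ : IsChord Ω' a₀ c₀ := hm.1.symm
  have rel : ∀ a' e' b', IsChord Ω' a' c₀ → Maps Ω σ a' c₀ e' b' → FRel Ω b₀ b' :=
    fun a' e' b' h m => hp.symm.rel_of_pencil hch₀ h hm₀ m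
  obtain ⟨a₁, e₁, b₁, hch₁, hm₁, hne⟩ : ∃ a' e' b', IsChord Ω' a' c₀ ∧ Maps Ω σ a' c₀ e' b' ∧
      b' ≠ b₀ := by
    by_contra! h
    refine hcon b₀ fun a' ha' => ?_
    obtain ⟨e', b', m, -⟩ := hp.symm.exists_maps ha' (Or.inr hc₀)
    obtain rfl := h a' e' b' ha' m
    exact ⟨_, m⟩
  set u := b₁ - b₀ with hu
  have hu0 : u ≠ 0 := sub_ne_zero.2 hne
  obtain ⟨f, hf, hf0⟩ := exists_support hp.dom hc.1
  have hφ : f.linear ≠ 0 := by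
    intro h
    obtain ⟨y, hy⟩ := hp.dom.nonempty
    have k1 := hf y hy
    rw [show y = b₀ + (y - b₀) by module, aff_add, hf0, h] at k1
    simp at k1
  have lin : ∀ b', f b' = 0 → f.linear (b' - b₀) = 0 := by
    intro b' h
    rw [show b' = b₀ + (b' - b₀) by module, aff_add, hf0] at h
    simpa using h
  have hlu : f.linear u = 0 :=
    lin _ ((rel _ _ _ hch₁ hm₁).support hp.dom (frontier_subset_closure hm₁.1.2.1) hf hf0)
  have f_line : ∀ r : ℝ, f (b₀ + r • u) = 0 := by
    intro r; rw [aff_add, hf0, map_smul, hlu]; simp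
  have hb₀c := frontier_subset_closure hc.1
  obtain ⟨r₂, hr₂, hq, hr₂m⟩ := hp.dom.exists_exit hb₀c hu0
  obtain ⟨r₁, hr₁, hpf, hr₁m⟩ := hp.dom.exists_exit hb₀c (neg_ne_zero.2 hu0)
  have hr₁m' : ∀ s : ℝ, b₀ + s • u ∈ closure Ω → -r₁ ≤ s := by
    intro s hs
    have := hr₁m (-s) (by rwa [smul_neg, neg_smul, neg_neg])
    linarith
  have hpf' : b₀ + (-r₁) • u ∈ frontier Ω := by rwa [smul_neg, ← neg_smul] at hpf
  -- the ends of the pencil at `c₀` lie strictly between the corners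
  have inside : ∀ a' e' b', IsChord Ω' a' c₀ → Maps Ω σ a' c₀ e' b' →
      ∃ r : ℝ, b' = b₀ + r • u ∧ -r₁ < r ∧ r < r₂ := by
    intro a' e' b' ha' m
    have hb'c := frontier_subset_closure m.1.2.1
    obtain ⟨r, hr⟩ := parallel_of_ker f.linear hφ hu0 hlu
      (lin b' ((rel _ _ _ ha' m).support hp.dom hb'c hf hf0))
    have hr' : b' = b₀ + r • u := by rw [← hr]; module
    refine ⟨r, hr', ?_⟩
    have key : ∀ k : ℝ, r ≠ k → FRel Ω (b₀ + k • u) b' → -r₁ < r ∧ r < r₂ := by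
      rintro k hk ⟨ε, hε, h1, h2⟩
      rw [hr', show b₀ + k • u - ε • (b₀ + r • u - (b₀ + k • u)) = b₀ + (k - ε * (r - k)) • u by
        module] at h1
      rw [hr', show b₀ + r • u + ε • (b₀ + r • u - (b₀ + k • u)) = b₀ + (r + ε * (r - k)) • u by
        module] at h2
      have i1 := hr₁m' _ h1
      have i2 := hr₁m' _ h2
      have i3 := hr₂m _ h1
      have i4 := hr₂m _ h2
      rcases lt_or_gt_of_ne hk with h | h
      · have := mul_pos hε (sub_pos.2 h)
        constructor <;> nlinarith
      · have := mul_pos hε (sub_pos.2 h)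
        constructor <;> nlinarith
    by_cases h0 : r = 0
    · apply key 1 (by rw [h0]; norm_num)
      rw [show b₀ + (1 : ℝ) • u = b₁ by rw [hu]; module]
      exact hp.symm.rel_of_pencil hch₁ ha' hm₁ m
    · apply key 0 h0
      rw [zero_smul, add_zero]
      exact rel _ _ _ ha' m
  obtain ⟨r0, hr0, l1, l2⟩ := inside _ _ _ hch₀ hm₀
  obtain rfl : r0 = 0 := by
    have : r0 • u = 0 := by simpa using hr0.symm
    exact (smul_eq_zero.1 this).resolve_right hu0
  have seg : ∀ s : ℝ, -r₁ ≤ s → s ≤ r₂ → b₀ + s • u ∈ closure Ω := by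
    intro s h1 h2
    have hd : 0 < r₁ + r₂ := by linarith
    have := hp.dom.convex.closure (frontier_subset_closure hpf') (frontier_subset_closure hq)
      (a := (r₂ - s) / (r₁ + r₂)) (b := (s + r₁) / (r₁ + r₂)) (div_nonneg (by linarith) hd.le)
      (div_nonneg (by linarith) hd.le) (by field_simp; ring)
    convert this using 1
    match_scalars <;> field_simp <;> ring
  have front : ∀ s : ℝ, -r₁ ≤ s → s ≤ r₂ → b₀ + s • u ∈ frontier Ω := by
    intro s h1 h2
    rw [hp.dom.frontier_eq]
    refine ⟨seg s h1 h2, fun h => ?_⟩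
    have := hf _ h
    rw [f_line] at this
    exact lt_irrefl _ this
  have frel : ∀ s : ℝ, -r₁ < s → s < r₂ → FRel Ω b₀ (b₀ + s • u) := by
    intro s h1 h2
    obtain ⟨δ, hδ, d1, d2, d3, d4⟩ : ∃ δ : ℝ, 0 < δ ∧ δ ≤ r₁ ∧ δ ≤ r₂ ∧ δ ≤ s + r₁ ∧ δ ≤ r₂ - s := by
      refine ⟨min (min r₁ r₂) (min (s + r₁) (r₂ - s)), ?_, ?_, ?_, ?_, ?_⟩
      · refine lt_min (lt_min ?_ ?_) (lt_min ?_ ?_) <;> linarith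
      · exact (min_le_left _ _).trans (min_le_left _ _)
      · exact (min_le_left _ _).trans (min_le_right _ _)
      · exact (min_le_right _ _).trans (min_le_left _ _)
      · exact (min_le_right _ _).trans (min_le_right _ _)
    have hs1 : 0 < 1 + |s| := by positivity
    have hb : |δ / (1 + |s|) * s| ≤ δ := by
      rw [abs_mul, abs_div, abs_of_pos hδ, abs_of_pos hs1, div_mul_eq_mul_div, div_le_iff₀ hs1]
      nlinarith [abs_nonneg s]
    obtain ⟨b1, b2⟩ := abs_le.1 hb
    refine ⟨δ / (1 + |s|), by positivity, ?_, ?_⟩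
    · convert seg (-(δ / (1 + |s|) * s)) (by linarith) (by linarith) using 1; module
    · convert seg (s + (δ / (1 + |s|) * s)) (by linarith) (by linarith) using 1; module
  have no1 : ¬ IsChord Ω (b₀ + (-r₁) • u) e := by
    apply hp.not_chord_corner he hc hm hc₀
    intro a' e' b' ha' m
    obtain ⟨r, rfl, i1, i2⟩ := inside _ _ _ ha' m
    have e1 : (1 / 3 : ℝ) • (b₀ + (-r₁) • u) + (2 / 3 : ℝ) • (b₀ + r • u) =
      b₀ + (1 / 3 * (-r₁) + 2 / 3 * r) • u := by module
    rw [e1]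
    refine ⟨fun h => ?_, front _ (by linarith) (by linarith), frel _ (by linarith) (by linarith)⟩
    have := smul_left_injective ℝ hu0 (add_left_cancel h)
    linarith
  have no2 : ¬ IsChord Ω (b₀ + r₂ • u) e := by
    apply hp.not_chord_corner he hc hm hc₀
    intro a' e' b' ha' m
    obtain ⟨r, rfl, i1, i2⟩ := inside _ _ _ ha' m
    have e1 : (1 / 3 : ℝ) • (b₀ + r₂ • u) + (2 / 3 : ℝ) • (b₀ + r • u) =
      b₀ + (1 / 3 * r₂ + 2 / 3 * r) • u := by module
    rw [e1]
    refine ⟨fun h => ?_, front _ (by linarith) (by linarith), frel _ (by linarith) (by linarith)⟩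
    have := smul_left_injective ℝ hu0 (add_left_cancel h)
    linarith
  have mid : ∀ p ∈ frontier Ω, ¬ IsChord Ω p e →
      (1 / 2 : ℝ) • p + (1 / 2 : ℝ) • e ∈ frontier Ω := by
    intro p hp1 hp2
    have hms : (1 / 2 : ℝ) • p + (1 / 2 : ℝ) • e ∈ openSegment ℝ p e :=
      ⟨1 / 2, 1 / 2, by norm_num, by norm_num, by norm_num, rfl⟩
    rw [hp.dom.frontier_eq]
    refine ⟨hp.dom.convex.closure.openSegment_subset (frontier_subset_closure hp1) he.1 hms,
      fun h => hp2 (hp.dom.isChord_of_mem hp1 hc.2.1 h hms)⟩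
  refine htri (triangle_of_edges hp.dom (frontier_subset_closure hpf') (frontier_subset_closure hq)
    he.1 ?_ ?_ (mid _ hpf' no1) (mid _ hq no2))
  · intro h0
    obtain ⟨k, hk⟩ := exists_of_area_eq_zero (by
      intro h
      have := smul_left_injective ℝ hu0 (add_left_cancel h)
      linarith) h0
    have fe : f e = 0 := by
      rw [hk, show b₀ + (-r₁) • u + k • (b₀ + r₂ • u - (b₀ + (-r₁) • u)) =
        b₀ + (-r₁ + k * (r₂ + r₁)) • u by module, f_line]
    have := hf _ (hc.gam_mem 0)
    rw [aff_gam, hf0, fe] at this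
    simp at this
  · convert front ((r₂ - r₁) / 2) (by linarith) (by linarith) using 1
    module

lemma continuous_hom : Continuous hom := by
  refine continuous_pi fun i => ?_
  fin_cases i
  · simp only [hom]; simp; fun_prop
  · simp only [hom]; simp; fun_prop
  · simp only [hom]; simp; fun_prop

/-- A linear map representing an isometry on the domain also represents it, up to a possibly zero
scalar, at the end point of a chord that is mapped to a chord. -/
lemma good_end {Ω Ω' : Set (Euc 2)} {τ : Euc 2 → Euc 2} {G : (Fin 3 → ℝ) ≃ₗ[ℝ] (Fin 3 → ℝ)}
    (hG : ∀ x ∈ Ω, Good G τ x) {α β α' β' : Euc 2} (hc : IsChord Ω α β)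
    (hm : Maps Ω' τ α β α' β') : ∃ r : ℝ, G (hom β) = r • hom β' := by
  obtain ⟨-, k, hk⟩ := hm
  have hGc : Continuous G := LinearMap.continuous_of_finiteDimensional G.toLinearMap
  have T1 : Filter.Tendsto (fun t => G (hom (gam α β t))) Filter.atTop (nhds (G (hom β))) :=
    ((hGc.comp continuous_hom).tendsto β).comp (tendsto_gam α β)
  have T2 : Filter.Tendsto (fun t => hom (gam α' β' (t + k))) Filter.atTop (nhds (hom β')) :=
    (continuous_hom.tendsto β').comp ((tendsto_gam α' β').comp
      (Filter.tendsto_atTop_add_const_right _ k Filter.tendsto_id))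
  refine ⟨G (hom β) 2, ?_⟩
  ext i
  have S1 := (tendsto_pi_nhds.1 T1) i
  have S2 := ((tendsto_pi_nhds.1 T1) 2).mul ((tendsto_pi_nhds.1 T2) i)
  refine tendsto_nhds_unique S1 (S2.congr fun t => ?_)
  obtain ⟨ρ, -, h⟩ := hG _ (hc.gam_mem t)
  rw [h, hk]
  simp [hom]

/-- Every extreme point of a domain other than a triangle is focusing. -/
lemma IsoPair.focusing {Ω Ω' : Set (Euc 2)} {τ σ : Euc 2 → Euc 2}
    (hp : IsoPair Ω Ω' τ σ) (htri : ¬ IsTriangleInterior Ω) {e : Euc 2}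
    (he : e ∈ ExtPts Ω) : ∃ e', Foc Ω Ω' τ e e' := by
  by_contra! hcon
  have hm : ∀ b, ∃ c a, IsChord Ω b e → Maps Ω' τ b e c a ∧ c ∈ ExtPts Ω' := by
    intro b
    by_cases hb : IsChord Ω b e
    swap; · exact ⟨b, b, fun h => absurd h hb⟩
    obtain ⟨c, a, m, h⟩ := hp.exists_maps hb (Or.inr he)
    refine ⟨c, a, fun _ => ⟨m, h.resolve_right fun ha => hcon a fun b' hb' => ?_⟩⟩
    obtain ⟨c', a', m', -⟩ := hp.exists_maps hb' (Or.inr he)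
    obtain rfl := (hp.rel_of_pencil hb' hb m' m).eq_of_ext (frontier_subset_closure m'.1.2.1) ha
    exact ⟨_, m'⟩
  choose c a hca using hm
  have foc : ∀ b, IsChord Ω b e → Foc Ω' Ω σ (c b) b := by
    intro b hb
    obtain ⟨m, hc⟩ := hca b hb
    obtain ⟨z, hz⟩ := hp.focusing_other_end htri he hb m hc
    obtain ⟨w, mw⟩ := hz _ m.1.symm
    obtain ⟨-, rfl⟩ := mw.unique hp.dom (Maps.inv hp hb m).swap
    exact hz
  have inj : ∀ b b', IsChord Ω b e → IsChord Ω b' e → c b = c b' → b = b' := by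
    intro b b' hb hb' h
    have f1 := foc b hb
    have f2 := foc b' hb'
    rw [← h] at f2
    obtain ⟨w, mw⟩ := f1 _ (hca b hb).1.1.symm
    obtain ⟨w', mw'⟩ := f2 _ (hca b hb).1.1.symm
    exact (mw.unique hp.dom mw').2
  have hef := ext_mem_frontier hp.dom he
  obtain ⟨b₁, h₁, -⟩ := exists_new_chord hp.dom hef []
  obtain ⟨b₂, h₂, n₂⟩ := exists_new_chord hp.dom hef [b₁]
  obtain ⟨b₃, h₃, n₃⟩ := exists_new_chord hp.dom hef [b₁, b₂]
  obtain ⟨b₄, h₄, n₄⟩ := exists_new_chord hp.dom hef [b₁, b₂, b₃]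
  simp only [List.mem_cons, List.not_mem_nil, or_false, not_or] at n₂ n₃ n₄
  obtain ⟨G, hG⟩ := hp.symm.linear_of_four ⟨(hca _ h₁).2, _, foc _ h₁⟩ ⟨(hca _ h₂).2, _, foc _ h₂⟩
    ⟨(hca _ h₃).2, _, foc _ h₃⟩ ⟨(hca _ h₄).2, _, foc _ h₄⟩
    (fun h => n₂ (inj _ _ h₁ h₂ h).symm) (fun h => n₃.1 (inj _ _ h₁ h₃ h).symm)
    (fun h => n₄.1 (inj _ _ h₁ h₄ h).symm) (fun h => n₃.2 (inj _ _ h₂ h₃ h).symm)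
    (fun h => n₄.2.1 (inj _ _ h₂ h₄ h).symm) (fun h => n₄.2.2 (inj _ _ h₃ h₄ h).symm)
  -- all chords of the pencil at `e` are mapped to chords ending at the preimage of `e` under `G`
  refine hcon (a b₁) fun b hb => ⟨c b, ?_⟩
  obtain ⟨m, -⟩ := hca b hb
  obtain ⟨m₁, -⟩ := hca b₁ h₁
  obtain ⟨r, hr⟩ := good_end hG m.1 (Maps.inv hp hb m)
  obtain ⟨r₁, hr₁⟩ := good_end hG m₁.1 (Maps.inv hp h₁ m₁)
  have hr0 : r ≠ 0 := by
    rintro rfl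
    rw [zero_smul, LinearEquiv.map_eq_zero_iff] at hr
    exact hom_ne_zero _ hr
  have e1 : r₁ • hom (a b) = r • hom (a b₁) := by
    apply G.injective
    rw [map_smul, map_smul, hr, hr₁, smul_smul, smul_smul, mul_comm]
  have e2 := congrFun e1 2
  simp [hom] at e2
  rw [e2] at e1
  have e3 := smul_right_injective _ hr0 e1
  have : a b = a b₁ := euc_ext (by simpa [hom] using congrFun e3 0) (by simpa [hom] using congrFun e3 1)
  rw [← this]; exact m

lemma IsoPair.linear {Ω Ω' : Set (Euc 2)} {τ σ : Euc 2 → Euc 2}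
    (hp : IsoPair Ω Ω' τ σ) (htri : ¬ IsTriangleInterior Ω) :
    ∃ G : (Fin 3 → ℝ) ≃ₗ[ℝ] (Fin 3 → ℝ), ∀ x ∈ Ω, Good G τ x := by
  obtain ⟨a, b, c, d, ha, hb, hc, hd, h1, h2, h3, h4, h5, h6⟩ := exists_four_ext hp.dom htri
  exact hp.linear_of_four ⟨ha, hp.focusing htri ha⟩ ⟨hb, hp.focusing htri hb⟩
    ⟨hc, hp.focusing htri hc⟩ ⟨hd, hp.focusing htri hd⟩ h1 h2 h3 h4 h5 h6

/-! ### The target is not a triangle -/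

/-- The image of the chord through `x` and the extreme point `e` has an extreme end `w`; the
pair `(τ x, w)` determines this chord. -/
lemma IsoPair.exists_ext_end {Ω Ω' : Set (Euc 2)} {τ σ : Euc 2 → Euc 2} (hp : IsoPair Ω Ω' τ σ)
    {e x : Euc 2} (he : e ∈ ExtPts Ω) (hx : x ∈ Ω) :
    ∃ w ∈ ExtPts Ω', ∃ z t b, IsChord Ω' z w ∧ τ x = gam z w t ∧ x ∈ openSegment ℝ b e ∧
      (Maps Ω σ z w b e ∨ Maps Ω σ z w e b) := by
  obtain ⟨b, s, hb, rfl⟩ := hp.dom.exists_chord_from (ext_mem_frontier hp.dom he) hx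
  obtain ⟨c, a, m, h⟩ := hp.exists_maps hb (Or.inr he)
  have hm' := Maps.inv hp hb m
  have hms := gam_mem_openSegment b e s
  obtain ⟨hch, k, hk⟩ := m
  rcases h with h | h
  · exact ⟨c, h, a, -(s + k), b, hch.symm, by rw [hk, gam_symm c a, neg_neg], hms, Or.inr hm'.swap⟩
  · exact ⟨a, h, c, _, b, hch, hk s, hms, Or.inl hm'⟩

/-- Pigeonhole: four chords through a generic point `x` would be determined by the three corners
of the target. -/
lemma IsoPair.not_triangle {Ω Ω' : Set (Euc 2)} {τ σ : Euc 2 → Euc 2}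
    (hp : IsoPair Ω Ω' τ σ) (htri : ¬ IsTriangleInterior Ω) : ¬ IsTriangleInterior Ω' := by
  rintro ⟨a, b, c, -, hΩ'⟩
  have hext : ExtPts Ω' ⊆ {a, b, c} := by
    have hcl : closure Ω' = convexHull ℝ {a, b, c} := by
      have hfin : ({a, b, c} : Set (Euc 2)).Finite := by simp
      have hne := hp.dom'.nonempty
      rw [hΩ'] at hne
      rw [hΩ', (convex_convexHull ℝ _).closure_interior_eq_closure_of_nonempty_interior hne,
        (hfin.isClosed_convexHull ℝ).closure_eq]
    rw [ExtPts, hcl]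
    exact extremePoints_convexHull_subset
  obtain ⟨e₁, e₂, e₃, e₄, h₁, h₂, h₃, h₄, h12, h13, h14, h23, h24, h34⟩ :=
    exists_four_ext hp.dom htri
  obtain ⟨x, hx, hx'⟩ := avoid_lines [(e₁, e₂), (e₁, e₃), (e₁, e₄), (e₂, e₃), (e₂, e₄), (e₃, e₄)]
    (by simp [h12, h13, h14, h23, h24, h34]) hp.dom.isOpen hp.dom.nonempty
  have area_swap : ∀ p q : Euc 2, area p q x = -area q p x := by intro p q; simp only [area]; ring
  simp only [List.mem_cons, List.not_mem_nil, or_false, forall_eq_or_imp, forall_eq] at hx'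
  obtain ⟨a12, a13, a14, a23, a24, a34⟩ := hx'
  let S : Finset (Euc 2) := {e₁, e₂, e₃, e₄}
  have hS : ∀ e ∈ S, e ∈ ExtPts Ω := by
    intro e he
    simp only [S, Finset.mem_insert, Finset.mem_singleton] at he
    rcases he with rfl | rfl | rfl | rfl <;> assumption
  have hS' : ∀ e ∈ S, ∀ f ∈ S, e ≠ f → area e f x ≠ 0 := by
    intro e he f hf hef
    simp only [S, Finset.mem_insert, Finset.mem_singleton] at he hf
    rcases he with rfl | rfl | rfl | rfl <;> rcases hf with rfl | rfl | rfl | rfl <;>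
      first
      | exact absurd rfl hef
      | assumption
      | (rw [area_swap]; exact neg_ne_zero.2 (by assumption))
  have hw : ∀ e, ∃ w, e ∈ S → w ∈ ExtPts Ω' ∧ ∃ z t b, IsChord Ω' z w ∧ τ x = gam z w t ∧
      x ∈ openSegment ℝ b e ∧ (Maps Ω σ z w b e ∨ Maps Ω σ z w e b) := by
    intro e
    by_cases he : e ∈ S
    · obtain ⟨w, h1, h2⟩ := hp.exists_ext_end (hS e he) hx
      exact ⟨w, fun _ => ⟨h1, h2⟩⟩
    · exact ⟨e, fun h => absurd h he⟩
  choose w hw using hw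
  obtain ⟨e, he, f, hf, hef, hwef⟩ := Finset.exists_ne_map_eq_of_card_lt_of_maps_to
    (s := S) (t := {a, b, c}) (f := w) (by
      have h4 : S.card = 4 := by simp [S, h12, h13, h14, h23, h24, h34]
      rw [h4]
      exact Nat.lt_succ_of_le Finset.card_le_three) (by
      intro e he
      have := hext (hw e he).1
      simpa using this)
  obtain ⟨-, z, t, p, hz, ht, hxp, hmp⟩ := hw e he
  obtain ⟨-, z', t', q, hz', ht', hxq, hmq⟩ := hw f hf
  rw [← hwef] at hz' ht' hmq
  obtain rfl := IsChord.end_unique hp.dom' hz hz' (ht.symm.trans ht')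
  have bad : ∀ p : Euc 2, x ∈ openSegment ℝ p e → p ≠ f := by
    rintro p hxp rfl
    exact hS' _ hf _ he (Ne.symm hef) (area_of_mem hxp)
  rcases hmp with m | m <;> rcases hmq with hm' | hm'
  · exact hef (m.unique hp.dom hm').2
  · exact bad p hxp (m.unique hp.dom hm').1
  · exact bad p hxp (m.unique hp.dom hm').2
  · exact hef (m.unique hp.dom hm').1

/-! ### Projective maps and the conclusion -/

lemma snoc_eq_hom (x : Euc 2) : (Fin.snoc (fun i => x i) 1 : Fin (2 + 1) → ℝ) = hom x := by
  ext i; fin_cases i <;> simp [hom, Fin.snoc]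

lemma chart_eq (x : Euc 2) : chart x = Projectivization.mk ℝ (hom x) (hom_ne_zero x) := by
  unfold chart
  congr 1
  exact snoc_eq_hom x

lemma chart_injective : Function.Injective (chart (n := 2)) := by
  intro x y h
  rw [chart_eq, chart_eq, Projectivization.mk_eq_mk_iff'] at h
  obtain ⟨a, ha⟩ := h
  have h2 : a = 1 := by simpa [hom] using congrFun ha 2
  subst h2
  exact (euc_ext (by simpa [hom] using congrFun ha 0) (by simpa [hom] using congrFun ha 1)).symm

lemma chart_eq_projMap_iff (G : (Fin 3 → ℝ) ≃ₗ[ℝ] (Fin 3 → ℝ)) (x y : Euc 2) :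
    chart y = projMap (n := 2) G (chart x) ↔ ∃ ρ : ℝ, ρ ≠ 0 ∧ G (hom x) = ρ • hom y := by
  rw [chart_eq, chart_eq, projMap, Projectivization.map_mk, eq_comm,
    Projectivization.mk_eq_mk_iff']
  constructor
  · rintro ⟨a, ha⟩
    refine ⟨a, ?_, ha.symm⟩
    rintro rfl
    apply hom_ne_zero x
    apply G.injective
    rw [map_zero]
    simpa using ha.symm
  · rintro ⟨ρ, -, h⟩
    exact ⟨ρ, h.symm⟩

/-- The affine embedding `hom` of the plane as the plane of height one. -/
def homAff : Euc 2 →ᵃ[ℝ] (Fin 3 → ℝ) where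
  toFun := hom
  linear :=
    { toFun := fun x => ![x 0, x 1, 0]
      map_add' := fun x y => by ext i; fin_cases i <;> simp
      map_smul' := fun c x => by ext i; fin_cases i <;> simp }
  map_vadd' := fun p v => by ext i; fin_cases i <;> simp [hom]

/-- Affine functions on the plane are restrictions of linear functionals on `ℝ³`. -/
lemma exists_homogenization (f : Euc 2 →ᵃ[ℝ] ℝ) :
    ∃ L : (Fin 3 → ℝ) →ₗ[ℝ] ℝ, ∀ x, L (hom x) = f x := by
  refine ⟨{ toFun := fun v => f.linear !₂[v 0, v 1] + v 2 * f 0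
            map_add' := fun v w => ?_
            map_smul' := fun c v => ?_ }, fun x => ?_⟩
  · have : (!₂[(v + w) 0, (v + w) 1] : Euc 2) = !₂[v 0, v 1] + !₂[w 0, w 1] := by
      apply euc_ext <;> simp
    rw [this, map_add]; simp only [Pi.add_apply]; ring
  · have : (!₂[(c • v) 0, (c • v) 1] : Euc 2) = c • !₂[v 0, v 1] := by
      apply euc_ext <;> simp
    rw [this, map_smul]; simp only [Pi.smul_apply, smul_eq_mul, RingHom.id_apply]; ring
  · have e : (!₂[hom x 0, hom x 1] : Euc 2) = x := by apply euc_ext <;> simp [hom]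
    have h2 : hom x 2 = 1 := by simp [hom]
    have h3 := f.map_vadd 0 x
    simp only [vadd_eq_add, add_zero] at h3
    simp only [LinearMap.coe_mk, AddHom.coe_mk]
    rw [e, h2, h3, one_mul]

/-- Projective maps between domains do not increase the Hilbert distance. -/
lemma good_dist_le {Ω Ω' : Set (Euc 2)} (hΩ : Dom Ω) (hΩ' : Dom Ω') {τ : Euc 2 → Euc 2}
    {G : (Fin 3 → ℝ) ≃ₗ[ℝ] (Fin 3 → ℝ)} (hm : MapsTo τ Ω Ω') (hG : ∀ x ∈ Ω, Good G τ x)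
    {x y : Euc 2} (hx : x ∈ Ω) (hy : y ∈ Ω) :
    hilbertDist Ω' (τ x) (τ y) ≤ hilbertDist Ω x y := by
  have hG2 : ∀ z ∈ Ω, G (hom z) 2 ≠ 0 ∧ G (hom z) = G (hom z) 2 • hom (τ z) := by
    intro z hz
    obtain ⟨ρ, hρ, e⟩ := hG z hz
    have : G (hom z) 2 = ρ := by rw [e]; simp [hom]
    rw [this]
    exact ⟨hρ, e⟩
  have hGc : Continuous G := LinearMap.continuous_of_finiteDimensional G.toLinearMap
  have hc : Continuous (fun z => G (hom z) 2) :=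
    (continuous_apply 2).comp (hGc.comp continuous_hom)
  -- The denominator of a projective map has constant sign on a convex set where it does not vanish.
  obtain ⟨ε, hε⟩ : ∃ ε : ℝ, ∀ z ∈ Ω, 0 < ε * G (hom z) 2 := by
    rcases lt_or_gt_of_ne (hG2 x hx).1 with h | h
    · refine ⟨-1, fun z hz => ?_⟩
      by_contra hn
      obtain ⟨w, hw, e⟩ := hΩ.convex.isPreconnected.intermediate_value hx hz hc.continuousOn
        (mem_Icc.2 ⟨h.le, by linarith⟩)
      exact (hG2 w hw).1 e
    · refine ⟨1, fun z hz => ?_⟩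
      by_contra hn
      obtain ⟨w, hw, e⟩ := hΩ.convex.isPreconnected.intermediate_value hz hx hc.continuousOn
        (mem_Icc.2 ⟨by linarith, h.le⟩)
      exact (hG2 w hw).1 e
  refine contraction hΩ hΩ' hm (fun z => ε * G (hom z) 2) hε (fun f => ?_) hx hy
  obtain ⟨L, hL⟩ := exists_homogenization f
  refine ⟨(ε • (L ∘ₗ G.toLinearMap)).toAffineMap.comp homAff, fun z hz => ?_⟩
  have e1 : L (G (hom z)) = G (hom z) 2 * f (τ z) := by
    conv_lhs => rw [(hG2 z hz).2, map_smul, hL, smul_eq_mul]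
  change ε * L (G (hom z)) = _
  rw [e1, mul_assoc]

lemma isHilbertIsometry_of_projective {Ω Ω' : Set (Euc 2)} (hΩ : Dom Ω) (hΩ' : Dom Ω')
    {τ : Euc 2 → Euc 2} (h : IsProjectiveBetween Ω Ω' τ) : IsHilbertIsometry Ω Ω' τ := by
  obtain ⟨G, hG, him⟩ := h
  have hm : MapsTo τ Ω Ω' := by
    intro x hx
    have : chart (τ x) ∈ chart '' Ω' := by
      rw [← him, hG x hx]
      exact ⟨_, ⟨x, hx, rfl⟩, rfl⟩
    obtain ⟨y, hy, e⟩ := this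
    rwa [← chart_injective e]
  have hs : SurjOn τ Ω Ω' := by
    intro y hy
    have : chart y ∈ projMap G '' (chart '' Ω) := by rw [him]; exact ⟨y, hy, rfl⟩
    obtain ⟨-, ⟨x, hx, rfl⟩, e⟩ := this
    exact ⟨x, hx, chart_injective ((hG x hx).trans e)⟩
  have hgood : ∀ x ∈ Ω, Good G τ x := fun x hx => (chart_eq_projMap_iff G x (τ x)).1 (hG x hx)
  refine ⟨hm, hs, fun x hx y hy => le_antisymm (good_dist_le hΩ hΩ' hm hgood hx hy) ?_⟩
  have hinv : ∀ w : Euc 2, ∃ z : Euc 2, w ∈ Ω' → z ∈ Ω ∧ τ z = w := by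
    intro w
    by_cases hw : w ∈ Ω'
    · obtain ⟨z, hz, e⟩ := hs hw
      exact ⟨z, fun _ => ⟨hz, e⟩⟩
    · exact ⟨w, fun h => absurd h hw⟩
  choose σ hσ using hinv
  have hinj : InjOn τ Ω := by
    intro a ha b hb e
    have e1 := hG a ha
    rw [e, hG b hb] at e1
    exact (chart_injective (Projectivization.map_injective _ G.injective e1)).symm
  have hst : ∀ z ∈ Ω, σ (τ z) = z := fun z hz =>
    hinj (hσ _ (hm hz)).1 hz (hσ _ (hm hz)).2
  have hgood' : ∀ w ∈ Ω', Good G.symm σ w := by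
    intro w hw
    obtain ⟨ρ, hρ, e⟩ := hgood _ (hσ w hw).1
    rw [(hσ w hw).2] at e
    refine ⟨ρ⁻¹, inv_ne_zero hρ, ?_⟩
    rw [LinearEquiv.symm_apply_eq, map_smul, e, smul_smul, inv_mul_cancel₀ hρ, one_smul]
  have := good_dist_le hΩ' hΩ (fun w hw => (hσ w hw).1) hgood' (hm hx) (hm hy)
  rwa [hst x hx, hst y hy] at this

lemma IsoPair.projective {Ω Ω' : Set (Euc 2)} {τ σ : Euc 2 → Euc 2} (hp : IsoPair Ω Ω' τ σ)
    (h : IsHilbertIsometry Ω Ω' τ) (htri : ¬ IsTriangleInterior Ω) :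
    IsProjectiveBetween Ω Ω' τ := by
  obtain ⟨G, hG⟩ := hp.linear htri
  have hG' : ∀ x ∈ Ω, chart (τ x) = projMap (n := 2) G (chart x) := fun x hx =>
    (chart_eq_projMap_iff G x (τ x)).2 (hG x hx)
  refine ⟨G, hG', ?_⟩
  ext p
  constructor
  · rintro ⟨-, ⟨x, hx, rfl⟩, rfl⟩
    exact ⟨τ x, h.1 hx, hG' x hx⟩
  · rintro ⟨y, hy, rfl⟩
    obtain ⟨x, hx, rfl⟩ := h.2.1 hy
    exact ⟨_, ⟨x, hx, rfl⟩, (hG' x hx).symm⟩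

lemma dom_of_compact {Ω : Set (Euc 2)} (hne : Ω.Nonempty)
    (hK : ∃ K : Set (Euc 2), IsCompact K ∧ Convex ℝ K ∧ Ω = interior K) : Dom Ω := by
  obtain ⟨K, hK, hc, rfl⟩ := hK
  exact ⟨isOpen_interior, hc.interior, hK.isBounded.subset interior_subset, hne⟩

/-- If `Ω, Ω'` are interiors of compact convex sets in `ℝ²` which are
isometric for their Hilbert metrics and `Ω` is not the interior of a triangle, then `Ω'`
is not the interior of a triangle and `Isom(Ω,Ω') = PGL(Ω,Ω')`: a map `τ` is an isometry
from `(Ω,d_Ω)` to `(Ω',d_{Ω'})` iff it is the restriction of a projective transformation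
mapping `Ω` onto `Ω'`. -/
theorem stmt_3 (Ω Ω' : Set (Euc 2)) (hne : Ω.Nonempty) (hne' : Ω'.Nonempty)
    (hK : ∃ K : Set (Euc 2), IsCompact K ∧ Convex ℝ K ∧ Ω = interior K)
    (hK' : ∃ K' : Set (Euc 2), IsCompact K' ∧ Convex ℝ K' ∧ Ω' = interior K')
    (hiso : ∃ τ : Euc 2 → Euc 2, IsHilbertIsometry Ω Ω' τ)
    (htri : ¬ IsTriangleInterior Ω) :
    ¬ IsTriangleInterior Ω' ∧
      ∀ τ : Euc 2 → Euc 2, IsHilbertIsometry Ω Ω' τ ↔ IsProjectiveBetween Ω Ω' τ := by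
  have hΩ := dom_of_compact hne hK
  have hΩ' := dom_of_compact hne' hK'
  refine ⟨?_, fun τ => ⟨fun h => ?_, isHilbertIsometry_of_projective hΩ hΩ'⟩⟩
  · obtain ⟨τ, h⟩ := hiso
    obtain ⟨σ, hp⟩ := exists_isoPair hΩ hΩ' h
    exact hp.not_triangle htri
  · obtain ⟨σ, hp⟩ := exists_isoPair hΩ hΩ' h
    exact hp.projective h htri
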